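/- Let b ∈ L¹_loc(ℝⁿ) be non-negative. Then for every measurable f and every x ∈ ℝⁿ one has the pointwise bound |[M_α, b]f(x)| ≤ M_{b,α} f(x). Consequently, if the Fractional assumptions hold and 0 ≤ b ∈ BMO(ℝⁿ), the commutator [M_α, b] is bounded from L^φ(ℝⁿ) to L^ψ(ℝⁿ). -/

import Mathlib

open MeasureTheory NNReal ENNReal Filter Set

noncomputable section

/-- `ℝⁿ` with the Euclidean structure. -/
abbrev RSp (n : ℕ) := EuclideanSpace ℝ (Fin n)

variable {n : ℕ}

/-- A cube in `ℝⁿ` with sides parallel to the coordinate axes,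
with center `c` and side length `2r`. -/
structure Cube (n : ℕ) where
  c : RSp n
  r : ℝ
  r_pos : 0 < r

/-- The underlying set of a cube. -/
def Cube.set (Q : Cube n) : Set (RSp n) := {y | ∀ i, |y i - Q.c i| ≤ Q.r}

/-- A weak Φ-function on `Ω` (the class `Φ_w(Ω)`). -/
structure IsWeakPhi (Ω : Set (RSp n)) (φ : RSp n → ℝ≥0 → ℝ≥0∞) : Prop where
  meas : ∀ f : RSp n → ℝ≥0, Measurable f →
    AEMeasurable (fun x => φ x (f x)) (volume.restrict Ω)
  mono : ∀ x ∈ Ω, Monotone (φ x)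
  zero : ∀ x ∈ Ω, φ x 0 = 0
  lim_zero : ∀ x ∈ Ω, Tendsto (fun t : ℝ≥0 => φ x t) (nhdsWithin 0 (Set.Ioi 0)) (nhds 0)
  lim_top : ∀ x ∈ Ω, Tendsto (fun t : ℝ≥0 => φ x t) atTop (nhds ∞)
  almost_inc : ∃ L : ℝ≥0, 1 ≤ L ∧ ∀ x ∈ Ω, ∀ s t : ℝ≥0, 0 < s → s < t →
    φ x s / (s : ℝ≥0∞) ≤ (L : ℝ≥0∞) * (φ x t / (t : ℝ≥0∞))

/-- A convex Φ-function on `Ω` (the class `Φ_c(Ω)`): a weak Φ-function which is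
additionally convex and left-continuous in `t` for a.e. `x ∈ Ω`. -/
structure IsConvexPhi (Ω : Set (RSp n)) (φ : RSp n → ℝ≥0 → ℝ≥0∞)
    extends IsWeakPhi Ω φ : Prop where
  convex : ∀ᵐ x ∂(volume.restrict Ω), ∀ s t a b : ℝ≥0, a + b = 1 →
    φ x (a * s + b * t) ≤ (a : ℝ≥0∞) * φ x s + (b : ℝ≥0∞) * φ x t
  left_cont : ∀ᵐ x ∂(volume.restrict Ω), ∀ t : ℝ≥0,
    Tendsto (φ x) (nhdsWithin t (Set.Iio t)) (nhds (φ x t))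

/-- A strong Φ-function on `Ω` (the class `Φ_s(Ω)`): a weak Φ-function which is
additionally convex and continuous into `[0,∞]` for a.e. `x ∈ Ω`. -/
structure IsStrongPhi (Ω : Set (RSp n)) (φ : RSp n → ℝ≥0 → ℝ≥0∞)
    extends IsWeakPhi Ω φ : Prop where
  convex : ∀ᵐ x ∂(volume.restrict Ω), ∀ s t a b : ℝ≥0, a + b = 1 →
    φ x (a * s + b * t) ≤ (a : ℝ≥0∞) * φ x s + (b : ℝ≥0∞) * φ x t
  cont : ∀ᵐ x ∂(volume.restrict Ω), Continuous (φ x)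

/-- The generalized (left-)inverse `φ⁻¹(x,t) = inf {τ ≥ 0 : φ(x,τ) ≥ t}`. -/
def phiInv (φ : RSp n → ℝ≥0 → ℝ≥0∞) (x : RSp n) (t : ℝ≥0∞) : ℝ≥0∞ :=
  sInf ((fun s : ℝ≥0 => (s : ℝ≥0∞)) '' {s : ℝ≥0 | t ≤ φ x s})

/-- The condition `(aInc)_p` on `Ω`: `t ↦ φ(x,t)/t^p` is almost increasing, uniformly in `x`. -/
def AInc (p : ℝ) (Ω : Set (RSp n)) (φ : RSp n → ℝ≥0 → ℝ≥0∞) : Prop :=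
  ∃ L : ℝ≥0, 1 ≤ L ∧ ∀ x ∈ Ω, ∀ s t : ℝ≥0, 0 < s → s < t →
    φ x s / (s : ℝ≥0∞) ^ p ≤ (L : ℝ≥0∞) * (φ x t / (t : ℝ≥0∞) ^ p)

/-- The condition `(aDec)_q` on `Ω`: `t ↦ φ(x,t)/t^q` is almost decreasing, uniformly in `x`. -/
def ADec (q : ℝ) (Ω : Set (RSp n)) (φ : RSp n → ℝ≥0 → ℝ≥0∞) : Prop :=
  ∃ L : ℝ≥0, 1 ≤ L ∧ ∀ x ∈ Ω, ∀ s t : ℝ≥0, 0 < s → s < t →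
    φ x t / (t : ℝ≥0∞) ^ q ≤ (L : ℝ≥0∞) * (φ x s / (s : ℝ≥0∞) ^ q)

/-- The condition `(A0)` on `Ω`: `β ≤ φ⁻¹(x,1) ≤ 1/β` for a.e. `x ∈ Ω`. -/
def A0 (Ω : Set (RSp n)) (φ : RSp n → ℝ≥0 → ℝ≥0∞) : Prop :=
  ∃ β : ℝ≥0, 0 < β ∧ β ≤ 1 ∧ ∀ᵐ x ∂(volume.restrict Ω),
    (β : ℝ≥0∞) ≤ phiInv φ x 1 ∧ phiInv φ x 1 ≤ (β : ℝ≥0∞)⁻¹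

/-- The condition `(A1)` (on all of `ℝⁿ`). -/
def A1 (φ : RSp n → ℝ≥0 → ℝ≥0∞) : Prop :=
  ∃ β : ℝ≥0, 0 < β ∧ β < 1 ∧ ∀ Q : Cube n, volume Q.set ≤ 1 →
    ∀ᵐ x ∂(volume.restrict Q.set), ∀ᵐ y ∂(volume.restrict Q.set),
      ∀ t : ℝ≥0∞, 1 ≤ t → t ≤ (volume Q.set)⁻¹ →
        (β : ℝ≥0∞) * phiInv φ x t ≤ phiInv φ y t

/-- The condition `(A2)` (on all of `ℝⁿ`). -/
def A2 (φ : RSp n → ℝ≥0 → ℝ≥0∞) : Prop :=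
  ∃ φi : ℝ≥0 → ℝ≥0∞, IsWeakPhi Set.univ (fun _ : RSp n => φi) ∧
  ∃ h : RSp n → ℝ≥0∞, (∫⁻ x, h x) < ∞ ∧ (∃ M : ℝ≥0, ∀ᵐ x ∂(volume : Measure (RSp n)), h x ≤ M) ∧
  ∃ β : ℝ≥0, 0 < β ∧ β ≤ 1 ∧ ∃ s : ℝ≥0, 0 < s ∧
    ∀ᵐ x ∂(volume : Measure (RSp n)), ∀ t : ℝ≥0,
      (φi t ≤ (s : ℝ≥0∞) → φ x (β * t) ≤ φi t + h x) ∧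
      (φ x t ≤ (s : ℝ≥0∞) → φi (β * t) ≤ φ x t + h x)

/-- Membership in the generalized Orlicz space `L^φ(Ω)`. -/
def MemOrlicz (φ : RSp n → ℝ≥0 → ℝ≥0∞) (Ω : Set (RSp n)) (f : RSp n → ℝ) : Prop :=
  AEMeasurable f (volume.restrict Ω) ∧
  ∃ lam : ℝ≥0, 0 < lam ∧ (∫⁻ x in Ω, φ x (lam * ‖f x‖₊) ∂volume) < ∞

/-- The Luxemburg (quasi)norm of `L^φ(Ω)`. -/
def orliczNorm (φ : RSp n → ℝ≥0 → ℝ≥0∞) (Ω : Set (RSp n)) (f : RSp n → ℝ) : ℝ≥0∞ :=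
  sInf ((fun lam : ℝ≥0 => (lam : ℝ≥0∞)) ''
    {lam : ℝ≥0 | 0 < lam ∧ (∫⁻ x in Ω, φ x (‖f x‖₊ / lam) ∂volume) ≤ 1})

/-- The canonical extension of `φ(x,·)` to `[0,∞]`. -/
def phiE (φ : RSp n → ℝ≥0 → ℝ≥0∞) (x : RSp n) (t : ℝ≥0∞) : ℝ≥0∞ :=
  ⨆ (s : ℝ≥0) (_ : (s : ℝ≥0∞) ≤ t), φ x s

/-- The Luxemburg (quasi)norm for `[0,∞]`-valued functions. -/
def orliczNormE (φ : RSp n → ℝ≥0 → ℝ≥0∞) (Ω : Set (RSp n)) (g : RSp n → ℝ≥0∞) : ℝ≥0∞ :=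
  sInf ((fun lam : ℝ≥0 => (lam : ℝ≥0∞)) ''
    {lam : ℝ≥0 | 0 < lam ∧ (∫⁻ x in Ω, phiE φ x (g x / (lam : ℝ≥0∞)) ∂volume) ≤ 1})

/-- The average `b_Q` of `b` over the cube `Q`. -/
def cubeAvg (Q : Cube n) (b : RSp n → ℝ) : ℝ := ⨍ x in Q.set, b x

/-- The BMO seminorm `‖b‖_*`. -/
def bmoNorm (b : RSp n → ℝ) : ℝ≥0∞ :=
  ⨆ Q : Cube n, (volume Q.set)⁻¹ * ∫⁻ x in Q.set, ‖b x - cubeAvg Q b‖₊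

/-- `b ∈ BMO(ℝⁿ)`. -/
def IsBMO (b : RSp n → ℝ) : Prop := LocallyIntegrable b volume ∧ bmoNorm b < ∞

/-- The non-centred Hardy–Littlewood maximal function (over axes-parallel cubes). -/
def maximal (f : RSp n → ℝ) (x : RSp n) : ℝ≥0∞ :=
  ⨆ (Q : Cube n) (_ : x ∈ Q.set), (volume Q.set)⁻¹ * ∫⁻ y in Q.set, (‖f y‖₊ : ℝ≥0∞) ∂volume

/-- The fractional maximal function `M_α`. -/
def fracMaximal (α : ℝ) (f : RSp n → ℝ) (x : RSp n) : ℝ≥0∞ :=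
  ⨆ (Q : Cube n) (_ : x ∈ Q.set),
    volume Q.set ^ (α / (n : ℝ) - 1) * ∫⁻ y in Q.set, (‖f y‖₊ : ℝ≥0∞) ∂volume

/-- The maximal function restricted to subcubes of `Q₀`. -/
def restMaximal (Q₀ : Cube n) (f : RSp n → ℝ) (x : RSp n) : ℝ≥0∞ :=
  ⨆ (Q : Cube n) (_ : x ∈ Q.set) (_ : Q.set ⊆ Q₀.set),
    (volume Q.set)⁻¹ * ∫⁻ y in Q.set, (‖f y‖₊ : ℝ≥0∞) ∂volume

/-- The fractional maximal function restricted to subcubes of `Q₀`. -/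
def restFracMaximal (α : ℝ) (Q₀ : Cube n) (f : RSp n → ℝ) (x : RSp n) : ℝ≥0∞ :=
  ⨆ (Q : Cube n) (_ : x ∈ Q.set) (_ : Q.set ⊆ Q₀.set),
    volume Q.set ^ (α / (n : ℝ) - 1) * ∫⁻ y in Q.set, (‖f y‖₊ : ℝ≥0∞) ∂volume

/-- The sharp maximal function `M♯`. -/
def sharpMaximal (f : RSp n → ℝ) (x : RSp n) : ℝ≥0∞ :=
  ⨆ (Q : Cube n) (_ : x ∈ Q.set),
    (volume Q.set)⁻¹ * ∫⁻ y in Q.set, (‖f y - ⨍ z in Q.set, f z‖₊ : ℝ≥0∞) ∂volume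

/-- The maximal commutator `M_b`. -/
def maximalComm (b f : RSp n → ℝ) (x : RSp n) : ℝ≥0∞ :=
  ⨆ (Q : Cube n) (_ : x ∈ Q.set),
    (volume Q.set)⁻¹ * ∫⁻ y in Q.set, (‖b x - b y‖₊ : ℝ≥0∞) * (‖f y‖₊ : ℝ≥0∞) ∂volume

/-- The fractional maximal commutator `M_{b,α}`. -/
def fracMaximalComm (α : ℝ) (b f : RSp n → ℝ) (x : RSp n) : ℝ≥0∞ :=
  ⨆ (Q : Cube n) (_ : x ∈ Q.set),
    volume Q.set ^ (α / (n : ℝ) - 1) *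
      ∫⁻ y in Q.set, (‖b x - b y‖₊ : ℝ≥0∞) * (‖f y‖₊ : ℝ≥0∞) ∂volume

/-- The commutator `[M,b]f = M(bf) − b·Mf` of the maximal operator. -/
def maximalCommutator (b f : RSp n → ℝ) (x : RSp n) : ℝ :=
  (maximal (fun y => b y * f y) x).toReal - b x * (maximal f x).toReal

/-- The commutator `[M_α,b]f = M_α(bf) − b·M_α f` of the fractional maximal operator. -/
def fracMaximalCommutator (α : ℝ) (b f : RSp n → ℝ) (x : RSp n) : ℝ :=
  (fracMaximal α (fun y => b y * f y) x).toReal - b x * (fracMaximal α f x).toReal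

/-- The Riesz potential `I_α f`. -/
def riesz (α : ℝ) (f : RSp n → ℝ) (x : RSp n) : ℝ :=
  ∫ y, f y / dist x y ^ ((n : ℝ) - α)

/-- The commutator `[I_α, b]f = I_α(bf) − b·I_α f` of the Riesz potential. -/
def rieszCommutator (α : ℝ) (b f : RSp n → ℝ) (x : RSp n) : ℝ :=
  riesz α (fun y => b y * f y) x - b x * riesz α f x

/-- The operator `I_{b,α} f(x) = ∫ |b(x)−b(y)|·|x−y|^{α−n} f(y) dy`. -/
def rieszAbs (α : ℝ) (b f : RSp n → ℝ) (x : RSp n) : ℝ :=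
  ∫ y, |b x - b y| / dist x y ^ ((n : ℝ) - α) * f y

/-- Equivalence `φ ≃ ψ` of Φ-functions. -/
def PhiEquiv (φ ψ : RSp n → ℝ≥0 → ℝ≥0∞) : Prop :=
  ∃ L : ℝ≥0, 1 ≤ L ∧ ∀ x : RSp n, ∀ t : ℝ≥0, ψ x (t / L) ≤ φ x t ∧ φ x t ≤ ψ x (L * t)

/-- Weak equivalence `φ ∼ ψ` of Φ-functions. -/
def PhiWeakEquiv (φ ψ : RSp n → ℝ≥0 → ℝ≥0∞) : Prop :=
  ∃ L : ℝ≥0, 1 ≤ L ∧ ∃ h : RSp n → ℝ≥0∞, (∫⁻ x, h x) < ∞ ∧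
    ∀ᵐ x ∂(volume : Measure (RSp n)), ∀ t : ℝ≥0,
      ψ x t ≤ φ x (L * t) + h x ∧ φ x t ≤ ψ x (L * t) + h x

/-- The relation `φ⁻¹(x,t) ≈ t^{α/n}·ψ⁻¹(x,t)` with constants independent of `x` and `t > 0`. -/
def FracInvRel (α : ℝ) (φ ψ : RSp n → ℝ≥0 → ℝ≥0∞) : Prop :=
  ∃ c₁ c₂ : ℝ≥0, 0 < c₁ ∧ ∀ x : RSp n, ∀ t : ℝ≥0, 0 < t →
    (c₁ : ℝ≥0∞) * ((t : ℝ≥0∞) ^ (α / (n : ℝ)) * phiInv ψ x t) ≤ phiInv φ x t ∧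
    phiInv φ x t ≤ (c₂ : ℝ≥0∞) * ((t : ℝ≥0∞) ^ (α / (n : ℝ)) * phiInv ψ x t)

/-- The characteristic function of a cube, as a real-valued function. -/
def cubeIndicator (Q : Cube n) : RSp n → ℝ := Q.set.indicator 1

end


/-! ### Weighted Hardy–Littlewood maximal operators -/

theorem vitali_closedBall {E ι : Type*} [PseudoMetricSpace E] [TopologicalSpace.SeparableSpace E]
    (t : Set ι) (c : ι → E) (r : ι → ℝ) (R : ℝ) (hr0 : ∀ i ∈ t, 0 < r i) (hr : ∀ i ∈ t, r i ≤ R) :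
    ∃ u ⊆ t, u.Countable ∧ (u.PairwiseDisjoint fun a => Metric.closedBall (c a) (r a)) ∧
      ∀ a ∈ t, ∃ b ∈ u, Metric.closedBall (c a) (r a) ⊆ Metric.closedBall (c b) (5 * r b) := by
  obtain ⟨u, hut, hd, hc⟩ := Vitali.exists_disjoint_subfamily_covering_enlargement_closedBall
    t c r R hr 5 (by norm_num)
  refine ⟨u, hut, ?_, hd, hc⟩
  refine hd.countable_of_nonempty_interior fun i hi => ?_
  refine ⟨c i, ?_⟩
  exact Metric.ball_subset_interior_closedBall (Metric.mem_ball_self (hr0 i (hut hi)))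

theorem weak_type_bdd {E ι : Type*} [PseudoMetricSpace E] [TopologicalSpace.SeparableSpace E]
    [MeasurableSpace E] [BorelSpace E] (μ : Measure E) (D : ℝ≥0∞)
    (hD : ∀ x r, 0 < r → μ (Metric.closedBall x (5 * r)) ≤ D * μ (Metric.closedBall x r))
    (c : ι → E) (r : ι → ℝ) (F : E → ℝ≥0∞) (l : ℝ≥0∞) (R : ℝ)
    (t : Set ι) (hr : ∀ i ∈ t, 0 < r i) (hR : ∀ i ∈ t, r i ≤ R)
    (ht : ∀ i ∈ t, l * μ (Metric.closedBall (c i) (r i)) ≤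
      ∫⁻ y in Metric.closedBall (c i) (r i), F y ∂μ) :
    l * μ (⋃ i ∈ t, Metric.closedBall (c i) (r i)) ≤ D * ∫⁻ y, F y ∂μ := by
  obtain ⟨u, hut, huc, hd, hc⟩ := vitali_closedBall t c r R hr hR
  have h1 : (⋃ i ∈ t, Metric.closedBall (c i) (r i)) ⊆
      ⋃ i ∈ u, Metric.closedBall (c i) (5 * r i) := by
    intro x hx
    simp only [mem_iUnion] at hx ⊢
    obtain ⟨i, hi, hx⟩ := hx
    obtain ⟨j, hj, hs⟩ := hc i hi
    exact ⟨j, hj, hs hx⟩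
  calc l * μ (⋃ i ∈ t, Metric.closedBall (c i) (r i))
      ≤ l * ∑' i : u, μ (Metric.closedBall (c i) (5 * r i)) := by
        gcongr
        exact (measure_mono h1).trans (measure_biUnion_le μ huc _)
    _ ≤ l * ∑' i : u, D * μ (Metric.closedBall (c i) (r i)) := by
        gcongr with i
        exact hD _ _ (hr i (hut i.2))
    _ = D * ∑' i : u, l * μ (Metric.closedBall (c i) (r i)) := by
        rw [ENNReal.tsum_mul_left, ENNReal.tsum_mul_left]; ring
    _ ≤ D * ∑' i : u, ∫⁻ y in Metric.closedBall (c i) (r i), F y ∂μ := by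
        gcongr with i
        exact ht i (hut i.2)
    _ = D * ∫⁻ y in ⋃ i ∈ u, Metric.closedBall (c i) (r i), F y ∂μ := by
        rw [lintegral_biUnion huc (fun i _ => Metric.isClosed_closedBall.measurableSet) hd]
    _ ≤ D * ∫⁻ y, F y ∂μ := by
        exact mul_le_mul_right (setLIntegral_le_lintegral _ _) _

theorem weak_type {E ι : Type*} [PseudoMetricSpace E] [TopologicalSpace.SeparableSpace E]
    [MeasurableSpace E] [BorelSpace E] (μ : Measure E) (D : ℝ≥0∞)
    (hD : ∀ x r, 0 < r → μ (Metric.closedBall x (5 * r)) ≤ D * μ (Metric.closedBall x r))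
    (c : ι → E) (r : ι → ℝ) (F : E → ℝ≥0∞) (l : ℝ≥0∞)
    (t : Set ι) (hr : ∀ i ∈ t, 0 < r i)
    (ht : ∀ i ∈ t, l * μ (Metric.closedBall (c i) (r i)) ≤
      ∫⁻ y in Metric.closedBall (c i) (r i), F y ∂μ) :
    l * μ (⋃ i ∈ t, Metric.closedBall (c i) (r i)) ≤ D * ∫⁻ y, F y ∂μ := by
  have h1 : (⋃ i ∈ t, Metric.closedBall (c i) (r i)) =
      ⋃ N : ℕ, ⋃ i ∈ {i ∈ t | r i ≤ N}, Metric.closedBall (c i) (r i) := by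
    ext x
    simp only [mem_iUnion, mem_ofPred_eq]
    constructor
    · rintro ⟨i, hi, hx⟩
      obtain ⟨N, hN⟩ := exists_nat_ge (r i)
      exact ⟨N, i, ⟨hi, hN⟩, hx⟩
    · rintro ⟨N, i, hi, hx⟩
      exact ⟨i, hi.1, hx⟩
  have hm : Monotone fun N : ℕ => ⋃ i ∈ {i ∈ t | r i ≤ N}, Metric.closedBall (c i) (r i) := by
    intro N M hNM
    refine biUnion_subset_biUnion_left fun i hi => ⟨hi.1, hi.2.trans (by exact_mod_cast hNM)⟩
  rw [h1, hm.measure_iUnion, ENNReal.mul_iSup]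
  refine iSup_le fun N => ?_
  exact weak_type_bdd μ D hD c r F l N _ (fun i hi => hr i hi.1) (fun i hi => hi.2)
    (fun i hi => ht i hi.1)

theorem lintegral_rpow_Ioo {κ m : ℝ} (hκ : 0 < κ) (hm : 0 ≤ m) :
    ∫⁻ l in Ioo (0 : ℝ) m, ENNReal.ofReal (l ^ (κ - 1)) = ENNReal.ofReal (m ^ κ / κ) := by
  have hi : IntervalIntegrable (fun l : ℝ => l ^ (κ - 1)) volume 0 m :=
    intervalIntegral.intervalIntegrable_rpow' (by linarith)
  have h1 : ∫ l in (0 : ℝ)..m, l ^ (κ - 1) = m ^ κ / κ := by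
    rw [integral_rpow (Or.inl (by linarith))]
    simp [Real.zero_rpow hκ.ne']
  rw [← h1, intervalIntegral.integral_of_le hm, ofReal_integral_eq_lintegral_ofReal]
  · exact setLIntegral_congr Ioo_ae_eq_Ioc
  · exact (intervalIntegrable_iff_integrableOn_Ioc_of_le hm).1 hi
  · refine (ae_restrict_mem measurableSet_Ioc).mono fun x hx => ?_
    exact Real.rpow_nonneg hx.1.le _

theorem layer_eq {κ : ℝ} (hκ : 0 < κ) (m : ℝ≥0) :
    ∫⁻ l in Ioi (0 : ℝ), {l : ℝ | ENNReal.ofReal l < m}.indicator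
      (fun l => ENNReal.ofReal (l ^ (κ - 1))) l = ENNReal.ofReal κ⁻¹ * (m : ℝ≥0∞) ^ κ := by
  have hs : {l : ℝ | ENNReal.ofReal l < m} ∩ Ioi 0 = Ioo 0 (m : ℝ) := by
    ext l
    simp only [mem_inter_iff, mem_ofPred_eq, mem_Ioi, mem_Ioo]
    constructor
    · rintro ⟨h1, h2⟩
      refine ⟨h2, ?_⟩
      rw [← ENNReal.ofReal_coe_nnreal] at h1
      exact (ENNReal.ofReal_lt_ofReal_iff_of_nonneg h2.le).1 h1
    · rintro ⟨h1, h2⟩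
      refine ⟨?_, h1⟩
      rw [← ENNReal.ofReal_coe_nnreal]
      exact (ENNReal.ofReal_lt_ofReal_iff_of_nonneg h1.le).2 h2
  rw [lintegral_indicator (measurableSet_lt ENNReal.measurable_ofReal measurable_const),
    Measure.restrict_restrict (measurableSet_lt ENNReal.measurable_ofReal measurable_const), hs,
    lintegral_rpow_Ioo hκ m.coe_nonneg, div_eq_inv_mul, ENNReal.ofReal_mul (by positivity),
    ← ENNReal.ofReal_coe_nnreal, ENNReal.ofReal_rpow_of_nonneg m.coe_nonneg hκ.le]

theorem layer_ge {κ : ℝ} (hκ : 0 < κ) (m : ℝ≥0∞) :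
    ENNReal.ofReal κ⁻¹ * m ^ κ ≤ ∫⁻ l in Ioi (0 : ℝ), {l : ℝ | ENNReal.ofReal l < m}.indicator
      (fun l => ENNReal.ofReal (l ^ (κ - 1))) l := by
  rcases eq_or_ne m ∞ with rfl | hm
  · rw [ENNReal.top_rpow_of_pos hκ, ENNReal.mul_top (by simp [hκ])]
    refine ENNReal.le_of_forall_nnreal_lt fun a _ => ?_
    set m : ℝ≥0 := (Real.toNNReal κ * a) ^ (κ⁻¹) with hm
    have h := layer_eq hκ m
    calc (a : ℝ≥0∞) = ENNReal.ofReal κ⁻¹ * (m : ℝ≥0∞) ^ κ := by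
          rw [← ENNReal.coe_rpow_of_nonneg _ hκ.le, hm, ← NNReal.rpow_mul, inv_mul_cancel₀ hκ.ne',
            NNReal.rpow_one, ENNReal.ofReal, ← ENNReal.coe_mul, Real.toNNReal_inv, ← mul_assoc,
            inv_mul_cancel₀ (by simpa using hκ), one_mul]
      _ = _ := h.symm
      _ ≤ _ := by
          refine lintegral_mono fun l => ?_
          refine indicator_le_indicator_of_subset ?_ (fun _ => zero_le) l
          intro l hl
          simp only [mem_ofPred_eq] at hl ⊢
          exact lt_of_lt_of_le hl le_top
  · lift m to ℝ≥0 using hm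
    exact (layer_eq hκ m).ge

/-- The maximal function of `F` with respect to the measure `μ` over a family of balls. -/
noncomputable def ballMax {E ι : Type*} [PseudoMetricSpace E] [MeasurableSpace E] (μ : Measure E)
    (c : ι → E) (r : ι → ℝ) (F : E → ℝ≥0∞) (x : E) : ℝ≥0∞ :=
  ⨆ i, (Metric.closedBall (c i) (r i)).indicator
    (fun _ => (∫⁻ y in Metric.closedBall (c i) (r i), F y ∂μ) / μ (Metric.closedBall (c i) (r i))) x

theorem ballMax_meas {E ι : Type*} [PseudoMetricSpace E] [MeasurableSpace E] [BorelSpace E]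
    [Countable ι] (μ : Measure E)
    (c : ι → E) (r : ι → ℝ) (F : E → ℝ≥0∞) : Measurable (ballMax μ c r F) :=
  Measurable.iSup fun _ => measurable_const.indicator Metric.isClosed_closedBall.measurableSet

theorem ballMax_level {E ι : Type*} [PseudoMetricSpace E] [TopologicalSpace.SeparableSpace E]
    [MeasurableSpace E] [BorelSpace E] (μ : Measure E) (D : ℝ≥0∞)
    (hD : ∀ x r, 0 < r → μ (Metric.closedBall x (5 * r)) ≤ D * μ (Metric.closedBall x r))
    (hfin : ∀ x r, μ (Metric.closedBall x r) ≠ ∞)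
    (c : ι → E) (r : ι → ℝ) (hr : ∀ i, 0 < r i) (F : E → ℝ≥0∞) (hF : Measurable F)
    (l : ℝ≥0∞) (hl : l ≠ ∞) :
    l * μ {x | 2 * l < ballMax μ c r F x} ≤
      D * ∫⁻ y, {y | l < F y}.indicator F y ∂μ := by
  have hms : MeasurableSet {y | l < F y} := measurableSet_lt measurable_const hF
  set t : Set ι := {i | l * μ (Metric.closedBall (c i) (r i)) ≤
      ∫⁻ y in Metric.closedBall (c i) (r i), {y | l < F y}.indicator F y ∂μ} with ht
  refine le_trans ?_ (weak_type μ D hD c r _ l t (fun i _ => hr i) (fun i hi => hi))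
  gcongr
  intro x hx
  simp only [mem_ofPred_eq, ballMax, lt_iSup_iff] at hx
  obtain ⟨i, hi⟩ := hx
  by_cases hxi : x ∈ Metric.closedBall (c i) (r i)
  swap
  · simp [hxi] at hi
  simp only [mem_iUnion]
  refine ⟨i, ?_, hxi⟩
  rw [indicator_of_mem hxi] at hi
  have h2 : 2 * l * μ (Metric.closedBall (c i) (r i)) ≤
      ∫⁻ y in Metric.closedBall (c i) (r i), F y ∂μ := by
    refine (mul_le_mul_left hi.le _).trans ?_
    rw [mul_comm]; exact ENNReal.mul_div_le
  have h3 : ∫⁻ y in Metric.closedBall (c i) (r i), F y ∂μ ≤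
      (∫⁻ y in Metric.closedBall (c i) (r i), {y | l < F y}.indicator F y ∂μ) +
        l * μ (Metric.closedBall (c i) (r i)) := by
    rw [← setLIntegral_const, ← lintegral_add_right _ measurable_const]
    refine lintegral_mono fun y => ?_
    by_cases hy : l < F y
    · rw [indicator_of_mem (by exact hy)]; exact le_self_add
    · simp only [not_lt] at hy
      exact hy.trans le_add_self
  have h4 := h2.trans h3
  have hne : l * μ (Metric.closedBall (c i) (r i)) ≠ ∞ := ENNReal.mul_ne_top hl (hfin _ _)
  rw [mul_assoc, two_mul] at h4
  exact (ENNReal.add_le_add_iff_right hne).1 h4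

theorem ballMax_strong {E ι : Type*} [PseudoMetricSpace E] [TopologicalSpace.SeparableSpace E]
    [MeasurableSpace E] [BorelSpace E] [Countable ι] (μ : Measure E) [SFinite μ] (D : ℝ≥0∞)
    (hD : ∀ x r, 0 < r → μ (Metric.closedBall x (5 * r)) ≤ D * μ (Metric.closedBall x r))
    (hfin : ∀ x r, μ (Metric.closedBall x r) ≠ ∞)
    (c : ι → E) (r : ι → ℝ) (hr : ∀ i, 0 < r i) (P : ℝ) (hP : 1 < P) (F : E → ℝ≥0∞)
    (hF : Measurable F) :
    ∫⁻ x, (ballMax μ c r F x) ^ P ∂μ ≤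
      (ENNReal.ofReal P * 2 ^ P * D * ENNReal.ofReal (P - 1)⁻¹) * ∫⁻ x, (F x) ^ P ∂μ := by
  have hP0 : 0 < P := by linarith
  have hP1 : 0 < P - 1 := by linarith
  set N : E → ℝ≥0∞ := fun x => ballMax μ c r F x / 2 with hN
  have hNm : Measurable N := (ballMax_meas μ c r F).div_const _
  have hNeq : ∀ x, ballMax μ c r F x ^ P = 2 ^ P * N x ^ P := by
    intro x
    rw [← ENNReal.mul_rpow_of_nonneg _ _ hP0.le, hN]
    simp only
    rw [ENNReal.mul_div_cancel (by norm_num) (by norm_num)]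
  have key : ∫⁻ x, N x ^ P ∂μ ≤
      ENNReal.ofReal P * (D * (ENNReal.ofReal (P - 1)⁻¹ * ∫⁻ x, (F x) ^ P ∂μ)) := by
    have hA : ∀ x, N x ^ P ≤ ENNReal.ofReal P * ∫⁻ l in Ioi (0 : ℝ),
        {l : ℝ | ENNReal.ofReal l < N x}.indicator (fun l => ENNReal.ofReal (l ^ (P - 1))) l := by
      intro x
      refine le_trans ?_ (mul_le_mul_right (layer_ge hP0 (N x)) _)
      rw [← mul_assoc, ← ENNReal.ofReal_mul hP0.le, mul_inv_cancel₀ hP0.ne']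
      simp
    have hset : MeasurableSet {z : E × ℝ | ENNReal.ofReal z.2 < N z.1} :=
      measurableSet_lt (ENNReal.measurable_ofReal.comp measurable_snd) (hNm.comp measurable_fst)
    have hset2 : MeasurableSet {z : E × ℝ | ENNReal.ofReal z.2 < F z.1} :=
      measurableSet_lt (ENNReal.measurable_ofReal.comp measurable_snd) (hF.comp measurable_fst)
    have hmeas1 : Measurable (fun z : E × ℝ => {l : ℝ | ENNReal.ofReal l < N z.1}.indicator
        (fun l => ENNReal.ofReal (l ^ (P - 1))) z.2) := by
      have : (fun z : E × ℝ => {l : ℝ | ENNReal.ofReal l < N z.1}.indicator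
        (fun l => ENNReal.ofReal (l ^ (P - 1))) z.2) =
        {z : E × ℝ | ENNReal.ofReal z.2 < N z.1}.indicator
          (fun z => ENNReal.ofReal (z.2 ^ (P - 1))) := by
        ext z; simp [indicator]
      rw [this]
      exact Measurable.indicator (by fun_prop) hset
    have hmeas2 : Measurable (fun z : E × ℝ => F z.1 * {l : ℝ | ENNReal.ofReal l < F z.1}.indicator
        (fun l => ENNReal.ofReal (l ^ (P - 1 - 1))) z.2) := by
      have : (fun z : E × ℝ => {l : ℝ | ENNReal.ofReal l < F z.1}.indicator
        (fun l => ENNReal.ofReal (l ^ (P - 1 - 1))) z.2) =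
        {z : E × ℝ | ENNReal.ofReal z.2 < F z.1}.indicator
          (fun z => ENNReal.ofReal (z.2 ^ (P - 1 - 1))) := by
        ext z; simp [indicator]
      refine (hF.comp measurable_fst).mul ?_
      rw [this]
      exact Measurable.indicator (by fun_prop) hset2
    calc ∫⁻ x, N x ^ P ∂μ
        ≤ ∫⁻ x, ENNReal.ofReal P * (∫⁻ l in Ioi (0 : ℝ), {l : ℝ | ENNReal.ofReal l < N x}.indicator
            (fun l => ENNReal.ofReal (l ^ (P - 1))) l) ∂μ := lintegral_mono hA
      _ = ENNReal.ofReal P * ∫⁻ x, (∫⁻ l in Ioi (0 : ℝ), {l : ℝ | ENNReal.ofReal l < N x}.indicator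
            (fun l => ENNReal.ofReal (l ^ (P - 1))) l) ∂μ :=
          lintegral_const_mul' _ _ ENNReal.ofReal_ne_top
      _ = ENNReal.ofReal P * ∫⁻ l in Ioi (0 : ℝ), ∫⁻ x, {l : ℝ | ENNReal.ofReal l < N x}.indicator
            (fun l => ENNReal.ofReal (l ^ (P - 1))) l ∂μ := by
          rw [lintegral_lintegral_swap]
          exact hmeas1.aemeasurable
      _ ≤ ENNReal.ofReal P * ∫⁻ l in Ioi (0 : ℝ), D * ∫⁻ x, F x *
            {l : ℝ | ENNReal.ofReal l < F x}.indicator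
            (fun l => ENNReal.ofReal (l ^ (P - 1 - 1))) l ∂μ := by
          gcongr ENNReal.ofReal P * ?_
          refine setLIntegral_mono' measurableSet_Ioi fun l hl => ?_
          have hl : 0 < l := hl
          have e1 : ∫⁻ x, {l : ℝ | ENNReal.ofReal l < N x}.indicator
            (fun l => ENNReal.ofReal (l ^ (P - 1))) l ∂μ =
              ENNReal.ofReal (l ^ (P - 1)) * μ {x | ENNReal.ofReal l < N x} := by
            rw [← lintegral_indicator_const (measurableSet_lt measurable_const hNm)]
            rfl
          have e2 : ∫⁻ x, F x * {l : ℝ | ENNReal.ofReal l < F x}.indicator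
            (fun l => ENNReal.ofReal (l ^ (P - 1 - 1))) l ∂μ = ENNReal.ofReal (l ^ (P - 1 - 1)) *
              ∫⁻ y, {y | ENNReal.ofReal l < F y}.indicator F y ∂μ := by
            rw [← lintegral_const_mul' _ _ ENNReal.ofReal_ne_top]
            refine lintegral_congr fun x => ?_
            by_cases hx : ENNReal.ofReal l < F x
            · simp [indicator, hx, mul_comm]
            · simp [indicator, hx]
          have hsub : {x | ENNReal.ofReal l < N x} ⊆ {x | 2 * ENNReal.ofReal l < ballMax μ c r F x} := by
            intro x hx
            simp only [mem_ofPred_eq, hN] at hx ⊢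
            rw [ENNReal.lt_div_iff_mul_lt (by norm_num) (by norm_num)] at hx
            rwa [mul_comm]
          have e3 : ENNReal.ofReal (l ^ (P - 1)) =
              ENNReal.ofReal (l ^ (P - 1 - 1)) * ENNReal.ofReal l := by
            rw [← ENNReal.ofReal_mul (by positivity), ← Real.rpow_add_one hl.ne']
            congr 2; ring
          rw [e1, e2, e3]
          calc ENNReal.ofReal (l ^ (P - 1 - 1)) * ENNReal.ofReal l * μ {x | ENNReal.ofReal l < N x}
              ≤ ENNReal.ofReal (l ^ (P - 1 - 1)) * (ENNReal.ofReal l *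
                  μ {x | 2 * ENNReal.ofReal l < ballMax μ c r F x}) := by
                rw [mul_assoc]; gcongr
            _ ≤ ENNReal.ofReal (l ^ (P - 1 - 1)) *
                  (D * ∫⁻ y, {y | ENNReal.ofReal l < F y}.indicator F y ∂μ) := by
                exact mul_le_mul_right
                  (ballMax_level μ D hD hfin c r hr F hF _ ENNReal.ofReal_ne_top) _
            _ = _ := by ring
      _ = ENNReal.ofReal P * (D * ∫⁻ l in Ioi (0 : ℝ), ∫⁻ x, F x *
            {l : ℝ | ENNReal.ofReal l < F x}.indicator
            (fun l => ENNReal.ofReal (l ^ (P - 1 - 1))) l ∂μ) := by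
          rw [lintegral_const_mul]
          exact hmeas2.lintegral_prod_left'
      _ = ENNReal.ofReal P * (D * ∫⁻ x, F x * (∫⁻ l in Ioi (0 : ℝ),
            {l : ℝ | ENNReal.ofReal l < F x}.indicator
            (fun l => ENNReal.ofReal (l ^ (P - 1 - 1))) l) ∂μ) := by
          congr 2
          rw [lintegral_lintegral_swap]
          · refine lintegral_congr fun x => ?_
            rw [lintegral_const_mul]
            exact (Measurable.indicator (by fun_prop)
              (measurableSet_lt ENNReal.measurable_ofReal measurable_const))
          · exact (hmeas2.comp measurable_swap).aemeasurable
      _ ≤ ENNReal.ofReal P * (D * ∫⁻ x, ENNReal.ofReal (P - 1)⁻¹ * F x ^ P ∂μ) := by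
          gcongr ENNReal.ofReal P * (D * ?_)
          refine lintegral_mono fun x => ?_
          simp only
          rcases eq_or_ne (F x) ∞ with hx | hx
          · rw [hx, ENNReal.top_rpow_of_pos hP0, ENNReal.mul_top]
            · exact le_top
            · simp [hP]
          · obtain ⟨m, hm⟩ : ∃ m : ℝ≥0, (m : ℝ≥0∞) = F x := ⟨_, ENNReal.coe_toNNReal hx⟩
            rw [← hm, layer_eq hP1 m, mul_left_comm]
            gcongr
            rcases eq_or_ne m 0 with rfl | hm0
            · simp
            · refine le_of_eq ?_
              conv_lhs => enter [1]; rw [← ENNReal.rpow_one (m : ℝ≥0∞)]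
              rw [← ENNReal.rpow_add _ _ (by simpa using hm0) (by simp)]
              congr 1; ring
      _ = _ := by rw [lintegral_const_mul' _ _ ENNReal.ofReal_ne_top]
  calc ∫⁻ x, (ballMax μ c r F x) ^ P ∂μ = 2 ^ P * ∫⁻ x, N x ^ P ∂μ := by
        rw [← lintegral_const_mul _ (hNm.pow_const P)]
        exact lintegral_congr hNeq
    _ ≤ 2 ^ P * (ENNReal.ofReal P * (D * (ENNReal.ofReal (P - 1)⁻¹ * ∫⁻ x, (F x) ^ P ∂μ))) := by
        gcongr
    _ = _ := by ring


/-! ### John–Nirenberg inequality -/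

theorem pi_vol_scale {n : ℕ} (c : Fin n → ℝ) (m : ℝ≥0) {r : ℝ} (hr : 0 ≤ r) :
    volume (Metric.closedBall c (m * r)) = (m : ℝ≥0∞) ^ n * volume (Metric.closedBall c r) := by
  rw [Real.volume_pi_closedBall _ (by positivity), Real.volume_pi_closedBall _ hr]
  rw [show 2 * ((m : ℝ) * r) = m * (2 * r) by ring, mul_pow, ENNReal.ofReal_mul (by positivity),
    ENNReal.ofReal_pow (by positivity), ENNReal.ofReal_coe_nnreal]
  simp

theorem pi_vol_scale5 {n : ℕ} (c : Fin n → ℝ) {r : ℝ} (hr : 0 ≤ r) :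
    volume (Metric.closedBall c (5 * r)) = 5 ^ n * volume (Metric.closedBall c r) := by
  have := pi_vol_scale c 5 hr
  simpa using this

theorem pi_vol_scale2 {n : ℕ} (c : Fin n → ℝ) {r : ℝ} (hr : 0 ≤ r) :
    volume (Metric.closedBall c (2 * r)) = 2 ^ n * volume (Metric.closedBall c r) := by
  have := pi_vol_scale c 2 hr
  simpa using this

theorem pi_vol_center {n : ℕ} (c c' : Fin n → ℝ) {r : ℝ} (hr : 0 ≤ r) :
    volume (Metric.closedBall c r) = volume (Metric.closedBall c' r) := by
  rw [Real.volume_pi_closedBall _ hr, Real.volume_pi_closedBall _ hr]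

theorem pi_vol_ne_zero {n : ℕ} (c : Fin n → ℝ) {r : ℝ} (hr : 0 < r) :
    volume (Metric.closedBall c r) ≠ 0 := by
  rw [Real.volume_pi_closedBall _ hr.le]
  simp only [ne_eq, ENNReal.ofReal_eq_zero, not_le]
  positivity

theorem pi_vol_ne_top {n : ℕ} (c : Fin n → ℝ) (r : ℝ) :
    volume (Metric.closedBall c r) ≠ ∞ := measure_closedBall_lt_top.ne

/-- Mean oscillation of `b` (around the constants `a`) at most `K` on all balls. -/
def OscBound {n : ℕ} (b : (Fin n → ℝ) → ℝ) (a : (Fin n → ℝ) → ℝ → ℝ) (K : ℝ≥0) : Prop :=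
  ∀ c r, 0 < r → ∫⁻ y in Metric.closedBall c r, ‖b y - a c r‖ₑ ≤
    K * volume (Metric.closedBall c r)

theorem OscBound.shift {n : ℕ} {b : (Fin n → ℝ) → ℝ} {a : (Fin n → ℝ) → ℝ → ℝ} {K : ℝ≥0}
    (h : OscBound b a K) (hb : Measurable b) (c : Fin n → ℝ) {r : ℝ} (hr : 0 < r) (v : ℝ) (A : ℝ≥0∞)
    (hA : ∫⁻ y in Metric.closedBall c r, ‖b y - v‖ₑ ≤ A * volume (Metric.closedBall c r)) :
    ‖a c r - v‖ₑ ≤ K + A := by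
  have h1 : ‖a c r - v‖ₑ * volume (Metric.closedBall c r) ≤
      (K + A) * volume (Metric.closedBall c r) := by
    rw [← setLIntegral_const, add_mul]
    refine le_trans ?_ (add_le_add (h c r hr) hA)
    rw [← lintegral_add_left (by fun_prop)]
    refine lintegral_mono fun y => ?_
    calc ‖a c r - v‖ₑ = ‖(b y - v) - (b y - a c r)‖ₑ := by congr 1; ring
      _ ≤ ‖b y - v‖ₑ + ‖b y - a c r‖ₑ := enorm_sub_le
      _ = _ := add_comm _ _
  exact (ENNReal.mul_le_mul_iff_left (pi_vol_ne_zero c hr) (pi_vol_ne_top c r)).1 h1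

theorem OscBound.big {n : ℕ} {b : (Fin n → ℝ) → ℝ} {a : (Fin n → ℝ) → ℝ → ℝ} {K : ℝ≥0}
    (h : OscBound b a K) (hb : Measurable b) (c : Fin n → ℝ) {r : ℝ} (hr : 0 < r) :
    ∫⁻ y in Metric.closedBall c (2 * r), ‖b y - a c r‖ₑ ≤
      (2 + 2 ^ n) * 2 ^ n * K * volume (Metric.closedBall c r) := by
  have h1 : ‖a c r - a c (2 * r)‖ₑ ≤ K + 2 ^ n * K := by
    refine h.shift hb c hr _ _ ?_
    refine (lintegral_mono_set (Metric.closedBall_subset_closedBall (by linarith))).trans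
      ((h c (2 * r) (by positivity)).trans ?_)
    rw [pi_vol_scale2 c hr.le]
    exact le_of_eq (by ring)
  calc ∫⁻ y in Metric.closedBall c (2 * r), ‖b y - a c r‖ₑ
      ≤ ∫⁻ y in Metric.closedBall c (2 * r), (‖b y - a c (2 * r)‖ₑ + (K + 2 ^ n * K)) := by
        refine lintegral_mono fun y => ?_
        calc ‖b y - a c r‖ₑ = ‖(b y - a c (2 * r)) - (a c r - a c (2 * r))‖ₑ := by
              congr 1; ring
          _ ≤ _ := enorm_sub_le.trans (by gcongr)
    _ ≤ K * volume (Metric.closedBall c (2 * r)) +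
        (K + 2 ^ n * K) * volume (Metric.closedBall c (2 * r)) := by
        rw [lintegral_add_right _ measurable_const, setLIntegral_const]
        gcongr
        exact h c (2 * r) (by positivity)
    _ = _ := by rw [pi_vol_scale2 c hr.le]; ring

theorem exp_osc_le {ε : ℝ} (hε : 0 ≤ ε) (u v w : ℝ) (M : ℝ≥0) (hM : ‖v - w‖ₑ ≤ M)
    (hM2 : Real.exp (ε * M) ≤ 2) :
    ENNReal.ofReal (Real.exp (ε * |u - w|)) ≤ 2 * ENNReal.ofReal (Real.exp (ε * |u - v|)) := by
  have hM' : |v - w| ≤ M := by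
    have : ‖v - w‖₊ ≤ M := by exact_mod_cast hM
    exact_mod_cast this
  rw [show (2 : ℝ≥0∞) = ENNReal.ofReal 2 by simp, ← ENNReal.ofReal_mul (by norm_num)]
  refine ENNReal.ofReal_le_ofReal ?_
  calc Real.exp (ε * |u - w|) ≤ Real.exp (ε * M + ε * |u - v|) := by
        refine Real.exp_le_exp.2 ?_
        rw [← mul_add]
        refine mul_le_mul_of_nonneg_left ?_ hε
        calc |u - w| = |(v - w) + (u - v)| := by congr 1; ring
          _ ≤ |v - w| + |u - v| := abs_add_le _ _
          _ ≤ _ := by linarith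
    _ = Real.exp (ε * M) * Real.exp (ε * |u - v|) := Real.exp_add _ _
    _ ≤ _ := by gcongr

theorem OscBound.selectCubes {n : ℕ} {b : (Fin n → ℝ) → ℝ} {a : (Fin n → ℝ) → ℝ → ℝ} {K : ℝ≥0}
    (h : OscBound b a K) (hb : Measurable b) (c : Fin n → ℝ) {r : ℝ} (hr : 0 < r)
    (lam : ℝ≥0) (hlam : (2 + 2 ^ n) * 2 ^ n * K ≤ lam) :
    ∀ᵐ x : Fin n → ℝ, x ∈ Metric.closedBall c r → (lam : ℝ≥0∞) < ‖b x - a c r‖ₑ →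
      ∃ ρ, 0 < ρ ∧ 5 * ρ ≤ r ∧ lam * volume (Metric.closedBall x ρ) ≤
        ∫⁻ y in Metric.closedBall x ρ, ‖b y - a c r‖ₑ ∧
        ∫⁻ y in Metric.closedBall x (5 * ρ), ‖b y - a c r‖ₑ ≤
          lam * volume (Metric.closedBall x (5 * ρ)) := by
  set g : (Fin n → ℝ) → ℝ≥0∞ := fun y => ‖b y - a c r‖ₑ with hg
  have hgm : Measurable g := by fun_prop
  set G : (Fin n → ℝ) → ℝ≥0∞ := (Metric.closedBall c (2 * r)).indicator g with hG
  have hGm : Measurable G := hgm.indicator Metric.isClosed_closedBall.measurableSet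
  have hlam' : ((2 + 2 ^ n) * 2 ^ n * K : ℝ≥0∞) ≤ lam := by exact_mod_cast hlam
  have hGi : ∫⁻ y, G y ≠ ∞ := by
    rw [hG, lintegral_indicator Metric.isClosed_closedBall.measurableSet]
    refine ((h.big hb c hr).trans_lt ?_).ne
    refine ENNReal.mul_lt_top (lt_of_le_of_lt hlam' ENNReal.coe_lt_top) measure_closedBall_lt_top
  filter_upwards [(IsUnifLocDoublingMeasure.vitaliFamily (volume : Measure (Fin n → ℝ))
    1).ae_tendsto_lintegral_div hGm.aemeasurable hGi] with x hx hxQ hxl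
  have hδ : Tendsto (fun k : ℕ => r * (1 / 5 : ℝ) ^ k) atTop (nhdsWithin 0 (Ioi 0)) := by
    refine tendsto_nhdsWithin_iff.2 ⟨?_, Eventually.of_forall fun k => ?_⟩
    · have := (tendsto_pow_atTop_nhds_zero_of_lt_one (r := (1 / 5 : ℝ)) (by norm_num)
        (by norm_num)).const_mul r
      simpa using this
    · simp only [mem_Ioi]; positivity
  have hT := hx.comp (IsUnifLocDoublingMeasure.tendsto_closedBall_filterAt volume (K := 1) (x := x)
    (fun _ : ℕ => x) _ hδ (Eventually.of_forall fun k => Metric.mem_closedBall_self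
      (by positivity)))
  have hxG : G x = g x := by
    rw [hG, indicator_of_mem]
    exact Metric.closedBall_subset_closedBall (by linarith) hxQ
  rw [hxG] at hT
  have hex : ∃ k : ℕ, lam * volume (Metric.closedBall x (r * (1 / 5 : ℝ) ^ k)) <
      ∫⁻ y in Metric.closedBall x (r * (1 / 5 : ℝ) ^ k), g y := by
    obtain ⟨k, hk⟩ := (hT.eventually_const_lt hxl).exists
    refine ⟨k, ?_⟩
    simp only [Function.comp] at hk
    rw [ENNReal.lt_div_iff_mul_lt (Or.inl (pi_vol_ne_zero _ (by positivity)))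
      (Or.inl (pi_vol_ne_top _ _))] at hk
    refine hk.trans_le (lintegral_mono fun y => ?_)
    exact indicator_le_self _ _ _
  classical
  have hf := Nat.find_spec hex
  have hmin := fun m => Nat.find_min hex (m := m)
  set k := Nat.find hex with hk
  have hk0 : k ≠ 0 := by
    intro h0
    rw [h0] at hf
    refine absurd hf (not_lt.2 ?_)
    simp only [pow_zero, mul_one]
    calc ∫⁻ y in Metric.closedBall x r, g y ≤ ∫⁻ y in Metric.closedBall c (2 * r), g y := by
          refine lintegral_mono_set (Metric.closedBall_subset_closedBall' ?_)
          rw [Metric.mem_closedBall] at hxQ; linarith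
      _ ≤ (2 + 2 ^ n) * 2 ^ n * K * volume (Metric.closedBall c r) := h.big hb c hr
      _ ≤ _ := by rw [pi_vol_center c x hr.le]; gcongr
  obtain ⟨j, hj⟩ := Nat.exists_eq_succ_of_ne_zero hk0
  have hm := hmin j (by omega)
  have e5 : 5 * (r * (1 / 5 : ℝ) ^ k) = r * (1 / 5) ^ j := by
    rw [hj, pow_succ]; ring
  refine ⟨r * (1 / 5 : ℝ) ^ k, by positivity, ?_, hf.le, ?_⟩
  · rw [e5]
    exact mul_le_of_le_one_right hr.le (pow_le_one₀ (by norm_num) (by norm_num))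
  · rw [e5]; exact not_lt.1 hm

theorem jn_step {n : ℕ} {b : (Fin n → ℝ) → ℝ} {a : (Fin n → ℝ) → ℝ → ℝ} {K : ℝ≥0}
    (h : OscBound b a K) (hb : Measurable b) (A lam : ℝ≥0)
    (hA : (2 + 2 ^ n) * 2 ^ n * K + 1 = A) (hlam : lam = 4 * 5 ^ n * A)
    (ε : ℝ) (hε : 0 ≤ ε) (hε2 : Real.exp (ε * (K + lam : ℝ≥0)) ≤ 2)
    (X : ℝ≥0∞) (hX : ∀ c r, 0 < r → ∫⁻ y in Metric.closedBall c r,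
      ENNReal.ofReal (Real.exp (ε * |b y - a c r|)) ≤ X * volume (Metric.closedBall c r))
    (c : Fin n → ℝ) (r : ℝ) (hr : 0 < r) :
    ∫⁻ y in Metric.closedBall c r, ENNReal.ofReal (Real.exp (ε * |b y - a c r|)) ≤
      (2 + X / 2) * volume (Metric.closedBall c r) := by
  have hAlam : (2 + 2 ^ n) * 2 ^ n * K ≤ lam := by
    rw [hlam, ← hA]
    have h1 : (1 : ℝ≥0) ≤ 4 * 5 ^ n := by
      have : (1 : ℝ≥0) ≤ 5 ^ n := one_le_pow₀ (by norm_num)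
      calc (1 : ℝ≥0) ≤ 4 * 1 := by norm_num
        _ ≤ _ := by gcongr
    calc (2 + 2 ^ n) * 2 ^ n * K ≤ 1 * ((2 + 2 ^ n) * 2 ^ n * K + 1) := by
          rw [one_mul]; exact le_self_add
      _ ≤ _ := by gcongr
  set Q := Metric.closedBall c r with hQ
  set e : (Fin n → ℝ) → ℝ≥0∞ := fun y => ENNReal.ofReal (Real.exp (ε * |b y - a c r|)) with he
  set g : (Fin n → ℝ) → ℝ≥0∞ := fun y => ‖b y - a c r‖ₑ with hg
  have hgm : Measurable g := by fun_prop
  have h_select := h.selectCubes hb c hr lam hAlam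
  set t : Set (Fin n → ℝ) := {x | x ∈ Q ∧ ∃ ρ, 0 < ρ ∧ 5 * ρ ≤ r ∧
      lam * volume (Metric.closedBall x ρ) ≤ ∫⁻ y in Metric.closedBall x ρ, g y ∧
        ∫⁻ y in Metric.closedBall x (5 * ρ), g y ≤
          lam * volume (Metric.closedBall x (5 * ρ))} with ht
  have hch : ∀ x : Fin n → ℝ, ∃ ρ, x ∈ t → 0 < ρ ∧ 5 * ρ ≤ r ∧
      lam * volume (Metric.closedBall x ρ) ≤ ∫⁻ y in Metric.closedBall x ρ, g y ∧
        ∫⁻ y in Metric.closedBall x (5 * ρ), g y ≤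
          lam * volume (Metric.closedBall x (5 * ρ)) := by
    intro x
    by_cases hx : x ∈ t
    · obtain ⟨ρ, hρ⟩ := hx.2; exact ⟨ρ, fun _ => hρ⟩
    · exact ⟨0, fun h => absurd h hx⟩
  choose ρ hρ using hch
  obtain ⟨u, hut, huc, hd, hcov⟩ := vitali_closedBall t id ρ r (fun i hi => (hρ i hi).1)
    (fun i hi => by have := hρ i hi; linarith)
  simp only [id] at hd hcov
  set U : Set (Fin n → ℝ) := ⋃ x ∈ u, Metric.closedBall x (5 * ρ x) with hU
  have hUm : MeasurableSet U :=
    MeasurableSet.biUnion huc fun _ _ => Metric.isClosed_closedBall.measurableSet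
  -- the complement of `U`
  have hout : ∫⁻ y in Q \ U, e y ≤ 2 * volume Q := by
    have hae : ∀ᵐ y ∂(volume.restrict (Q \ U)), e y ≤ 2 := by
      refine (ae_restrict_iff' (Metric.isClosed_closedBall.measurableSet.diff hUm)).2 ?_
      filter_upwards [h_select] with y hy hyQ
      by_cases hyl : (lam : ℝ≥0∞) < ‖b y - a c r‖ₑ
      · exfalso
        have hyt : y ∈ t := ⟨hyQ.1, hy hyQ.1 hyl⟩
        obtain ⟨z, hz, hsub⟩ := hcov y hyt
        refine hyQ.2 ?_
        simp only [hU, mem_iUnion]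
        exact ⟨z, hz, hsub (Metric.mem_closedBall_self (hρ y hyt).1.le)⟩
      · have hM : ‖b y - a c r‖ₑ ≤ ((K + lam : ℝ≥0) : ℝ≥0∞) := by
          refine (not_lt.1 hyl).trans ?_
          exact_mod_cast le_add_self
        have := exp_osc_le hε (b y) (b y) (a c r) _ hM hε2
        simpa only [sub_self, abs_zero, mul_zero, Real.exp_zero, ENNReal.ofReal_one, mul_one] using this
    calc ∫⁻ y in Q \ U, e y ≤ ∫⁻ y in Q \ U, 2 := lintegral_mono_ae hae
      _ = 2 * volume (Q \ U) := setLIntegral_const _ _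
      _ ≤ _ := by gcongr; exact sdiff_subset
  have hsum : 4 * 5 ^ n * ∑' x : u, volume (Metric.closedBall (x : Fin n → ℝ) (ρ x)) ≤
      volume Q := by
    have h1 : (lam : ℝ≥0∞) * ∑' x : u, volume (Metric.closedBall (x : Fin n → ℝ) (ρ x)) ≤
        A * volume Q := by
      rw [← ENNReal.tsum_mul_left]
      calc ∑' x : u, lam * volume (Metric.closedBall (x : Fin n → ℝ) (ρ x))
          ≤ ∑' x : u, ∫⁻ y in Metric.closedBall (x : Fin n → ℝ) (ρ x), g y :=
            ENNReal.tsum_le_tsum fun x => (hρ x (hut x.2)).2.2.1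
        _ = ∫⁻ y in ⋃ x ∈ u, Metric.closedBall x (ρ x), g y :=
            (lintegral_biUnion huc (fun _ _ => Metric.isClosed_closedBall.measurableSet) hd _).symm
        _ ≤ ∫⁻ y in Metric.closedBall c (2 * r), g y := by
            refine lintegral_mono_set (iUnion₂_subset fun x hx => ?_)
            refine Metric.closedBall_subset_closedBall' ?_
            have h2 := hρ x (hut hx)
            have h3 : dist x c ≤ r := (hut hx).1
            linarith
        _ ≤ (2 + 2 ^ n) * 2 ^ n * K * volume Q := h.big hb c hr
        _ ≤ A * volume Q := by
            gcongr
            rw [← hA]; push_cast; exact le_self_add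
    have hA0 : (A : ℝ≥0∞) ≠ 0 := by
      rw [← hA]; simp
    rw [hlam] at h1
    push_cast at h1
    rw [mul_comm (4 * 5 ^ n : ℝ≥0∞) (A : ℝ≥0∞), mul_assoc] at h1
    exact (ENNReal.mul_le_mul_iff_right hA0 ENNReal.coe_ne_top).1 h1
  have hin : ∫⁻ y in U, e y ≤ X / 2 * volume Q := by
    calc ∫⁻ y in U, e y ≤ ∑' x : u, ∫⁻ y in Metric.closedBall (x : Fin n → ℝ) (5 * ρ x), e y := by
          rw [hU, biUnion_eq_iUnion]
          have := huc.to_subtype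
          exact lintegral_iUnion_le _ _
      _ ≤ ∑' x : u, 2 * (X * (5 ^ n * volume (Metric.closedBall (x : Fin n → ℝ) (ρ x)))) := by
          refine ENNReal.tsum_le_tsum fun x => ?_
          have hx := hρ x (hut x.2)
          have hsh := h.shift hb x (r := 5 * ρ x) (by linarith) (a c r) lam hx.2.2.2
          rw [← pi_vol_scale5 _ hx.1.le]
          refine le_trans ?_ (mul_le_mul_right (hX x (5 * ρ x) (by linarith)) 2)
          rw [← lintegral_const_mul _ (by fun_prop)]
          refine lintegral_mono fun y => ?_
          exact exp_osc_le hε (b y) _ (a c r) _ (by exact_mod_cast hsh) hε2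
      _ = X / 2 * (4 * 5 ^ n * ∑' x : u, volume (Metric.closedBall (x : Fin n → ℝ) (ρ x))) := by
          rw [ENNReal.tsum_mul_left, ENNReal.tsum_mul_left, ENNReal.tsum_mul_left]
          have : X / 2 * 4 = 2 * X := by
            rw [show (4 : ℝ≥0∞) = 2 * 2 by norm_num, ← mul_assoc,
              ENNReal.div_mul_cancel (by norm_num) (by norm_num), mul_comm]
          rw [← mul_assoc, ← mul_assoc, ← mul_assoc, ← mul_assoc, this]
      _ ≤ _ := by gcongr
  calc ∫⁻ y in Q, e y ≤ ∫⁻ y in (Q \ U) ∪ U, e y :=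
        lintegral_mono_set (by rw [sdiff_union_self]; exact subset_union_left)
    _ ≤ (∫⁻ y in Q \ U, e y) + ∫⁻ y in U, e y := lintegral_union_le _ _ _
    _ ≤ 2 * volume Q + X / 2 * volume Q := add_le_add hout hin
    _ = _ := by ring

theorem jn_bounded {n : ℕ} {b : (Fin n → ℝ) → ℝ} {a : (Fin n → ℝ) → ℝ → ℝ} {K : ℝ≥0}
    (h : OscBound b a K) (hb : Measurable b) (A lam : ℝ≥0)
    (hA : (2 + 2 ^ n) * 2 ^ n * K + 1 = A) (hlam : lam = 4 * 5 ^ n * A)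
    (ε : ℝ) (hε : 0 ≤ ε) (hε2 : Real.exp (ε * (K + lam : ℝ≥0)) ≤ 2)
    (N : ℝ) (hbN : ∀ x, |b x| ≤ N) (haN : ∀ x r, |a x r| ≤ N)
    (c : Fin n → ℝ) (r : ℝ) (hr : 0 < r) :
    ∫⁻ y in Metric.closedBall c r, ENNReal.ofReal (Real.exp (ε * |b y - a c r|)) ≤
      4 * volume (Metric.closedBall c r) := by
  set X : ℝ≥0∞ := ⨆ (c : Fin n → ℝ) (r : ℝ) (_ : 0 < r), (∫⁻ y in Metric.closedBall c r,
    ENNReal.ofReal (Real.exp (ε * |b y - a c r|))) / volume (Metric.closedBall c r) with hXdef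
  have hX : ∀ c r, 0 < r → ∫⁻ y in Metric.closedBall c r,
      ENNReal.ofReal (Real.exp (ε * |b y - a c r|)) ≤ X * volume (Metric.closedBall c r) := by
    intro c r hr
    rw [← ENNReal.div_le_iff (pi_vol_ne_zero c hr) (pi_vol_ne_top c r)]
    exact le_iSup_of_le c (le_iSup_of_le r (le_iSup_of_le hr le_rfl))
  have hXtop : X ≠ ∞ := by
    have : X ≤ ENNReal.ofReal (Real.exp (ε * (N + N))) := by
      refine iSup_le fun c => iSup_le fun r => iSup_le fun hr => ?_
      rw [ENNReal.div_le_iff (pi_vol_ne_zero c hr) (pi_vol_ne_top c r), ← setLIntegral_const]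
      refine lintegral_mono fun y => ENNReal.ofReal_le_ofReal (Real.exp_le_exp.2 ?_)
      refine mul_le_mul_of_nonneg_left ?_ hε
      exact (abs_sub _ _).trans (add_le_add (hbN y) (haN c r))
    exact ne_top_of_le_ne_top ENNReal.ofReal_ne_top this
  have hX2 : X ≤ 2 + X / 2 := by
    refine iSup_le fun c => iSup_le fun r => iSup_le fun hr => ?_
    rw [ENNReal.div_le_iff (pi_vol_ne_zero c hr) (pi_vol_ne_top c r)]
    exact jn_step h hb A lam hA hlam ε hε hε2 X hX c r hr
  have hX4 : X ≤ 4 := by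
    rw [← ENNReal.add_halves X] at hX2
    have hh : X / 2 ≠ ∞ := ENNReal.div_ne_top hXtop (by norm_num)
    rw [ENNReal.add_halves X] at hX2
    nth_rewrite 1 [← ENNReal.add_halves X] at hX2
    have h3 := (ENNReal.add_le_add_iff_right hh).1 hX2
    rw [ENNReal.div_le_iff (by norm_num) (by norm_num)] at h3
    exact h3.trans (by norm_num)
  exact (hX c r hr).trans (by gcongr)

theorem john_nirenberg {n : ℕ} {b : (Fin n → ℝ) → ℝ} {a : (Fin n → ℝ) → ℝ → ℝ} {K : ℝ≥0}
    (h : OscBound b a K) (hb : Measurable b) :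
    ∃ ε > 0, ∀ c r, 0 < r →
      ∫⁻ y in Metric.closedBall c r, ENNReal.ofReal (Real.exp (ε * |b y - a c r|)) ≤
        4 * volume (Metric.closedBall c r) := by
  set A : ℝ≥0 := (2 + 2 ^ n) * 2 ^ n * K + 1 with hA
  set lam : ℝ≥0 := 4 * 5 ^ n * A with hlam
  have hpos : (0 : ℝ) < ((K + lam : ℝ≥0) : ℝ) := by
    have : 0 < K + lam := by
      have : 0 < A := by rw [hA]; positivity
      positivity
    exact_mod_cast this
  refine ⟨Real.log 2 / (K + lam : ℝ≥0), div_pos (Real.log_pos (by norm_num)) hpos, ?_⟩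
  set ε := Real.log 2 / (K + lam : ℝ≥0) with hε
  have hε0 : 0 ≤ ε := (div_pos (Real.log_pos (by norm_num)) hpos).le
  have hε2 : Real.exp (ε * (K + lam : ℝ≥0)) ≤ 2 := by
    rw [hε, div_mul_cancel₀ _ hpos.ne', Real.exp_log (by norm_num)]
  intro c r hr
  -- truncation
  let T : ℕ → ℝ → ℝ := fun N s => max (min s N) (-N)
  have hTl : ∀ N s t, |T N s - T N t| ≤ |s - t| := by
    intro N s t
    refine (abs_max_sub_max_le_abs _ _ _).trans ?_
    exact abs_min_sub_min_le_max s N t N |>.trans (by simp)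
  have hTb : ∀ N s, |T N s| ≤ (N : ℝ) := by
    intro N s
    rw [abs_le]
    refine ⟨le_max_right _ _, max_le (min_le_right _ _) ?_⟩
    have : (0 : ℝ) ≤ N := Nat.cast_nonneg N
    linarith
  have hTe : ∀ s, ∀ᶠ N in atTop, T N s = s := by
    intro s
    obtain ⟨M, hM⟩ := exists_nat_ge |s|
    filter_upwards [eventually_ge_atTop M] with N hN
    have h1 : |s| ≤ N := hM.trans (by exact_mod_cast hN)
    rw [abs_le] at h1
    simp [T, h1.1, h1.2]
  have hTm : ∀ N, Measurable (T N) := fun N => by fun_prop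
  have hN : ∀ N : ℕ, ∫⁻ y in Metric.closedBall c r,
      ENNReal.ofReal (Real.exp (ε * |T N (b y) - T N (a c r)|)) ≤
        4 * volume (Metric.closedBall c r) := by
    intro N
    have hO : OscBound (fun y => T N (b y)) (fun c r => T N (a c r)) K := by
      intro c r hr
      refine le_trans (lintegral_mono fun y => ?_) (h c r hr)
      exact enorm_le_iff_norm_le.2 (hTl N _ _)
    exact jn_bounded hO ((hTm N).comp hb) A lam rfl rfl ε hε0 hε2 N (fun x => hTb N _)
      (fun x r => hTb N _) c r hr
  calc ∫⁻ y in Metric.closedBall c r, ENNReal.ofReal (Real.exp (ε * |b y - a c r|))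
      ≤ ∫⁻ y in Metric.closedBall c r, liminf (fun N : ℕ =>
          ENNReal.ofReal (Real.exp (ε * |T N (b y) - T N (a c r)|))) atTop := by
        refine lintegral_mono fun y => ?_
        refine le_of_eq (Tendsto.liminf_eq ?_).symm
        refine tendsto_const_nhds.congr' ?_
        filter_upwards [hTe (b y), hTe (a c r)] with N h1 h2
        rw [h1, h2]
    _ ≤ liminf (fun N : ℕ => ∫⁻ y in Metric.closedBall c r,
          ENNReal.ofReal (Real.exp (ε * |T N (b y) - T N (a c r)|))) atTop := by
        refine lintegral_liminf_le fun N => ?_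
        have := (hTm N).comp hb
        simp only [Function.comp_def] at this
        fun_prop
    _ ≤ _ := by
        refine liminf_le_of_le (by isBoundedDefault) fun v hv => ?_
        obtain ⟨N, hNv⟩ := hv.exists
        exact hNv.trans (hN N)


/-! ### Exponential weights and the weighted maximal inequality -/

/-- The exponential function with values in `[0,∞]`. -/
noncomputable def ee (u : ℝ) : ℝ≥0∞ := ENNReal.ofReal (Real.exp u)

theorem ee_add (u v : ℝ) : ee (u + v) = ee u * ee v := by
  rw [ee, Real.exp_add, ENNReal.ofReal_mul (Real.exp_pos _).le]; rfl

theorem ee_zero : ee 0 = 1 := by simp [ee]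

theorem ee_ne_zero (u : ℝ) : ee u ≠ 0 := by simp [ee, Real.exp_pos]

theorem ee_ne_top (u : ℝ) : ee u ≠ ∞ := by simp [ee]

theorem ee_mono {u v : ℝ} (h : u ≤ v) : ee u ≤ ee v :=
  ENNReal.ofReal_le_ofReal (Real.exp_le_exp.2 h)

theorem ee_rpow (u s : ℝ) : ee u ^ s = ee (u * s) := by
  rw [ee, ENNReal.ofReal_rpow_of_pos (Real.exp_pos _), ← Real.exp_mul]; rfl

theorem ee_meas : Measurable ee := by unfold ee; fun_prop

theorem two_le_ee (u : ℝ) : 2 ≤ 4 * ee u + ee (-u) / 4 := by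
  have h4 : (4 : ℝ≥0∞) = ENNReal.ofReal 4 := by simp
  have h2 : (2 : ℝ≥0∞) = ENNReal.ofReal 2 := by simp
  rw [h4, h2, ee, ee, ← ENNReal.ofReal_mul (by norm_num), ← ENNReal.ofReal_div_of_pos (by norm_num),
    ← ENNReal.ofReal_add (by positivity) (by positivity)]
  refine ENNReal.ofReal_le_ofReal ?_
  rw [Real.exp_neg]
  have hx := Real.exp_pos u
  set x := Real.exp u
  rw [← sub_nonneg]
  have : 4 * x + x⁻¹ / 4 - 2 = (4 * x - 1) ^ 2 / (4 * x) := by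
    field_simp; ring
  rw [this]; positivity

/-- Signed exponential integrability on all balls. -/
def ExpOsc {n : ℕ} (b : (Fin n → ℝ) → ℝ) (a : (Fin n → ℝ) → ℝ → ℝ) (ε : ℝ) : Prop :=
  ∀ c r, 0 < r → ∫⁻ y in Metric.closedBall c r, ee (ε * |b y - a c r|) ≤
        4 * volume (Metric.closedBall c r)

theorem ExpOsc.signed {n : ℕ} {b : (Fin n → ℝ) → ℝ} {a : (Fin n → ℝ) → ℝ → ℝ} {ε : ℝ}
    (h : ExpOsc b a ε) {η : ℝ} (hη : |η| ≤ ε) (c : Fin n → ℝ) {r : ℝ} (hr : 0 < r) :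
    ∫⁻ y in Metric.closedBall c r, ee (η * (b y - a c r)) ≤
        4 * volume (Metric.closedBall c r) := by
  refine le_trans (lintegral_mono fun y => ee_mono ?_) (h c r hr)
  calc η * (b y - a c r) ≤ |η * (b y - a c r)| := le_abs_self _
    _ = |η| * |b y - a c r| := abs_mul _ _
    _ ≤ _ := by gcongr

theorem ExpOsc.lower {n : ℕ} {b : (Fin n → ℝ) → ℝ} {a : (Fin n → ℝ) → ℝ → ℝ} {ε : ℝ}
    (h : ExpOsc b a ε) (hb : Measurable b) {η : ℝ} (hη : |η| ≤ ε) (c : Fin n → ℝ) {r : ℝ}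
    (hr : 0 < r) :
    volume (Metric.closedBall c r) ≤
      4 * ∫⁻ y in Metric.closedBall c r, ee (η * (b y - a c r)) := by
  have hm : Measurable fun y => ee (η * (b y - a c r)) := ee_meas.comp (by fun_prop)
  have h1 : 2 * volume (Metric.closedBall c r) ≤
      4 * (∫⁻ y in Metric.closedBall c r, ee (η * (b y - a c r))) +
        volume (Metric.closedBall c r) := by
    calc 2 * volume (Metric.closedBall c r) = ∫⁻ y in Metric.closedBall c r, 2 :=
          (setLIntegral_const _ _).symm
      _ ≤ ∫⁻ y in Metric.closedBall c r, (4 * ee (η * (b y - a c r)) +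
            4⁻¹ * ee ((-η) * (b y - a c r))) := by
          refine lintegral_mono fun y => ?_
          have := two_le_ee (η * (b y - a c r))
          rwa [div_eq_mul_inv, mul_comm _ (4⁻¹ : ℝ≥0∞), ← neg_mul] at this
      _ = 4 * (∫⁻ y in Metric.closedBall c r, ee (η * (b y - a c r))) +
            4⁻¹ * (∫⁻ y in Metric.closedBall c r, ee ((-η) * (b y - a c r))) := by
          have hm2 : Measurable fun y => ee ((-η) * (b y - a c r)) := ee_meas.comp (by fun_prop)
          rw [lintegral_add_left (hm.const_mul _), lintegral_const_mul _ hm,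
            lintegral_const_mul _ hm2]
      _ ≤ _ := by
          gcongr ?_ + ?_
          · exact le_rfl
          · calc 4⁻¹ * (∫⁻ y in Metric.closedBall c r, ee ((-η) * (b y - a c r)))
                ≤ 4⁻¹ * (4 * volume (Metric.closedBall c r)) :=
                  mul_le_mul_right (h.signed (by rwa [abs_neg]) c hr) _
              _ = volume (Metric.closedBall c r) := by
                  rw [← mul_assoc, ENNReal.inv_mul_cancel (by norm_num) (by norm_num), one_mul]
  rw [two_mul] at h1
  exact (ENNReal.add_le_add_iff_right (pi_vol_ne_top c r)).1 h1

theorem weight_ball {n : ℕ} {b : (Fin n → ℝ) → ℝ} (hb : Measurable b) (η v : ℝ)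
    (c : Fin n → ℝ) (r : ℝ) :
    (volume.withDensity fun y => ee (η * b y)) (Metric.closedBall c r) =
      ee (η * v) * ∫⁻ y in Metric.closedBall c r, ee (η * (b y - v)) := by
  have hm : Measurable fun y => ee (η * (b y - v)) := ee_meas.comp (by fun_prop)
  rw [withDensity_apply _ Metric.isClosed_closedBall.measurableSet, ← lintegral_const_mul _ hm]
  refine lintegral_congr fun y => ?_
  rw [← ee_add]; congr 1; ring

theorem weight_upper {n : ℕ} {b : (Fin n → ℝ) → ℝ} {a : (Fin n → ℝ) → ℝ → ℝ} {ε : ℝ}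
    (h : ExpOsc b a ε) (hb : Measurable b) {η : ℝ} (hη : |η| ≤ ε) (c : Fin n → ℝ) {r : ℝ}
    (hr : 0 < r) :
    (volume.withDensity fun y => ee (η * b y)) (Metric.closedBall c r) ≤
      4 * ee (η * a c r) * volume (Metric.closedBall c r) := by
  rw [weight_ball hb η (a c r)]
  calc _ ≤ ee (η * a c r) * (4 * volume (Metric.closedBall c r)) :=
        mul_le_mul_right (h.signed hη c hr) _
    _ = _ := by ring

theorem weight_lower {n : ℕ} {b : (Fin n → ℝ) → ℝ} {a : (Fin n → ℝ) → ℝ → ℝ} {ε : ℝ}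
    (h : ExpOsc b a ε) (hb : Measurable b) {η : ℝ} (hη : |η| ≤ ε) (c : Fin n → ℝ) {r : ℝ}
    (hr : 0 < r) :
    ee (η * a c r) * volume (Metric.closedBall c r) ≤
      4 * (volume.withDensity fun y => ee (η * b y)) (Metric.closedBall c r) := by
  rw [weight_ball hb η (a c r)]
  calc _ ≤ ee (η * a c r) * (4 * ∫⁻ y in Metric.closedBall c r, ee (η * (b y - a c r))) :=
        mul_le_mul_right (h.lower hb hη c hr) _
    _ = _ := by ring

theorem OscBound.shift5 {n : ℕ} {b : (Fin n → ℝ) → ℝ} {a : (Fin n → ℝ) → ℝ → ℝ} {K : ℝ≥0}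
    (h : OscBound b a K) (hb : Measurable b) (c : Fin n → ℝ) {r : ℝ} (hr : 0 < r) :
    |a c r - a c (5 * r)| ≤ ((K + 5 ^ n * K : ℝ≥0) : ℝ) := by
  have h1 : ‖a c r - a c (5 * r)‖ₑ ≤ ((K + 5 ^ n * K : ℝ≥0) : ℝ≥0∞) := by
    push_cast
    refine h.shift hb c hr _ _ ?_
    refine (lintegral_mono_set (Metric.closedBall_subset_closedBall (by linarith))).trans
      ((h c (5 * r) (by positivity)).trans ?_)
    rw [pi_vol_scale5 c hr.le]
    exact le_of_eq (by ring)
  have : ‖a c r - a c (5 * r)‖₊ ≤ K + 5 ^ n * K := by exact_mod_cast h1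
  exact_mod_cast this

theorem weight_doubling {n : ℕ} {b : (Fin n → ℝ) → ℝ} {a : (Fin n → ℝ) → ℝ → ℝ} {ε : ℝ} {K : ℝ≥0}
    (hK : OscBound b a K)
    (h : ExpOsc b a ε) (hb : Measurable b) {η : ℝ} (hη : |η| ≤ ε) (c : Fin n → ℝ) (r : ℝ)
    (hr : 0 < r) :
    (volume.withDensity fun y => ee (η * b y)) (Metric.closedBall c (5 * r)) ≤
      (16 * 5 ^ n * ee (ε * ((K + 5 ^ n * K : ℝ≥0) : ℝ))) *
      (volume.withDensity fun y => ee (η * b y)) (Metric.closedBall c r) := by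
  calc (volume.withDensity fun y => ee (η * b y)) (Metric.closedBall c (5 * r))
      ≤ 4 * ee (η * a c (5 * r)) * volume (Metric.closedBall c (5 * r)) :=
        weight_upper h hb hη c (by linarith)
    _ ≤ 4 * (ee (ε * ((K + 5 ^ n * K : ℝ≥0) : ℝ)) * ee (η * a c r)) *
          volume (Metric.closedBall c (5 * r)) := by
        gcongr
        rw [← ee_add]
        refine ee_mono ?_
        have h1 : η * (a c (5 * r) - a c r) ≤ ε * ((K + 5 ^ n * K : ℝ≥0) : ℝ) := by
          refine (le_abs_self _).trans ?_
          rw [abs_mul, abs_sub_comm]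
          exact mul_le_mul hη (hK.shift5 hb c hr) (abs_nonneg _) ((abs_nonneg _).trans hη)
        linarith
    _ = 4 * ee (ε * ((K + 5 ^ n * K : ℝ≥0) : ℝ)) * 5 ^ n *
          (ee (η * a c r) * volume (Metric.closedBall c r)) := by
        rw [pi_vol_scale5 c hr.le]; ring
    _ ≤ 4 * ee (ε * ((K + 5 ^ n * K : ℝ≥0) : ℝ)) * 5 ^ n *
          (4 * (volume.withDensity fun y => ee (η * b y)) (Metric.closedBall c r)) := by
        exact mul_le_mul_right (weight_lower h hb hη c hr) _
    _ = _ := by ring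

/-- Hölder step: average of `G` controlled by weighted averages. -/
theorem holder_avg {n : ℕ} {b : (Fin n → ℝ) → ℝ} {a : (Fin n → ℝ) → ℝ → ℝ} {ε : ℝ}
    (h : ExpOsc b a ε) (hb : Measurable b) {P : ℝ} (hP : 1 < P) {δ : ℝ} (hδ : |δ * P| ≤ ε)
    (G : (Fin n → ℝ) → ℝ≥0∞) (hG : Measurable G) (c : Fin n → ℝ) {r : ℝ} (hr : 0 < r) :
    (ee (-(δ * a c r)) * ((∫⁻ y in Metric.closedBall c r, G y) / volume (Metric.closedBall c r)))
        ^ ((1 + P) / 2) ≤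
      4 ^ ((1 + P) / 2) * ((∫⁻ y in Metric.closedBall c r, (G y * ee (-(δ * b y))) ^ ((1 + P) / 2)
        ∂(volume.withDensity fun y => ee (δ * P * b y))) /
        (volume.withDensity fun y => ee (δ * P * b y)) (Metric.closedBall c r)) := by
  set σ := (1 + P) / 2 with hσ
  have hσ1 : 1 < σ := by rw [hσ]; linarith
  have hσ0 : 0 < σ := by linarith
  set τ := (1 + P) / (P - 1) with hτ
  have hP1 : 0 < P - 1 := by linarith
  have hτ0 : 0 < τ := by rw [hτ]; positivity
  have hστ : σ.HolderConjugate τ := by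
    rw [Real.holderConjugate_iff]
    refine ⟨hσ1, ?_⟩
    rw [hσ, hτ]; field_simp; ring
  have hinv : 1 / τ = 1 - 1 / σ := by
    rw [hσ, hτ]; field_simp; ring
  set B := Metric.closedBall c r with hB
  set V := volume B with hV
  have hV0 : V ≠ 0 := pi_vol_ne_zero c hr
  have hVt : V ≠ ∞ := pi_vol_ne_top c r
  set μ := (volume : Measure (Fin n → ℝ)).withDensity fun y => ee (δ * P * b y) with hμ
  set A := a c r with hA
  have hw : Measurable fun y => ee (δ * P * b y) := ee_meas.comp (by fun_prop)
  have hu : Measurable fun y => ee (-(δ * b y)) := ee_meas.comp (by fun_prop)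
  set I := ∫⁻ y in B, (G y * ee (-(δ * b y))) ^ σ ∂μ with hI
  have hIeq : I = ∫⁻ y in B, (G y * ee (-(δ * b y)) * ee (δ * P / σ * b y)) ^ σ := by
    have hGu : Measurable fun y => (G y * ee (-(δ * b y))) ^ σ := (hG.mul hu).pow_const _
    rw [hI, hμ, setLIntegral_withDensity_eq_setLIntegral_mul _ hw hGu
      Metric.isClosed_closedBall.measurableSet]
    refine lintegral_congr fun y => ?_
    rw [Pi.mul_apply, ENNReal.mul_rpow_of_nonneg _ (ee (δ * P / σ * b y)) hσ0.le, ee_rpow, mul_comm]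
    congr 2; field_simp
  have hH : ∫⁻ y in B, G y ≤ I ^ (1 / σ) * (4 * ee (-(δ * A)) * V) ^ (1 / τ) *
      ee (0) := by
    rw [ee_zero, mul_one]
    have hm2 : Measurable fun y => ee ((δ - δ * P / σ) * b y) := ee_meas.comp (by fun_prop)
    have hm3 : Measurable fun y => ee (δ * P / σ * b y) := ee_meas.comp (by fun_prop)
    have := ENNReal.lintegral_mul_le_Lp_mul_Lq (volume.restrict B) hστ
      (f := fun y => G y * ee (-(δ * b y)) * ee (δ * P / σ * b y))
      (g := fun y => ee ((δ - δ * P / σ) * b y)) ((hG.mul hu).mul hm3).aemeasurable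
        hm2.aemeasurable
    rw [← hIeq] at this
    calc ∫⁻ y in B, G y = ∫⁻ y in B, ((fun y => G y * ee (-(δ * b y)) * ee (δ * P / σ * b y)) *
          fun y => ee ((δ - δ * P / σ) * b y)) y := by
          refine lintegral_congr fun y => ?_
          simp only [Pi.mul_apply]
          rw [mul_assoc, mul_assoc, ← ee_add, ← ee_add]
          rw [show -(δ * b y) + (δ * P / σ * b y + (δ - δ * P / σ) * b y) = 0 by ring, ee_zero,
            mul_one]
      _ ≤ _ := this
      _ ≤ _ := by
          gcongr I ^ (1 / σ) * ?_
          refine ENNReal.rpow_le_rpow ?_ (by positivity)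
          have hm4 : Measurable fun y => ee (-δ * (b y - A)) := ee_meas.comp (by fun_prop)
          calc ∫⁻ y in B, ee ((δ - δ * P / σ) * b y) ^ τ
              = ee (-(δ * A)) * ∫⁻ y in B, ee (-δ * (b y - A)) := by
                rw [← lintegral_const_mul _ hm4]
                refine lintegral_congr fun y => ?_
                rw [ee_rpow, ← ee_add]
                congr 1
                rw [hσ, hτ]
                field_simp
                ring
            _ ≤ ee (-(δ * A)) * (4 * V) := by
                refine mul_le_mul_right (h.signed ?_ c hr) _
                rw [abs_neg]
                rw [abs_mul] at hδ
                refine le_trans ?_ hδ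
                rw [abs_of_pos (by linarith : 0 < P)]
                nlinarith [abs_nonneg δ]
            _ = _ := by ring
  rw [ee_zero, mul_one] at hH
  have hup : μ B ≤ 4 * ee (δ * P * A) * V := weight_upper h hb hδ c hr
  calc (ee (-(δ * A)) * ((∫⁻ y in B, G y) / V)) ^ σ
      ≤ (ee (-(δ * A)) * ((I ^ (1 / σ) * (4 * ee (-(δ * A)) * V) ^ (1 / τ)) / V)) ^ σ := by
        refine ENNReal.rpow_le_rpow ?_ hσ0.le
        gcongr
    _ = I * (4 ^ (σ - 1) * (ee (-(δ * P * A)) * V⁻¹)) := by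
        rw [div_eq_mul_inv]
        simp only [ENNReal.mul_rpow_of_nonneg _ _ hσ0.le, ← ENNReal.rpow_mul]
        rw [show 1 / τ * σ = σ - 1 by rw [hinv]; field_simp]
        have hσ10 : 0 ≤ σ - 1 := by linarith
        simp only [ENNReal.mul_rpow_of_nonneg _ _ hσ10, ee_rpow]
        rw [one_div, inv_mul_cancel₀ hσ0.ne', ENNReal.rpow_one]
        have e1 : V ^ (σ - 1) * V⁻¹ ^ σ = V⁻¹ := by
          rw [ENNReal.inv_rpow, ← ENNReal.rpow_neg, ← ENNReal.rpow_add _ _ hV0 hVt,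
            show σ - 1 + -σ = -1 by ring, ENNReal.rpow_neg_one]
        have e2 : ee (-(δ * A) * σ) * ee (-(δ * A) * (σ - 1)) = ee (-(δ * P * A)) := by
          rw [← ee_add]; congr 1; rw [hσ]; ring
        rw [← e2]
        nth_rewrite 2 [← e1]
        ring
    _ ≤ I * (4 ^ (σ - 1) * (4 * (μ B)⁻¹)) := by
        gcongr I * (_ * ?_)
        have e3 : ee (-(δ * P * A)) = (ee (δ * P * A))⁻¹ := by
          refine ENNReal.eq_inv_of_mul_eq_one_left ?_
          rw [← ee_add, neg_add_cancel, ee_zero]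
        rw [e3, ← ENNReal.mul_inv (Or.inl (ee_ne_zero _)) (Or.inl (ee_ne_top _)),
          ← div_eq_mul_inv, ENNReal.le_div_iff_mul_le, mul_comm, ← div_eq_mul_inv]
        · refine ENNReal.div_le_of_le_mul ?_
          rw [← mul_assoc]; exact hup
        · right; norm_num
        · right; norm_num
    _ = 4 ^ σ * (I / μ B) := by
        have : (4 : ℝ≥0∞) ^ σ = 4 ^ (σ - 1) * 4 := by
          nth_rewrite 3 [← ENNReal.rpow_one 4]
          rw [← ENNReal.rpow_add _ _ (by norm_num) (by norm_num), sub_add_cancel]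
        rw [this, div_eq_mul_inv]; ring

theorem weighted_max {n : ℕ} {b : (Fin n → ℝ) → ℝ} {a : (Fin n → ℝ) → ℝ → ℝ} {ε : ℝ} {K : ℝ≥0}
    (hK : OscBound b a K)
    (h : ExpOsc b a ε) (hb : Measurable b) {P : ℝ} (hP : 1 < P) {δ : ℝ} (hδ : |δ * P| ≤ ε) :
    ∃ C : ℝ≥0∞, C ≠ ∞ ∧ ∀ (ι : Type) (_ : Countable ι) (c : ι → Fin n → ℝ) (r : ι → ℝ),
      (∀ i, 0 < r i) → ∀ G : (Fin n → ℝ) → ℝ≥0∞, Measurable G →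
      ∫⁻ x, (⨆ i, (Metric.closedBall (c i) (r i)).indicator (fun x =>
        (ee (δ * (b x - a (c i) (r i))) * ((∫⁻ y in Metric.closedBall (c i) (r i), G y) /
          volume (Metric.closedBall (c i) (r i)))) ^ P) x) ≤ C * ∫⁻ x, G x ^ P := by
  set σ := (1 + P) / 2 with hσ
  have hσ1 : 1 < σ := by rw [hσ]; linarith
  have hσ0 : 0 < σ := by linarith
  have hP0 : 0 < P := by linarith
  have hPσ : 1 < P / σ := by rw [lt_div_iff₀ hσ0, hσ]; linarith
  set D : ℝ≥0∞ := 16 * 5 ^ n * ee (ε * ((K + 5 ^ n * K : ℝ≥0) : ℝ)) with hD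
  have hDt : D ≠ ∞ := by
    rw [hD]
    exact ENNReal.mul_ne_top (ENNReal.mul_ne_top (by norm_num)
      (ENNReal.pow_ne_top (by norm_num))) (ee_ne_top _)
  set C0 := ENNReal.ofReal (P / σ) * 2 ^ (P / σ) * D * ENNReal.ofReal (P / σ - 1)⁻¹ with hC0
  have hw : Measurable fun y => ee (δ * P * b y) := ee_meas.comp (by fun_prop)
  have hu : Measurable fun y => ee (-(δ * b y)) := ee_meas.comp (by fun_prop)
  refine ⟨4 ^ P * C0, ?_, ?_⟩
  · refine ENNReal.mul_ne_top (ENNReal.rpow_ne_top_of_nonneg hP0.le (by norm_num)) ?_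
    exact ENNReal.mul_ne_top (ENNReal.mul_ne_top (ENNReal.mul_ne_top ENNReal.ofReal_ne_top
      (ENNReal.rpow_ne_top_of_nonneg (by positivity) (by norm_num))) hDt) ENNReal.ofReal_ne_top
  intro ι _ c r hr G hG
  set μ := (volume : Measure (Fin n → ℝ)).withDensity fun y => ee (δ * P * b y) with hμ
  set F : (Fin n → ℝ) → ℝ≥0∞ := fun y => (G y * ee (-(δ * b y))) ^ σ with hF
  have hFm : Measurable F := (hG.mul hu).pow_const _
  have hfin : ∀ x r, μ (Metric.closedBall x r) ≠ ∞ := by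
    intro x r
    by_cases hr : 0 < r
    · refine ne_top_of_le_ne_top ?_ (weight_upper h hb hδ x hr)
      exact ENNReal.mul_ne_top (ENNReal.mul_ne_top (by norm_num) (ee_ne_top _)) (pi_vol_ne_top _ _)
    · have h1 : μ (Metric.closedBall x r) ≤ μ (Metric.closedBall x 1) :=
        measure_mono (Metric.closedBall_subset_closedBall (by linarith))
      refine ne_top_of_le_ne_top ?_ (h1.trans (weight_upper h hb hδ x one_pos))
      exact ENNReal.mul_ne_top (ENNReal.mul_ne_top (by norm_num) (ee_ne_top _)) (pi_vol_ne_top _ _)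
  have hstrong := ballMax_strong μ D (fun x r hr => weight_doubling hK h hb hδ x r hr) hfin c r hr
    (P / σ) hPσ F hFm
  have hFP : ∫⁻ x, F x ^ (P / σ) ∂μ = ∫⁻ x, G x ^ P := by
    rw [hμ, lintegral_withDensity_eq_lintegral_mul _ hw (hFm.pow_const _)]
    refine lintegral_congr fun y => ?_
    simp only [hF, Pi.mul_apply]
    rw [← ENNReal.rpow_mul, mul_div_cancel₀ _ hσ0.ne', ENNReal.mul_rpow_of_nonneg _ _ hP0.le,
      ee_rpow, mul_comm, mul_assoc, ← ee_add]
    rw [show -(δ * b y) * P + δ * P * b y = 0 by ring, ee_zero, mul_one]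
  calc _ ≤ ∫⁻ x, ee (δ * P * b x) * (4 ^ P * ballMax μ c r F x ^ (P / σ)) := by
        refine lintegral_mono fun x => iSup_le fun i => ?_
        by_cases hx : x ∈ Metric.closedBall (c i) (r i)
        · rw [indicator_of_mem hx]
          have h1 := holder_avg h hb hP hδ G hG (c i) (hr i)
          rw [← hσ, ← hμ] at h1
          have h2 : (∫⁻ y in Metric.closedBall (c i) (r i), (G y * ee (-(δ * b y))) ^ σ ∂μ) /
              μ (Metric.closedBall (c i) (r i)) ≤ ballMax μ c r F x := by
            refine le_iSup_of_le i ?_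
            rw [indicator_of_mem hx]
          have h3 := ENNReal.rpow_le_rpow (h1.trans (mul_le_mul_right h2 _))
            (by positivity : 0 ≤ P / σ)
          rw [← ENNReal.rpow_mul, mul_div_cancel₀ _ hσ0.ne',
            ENNReal.mul_rpow_of_nonneg _ _ (by positivity : 0 ≤ P / σ), ← ENNReal.rpow_mul,
            mul_div_cancel₀ _ hσ0.ne'] at h3
          refine le_trans (le_of_eq ?_) (mul_le_mul_right h3 _)
          rw [show δ * (b x - a (c i) (r i)) = δ * b x + -(δ * a (c i) (r i)) by ring, ee_add,
            mul_assoc, ENNReal.mul_rpow_of_nonneg _ _ hP0.le, ee_rpow]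
          congr 2; ring
        · rw [indicator_of_notMem hx]; exact zero_le
    _ = 4 ^ P * ∫⁻ x, ballMax μ c r F x ^ (P / σ) ∂μ := by
        rw [hμ, lintegral_withDensity_eq_lintegral_mul _ hw
          ((ballMax_meas _ c r F).pow_const _), ← lintegral_const_mul _
          (hw.mul ((ballMax_meas _ c r F).pow_const _))]
        refine lintegral_congr fun x => ?_
        simp only [Pi.mul_apply]; ring
    _ ≤ 4 ^ P * (C0 * ∫⁻ x, F x ^ (P / σ) ∂μ) := by gcongr 4 ^ P * ?_
    _ = _ := by rw [hFP, ← mul_assoc]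

theorem weighted_max_abs {n : ℕ} {b : (Fin n → ℝ) → ℝ} {a : (Fin n → ℝ) → ℝ → ℝ} {ε : ℝ}
    {K : ℝ≥0} (hK : OscBound b a K)
    (h : ExpOsc b a ε) (hb : Measurable b) {P : ℝ} (hP : 1 < P) {δ : ℝ} (hδ : |δ * P| ≤ ε) :
    ∃ C : ℝ≥0∞, C ≠ ∞ ∧ ∀ (ι : Type) (_ : Countable ι) (c : ι → Fin n → ℝ) (r : ι → ℝ),
      (∀ i, 0 < r i) → ∀ G : (Fin n → ℝ) → ℝ≥0∞, Measurable G →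
      ∫⁻ x, (⨆ i, (Metric.closedBall (c i) (r i)).indicator (fun x =>
        (ee (δ * |b x - a (c i) (r i)|) * ((∫⁻ y in Metric.closedBall (c i) (r i), G y) /
          volume (Metric.closedBall (c i) (r i)))) ^ P) x) ≤ C * ∫⁻ x, G x ^ P := by
  obtain ⟨C1, hC1, h1⟩ := weighted_max hK h hb hP hδ
  obtain ⟨C2, hC2, h2⟩ := weighted_max hK h hb hP (δ := -δ) (by rwa [neg_mul, abs_neg])
  refine ⟨C1 + C2, ENNReal.add_ne_top.2 ⟨hC1, hC2⟩, fun ι hι c r hr G hG => ?_⟩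
  rw [add_mul]
  refine le_trans ?_ (add_le_add (h1 ι hι c r hr G hG) (h2 ι hι c r hr G hG))
  rw [← lintegral_add_left]
  · refine lintegral_mono fun x => iSup_le fun i => ?_
    by_cases hx : x ∈ Metric.closedBall (c i) (r i)
    · rw [indicator_of_mem hx]
      rcases abs_cases (b x - a (c i) (r i)) with ⟨he, _⟩ | ⟨he, _⟩
      · refine le_add_right (le_iSup_of_le i ?_)
        rw [indicator_of_mem hx, he]
      · refine le_add_left (le_iSup_of_le i ?_)
        rw [indicator_of_mem hx, he, neg_mul, mul_neg]
    · rw [indicator_of_notMem hx]; exact zero_le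
  · refine Measurable.iSup fun i => Measurable.indicator ?_
      Metric.isClosed_closedBall.measurableSet
    refine Measurable.pow_const (Measurable.mul_const (ee_meas.comp ?_) _) _
    fun_prop


/-! ### Transfer to Euclidean space -/

theorem Cube.set_eq {n : ℕ} (Q : Cube n) :
    Q.set = (WithLp.ofLp : RSp n → Fin n → ℝ) ⁻¹' Metric.closedBall (WithLp.ofLp Q.c) Q.r := by
  ext y
  rw [mem_preimage, Metric.mem_closedBall, dist_pi_le_iff Q.r_pos.le]
  simp only [Cube.set, mem_ofPred_eq, Real.dist_eq]

theorem ofLp_mp (n : ℕ) : MeasurePreserving (WithLp.ofLp : RSp n → Fin n → ℝ) volume volume :=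
  PiLp.volume_preserving_ofLp (Fin n)

theorem ofLp_emb (n : ℕ) : MeasurableEmbedding (WithLp.ofLp : RSp n → Fin n → ℝ) :=
  (MeasurableEquiv.toLp 2 (Fin n → ℝ)).symm.measurableEmbedding

theorem Cube.meas {n : ℕ} (Q : Cube n) : MeasurableSet Q.set := by
  rw [Q.set_eq]
  exact (ofLp_emb n).measurable Metric.isClosed_closedBall.measurableSet

theorem Cube.vol {n : ℕ} (Q : Cube n) :
    volume Q.set = volume (Metric.closedBall (WithLp.ofLp Q.c) Q.r) := by
  rw [Q.set_eq]
  exact (ofLp_mp n).measure_preimage Metric.isClosed_closedBall.nullMeasurableSet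

theorem Cube.vol_eq {n : ℕ} (Q : Cube n) :
    volume Q.set = ENNReal.ofReal ((2 * Q.r) ^ n) := by
  rw [Q.vol, Real.volume_pi_closedBall _ Q.r_pos.le]; simp

theorem Cube.vol_ne_zero {n : ℕ} (Q : Cube n) : volume Q.set ≠ 0 := by
  rw [Q.vol]; exact pi_vol_ne_zero _ Q.r_pos

theorem Cube.vol_ne_top {n : ℕ} (Q : Cube n) : volume Q.set ≠ ∞ := by
  rw [Q.vol]; exact pi_vol_ne_top _ _

theorem Cube.lint {n : ℕ} (Q : Cube n) (g : RSp n → ℝ≥0∞) :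
    ∫⁻ y in Q.set, g y =
      ∫⁻ y in Metric.closedBall (WithLp.ofLp Q.c) Q.r, g (WithLp.toLp 2 y) := by
  rw [Q.set_eq, ← (ofLp_mp n).setLIntegral_comp_preimage_emb (ofLp_emb n)]

theorem lint_transfer {n : ℕ} (g : RSp n → ℝ≥0∞) :
    ∫⁻ y, g y = ∫⁻ y, g (WithLp.toLp 2 y) := by
  rw [← (ofLp_mp n).lintegral_comp_emb (ofLp_emb n)]

/-- All that is needed about functions of bounded mean oscillation. -/
theorem bmo_package {n : ℕ} {b : RSp n → ℝ} (hb : IsBMO b) :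
    ∃ b0 : RSp n → ℝ, Measurable b0 ∧ b =ᵐ[volume] b0 ∧ ∃ ε : ℝ, 0 < ε ∧
      (∀ Q : Cube n, ∫⁻ y in Q.set, ee (ε * |b0 y - cubeAvg Q b|) ≤ 4 * volume Q.set) ∧
      ∀ P : ℝ, 1 < P → ∀ δ : ℝ, |δ * P| ≤ ε → ∃ C : ℝ≥0∞, C ≠ ∞ ∧
        ∀ (ι : Type) (_ : Countable ι) (Q : ι → Cube n) (G : RSp n → ℝ≥0∞), Measurable G →
        ∫⁻ x, (⨆ i, (Q i).set.indicator (fun x =>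
          (ee (δ * |b0 x - cubeAvg (Q i) b|) *
            ((∫⁻ y in (Q i).set, G y) / volume (Q i).set)) ^ P) x) ≤ C * ∫⁻ x, G x ^ P := by
  obtain ⟨hli, hK⟩ := hb
  set b0 := hli.aestronglyMeasurable.mk with hb0
  have hb0m : Measurable b0 := hli.aestronglyMeasurable.stronglyMeasurable_mk.measurable
  have hae : b =ᵐ[volume] b0 := hli.aestronglyMeasurable.ae_eq_mk
  have htoLp : Measurable (WithLp.toLp 2 : (Fin n → ℝ) → RSp n) :=
    (MeasurableEquiv.toLp 2 (Fin n → ℝ)).measurable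
  set b' : (Fin n → ℝ) → ℝ := fun y => b0 (WithLp.toLp 2 y) with hb'
  have hb'm : Measurable b' := hb0m.comp htoLp
  set a : (Fin n → ℝ) → ℝ → ℝ := fun c r =>
    if h : 0 < r then cubeAvg ⟨WithLp.toLp 2 c, r, h⟩ b else 0 with ha
  have haQ : ∀ Q : Cube n, a (WithLp.ofLp Q.c) Q.r = cubeAvg Q b := by
    intro Q
    simp only [ha, dif_pos Q.r_pos]
  set K := (bmoNorm b).toNNReal with hKdef
  have hosc : OscBound b' a K := by
    intro c r hr
    set Q : Cube n := ⟨WithLp.toLp 2 c, r, hr⟩ with hQ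
    have h1 : (volume Q.set)⁻¹ * ∫⁻ x in Q.set, ‖b x - cubeAvg Q b‖₊ ≤ K := by
      rw [hKdef, ENNReal.coe_toNNReal hK.ne]
      exact le_iSup (fun Q : Cube n => (volume Q.set)⁻¹ * ∫⁻ x in Q.set, ‖b x - cubeAvg Q b‖₊) Q
    have h2 : ∫⁻ x in Q.set, ‖b x - cubeAvg Q b‖₊ ≤ K * volume Q.set := by
      rwa [mul_comm, ← div_eq_mul_inv, ENNReal.div_le_iff Q.vol_ne_zero Q.vol_ne_top] at h1
    have h3 : ∫⁻ x in Q.set, ‖b0 x - cubeAvg Q b‖ₑ ≤ K * volume Q.set := by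
      refine le_trans (le_of_eq ?_) h2
      refine lintegral_congr_ae ?_
      filter_upwards [ae_restrict_of_ae hae] with x hx
      rw [hx]; rfl
    rw [Q.lint, Q.vol, ← haQ] at h3
    exact h3
  obtain ⟨ε, hε, hJN⟩ := john_nirenberg hosc hb'm
  have hexp : ExpOsc b' a ε := hJN
  refine ⟨b0, hb0m, hae, ε, hε, ?_, ?_⟩
  · intro Q
    rw [Q.lint, Q.vol, ← haQ]
    exact hexp _ _ Q.r_pos
  · intro P hP δ hδ
    obtain ⟨C, hC, hw⟩ := weighted_max_abs hosc hexp hb'm hP hδ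
    refine ⟨C, hC, fun ι hι Q G hG => ?_⟩
    have := hw ι hι (fun i => WithLp.ofLp (Q i).c) (fun i => (Q i).r) (fun i => (Q i).r_pos)
      (fun y => G (WithLp.toLp 2 y)) (hG.comp htoLp)
    rw [lint_transfer, lint_transfer (fun x => G x ^ P)]
    refine le_trans (le_of_eq ?_) this
    refine lintegral_congr fun x => ?_
    refine iSup_congr fun i => ?_
    rw [(Q i).lint, (Q i).vol, ← haQ, (Q i).set_eq]
    rfl

/-- The countable family of rational cubes. -/
abbrev RIdx (n : ℕ) := (Fin n → ℚ) × {q : ℚ // 0 < q}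

/-- Cube with rational data. -/
noncomputable def ratCube {n : ℕ} (i : RIdx n) : Cube n where
  c := WithLp.toLp 2 fun j => (i.1 j : ℝ)
  r := ((i.2 : ℚ) : ℝ)
  r_pos := by exact_mod_cast i.2.2

theorem exists_ratCube {n : ℕ} (Q : Cube n) :
    ∃ i : RIdx n, Q.set ⊆ (ratCube i).set ∧ volume (ratCube i).set ≤ 2 ^ n * volume Q.set := by
  have hr := Q.r_pos
  have h1 : ∀ j, ∃ q : ℚ, Q.c j - Q.r / 4 < q ∧ (q : ℝ) < Q.c j + Q.r / 4 := fun j =>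
    exists_rat_btwn (by linarith)
  choose c hc1 hc2 using h1
  obtain ⟨ρ, hρ1, hρ2⟩ : ∃ q : ℚ, 5 / 4 * Q.r < q ∧ (q : ℝ) < 2 * Q.r :=
    exists_rat_btwn (by linarith)
  have hρ : 0 < ρ := by
    have : (0 : ℝ) < ρ := by linarith
    exact_mod_cast this
  refine ⟨⟨c, ⟨ρ, hρ⟩⟩, ?_, ?_⟩
  · intro y hy j
    have h2 := abs_le.1 (hy j)
    have h3 := hc1 j
    have h4 := hc2 j
    simp only [ratCube]
    rw [abs_le]
    constructor <;> linarith
  · rw [Cube.vol_eq, Cube.vol_eq]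
    simp only [ratCube]
    have : (2 : ℝ≥0∞) ^ n = ENNReal.ofReal (2 ^ n) := by
      rw [ENNReal.ofReal_pow (by norm_num)]; simp
    rw [this, ← ENNReal.ofReal_mul (by positivity), ← mul_pow]
    refine ENNReal.ofReal_le_ofReal ?_
    have : (0 : ℝ) < ρ := by exact_mod_cast hρ
    gcongr

theorem fracMaximalComm_le_rat {n : ℕ} {α : ℝ} (hα : α / n ≤ 1) (b f : RSp n → ℝ) (x : RSp n) :
    fracMaximalComm α b f x ≤ (2 ^ n) ^ (1 - α / n) * ⨆ i : RIdx n, (ratCube i).set.indicator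
      (fun x => volume (ratCube i).set ^ (α / (n : ℝ) - 1) *
        ∫⁻ y in (ratCube i).set, (‖b x - b y‖₊ : ℝ≥0∞) * (‖f y‖₊ : ℝ≥0∞)) x := by
  refine iSup_le fun Q => iSup_le fun hx => ?_
  obtain ⟨i, hi1, hi2⟩ := exists_ratCube Q
  have h1 : (2 ^ n * volume Q.set) ^ (α / (n : ℝ) - 1) ≤
      volume (ratCube i).set ^ (α / (n : ℝ) - 1) := by
    rw [← neg_sub 1 (α / (n : ℝ)), ENNReal.rpow_neg, ENNReal.rpow_neg]
    exact ENNReal.inv_le_inv.2 (ENNReal.rpow_le_rpow hi2 (by linarith))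
  have h2 : volume Q.set ^ (α / (n : ℝ) - 1) =
      (2 ^ n) ^ (1 - α / n) * (2 ^ n * volume Q.set) ^ (α / (n : ℝ) - 1) := by
    have e0 : (2 : ℝ≥0∞) ^ n ≠ 0 := by simp
    have et : (2 : ℝ≥0∞) ^ n ≠ ∞ := ENNReal.pow_ne_top (by norm_num)
    rw [ENNReal.mul_rpow_of_ne_zero e0 Q.vol_ne_zero, ← mul_assoc, ← ENNReal.rpow_add _ _ e0 et]
    simp
  calc _ ≤ (2 ^ n) ^ (1 - α / n) * (volume (ratCube i).set ^ (α / (n : ℝ) - 1) *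
        ∫⁻ y in (ratCube i).set, (‖b x - b y‖₊ : ℝ≥0∞) * (‖f y‖₊ : ℝ≥0∞)) := by
        rw [h2, mul_assoc]
        exact mul_le_mul_right (mul_le_mul' h1 (lintegral_mono_set hi1)) _
    _ ≤ _ := by
        refine mul_le_mul_right (le_iSup_of_le i ?_) _
        rw [indicator_of_mem (hi1 hx)]


/-! ### The pointwise bound -/

theorem comm_upper {n : ℕ} (α : ℝ) (b f : RSp n → ℝ) (hf : AEMeasurable f) (x : RSp n) :
    fracMaximal α (fun y => b y * f y) x ≤
      fracMaximalComm α b f x + ‖b x‖₊ * fracMaximal α f x := by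
  refine iSup_le fun Q => iSup_le fun hx => ?_
  have hm : AEMeasurable (fun y => (‖b x‖₊ : ℝ≥0∞) * (‖f y‖₊ : ℝ≥0∞)) (volume.restrict Q.set) :=
    (hf.restrict.nnnorm.coe_nnreal_ennreal).const_mul _
  calc volume Q.set ^ (α / (n : ℝ) - 1) * ∫⁻ y in Q.set, (‖b y * f y‖₊ : ℝ≥0∞)
      ≤ volume Q.set ^ (α / (n : ℝ) - 1) * ∫⁻ y in Q.set, ((‖b x - b y‖₊ : ℝ≥0∞) * (‖f y‖₊ : ℝ≥0∞)
          + (‖b x‖₊ : ℝ≥0∞) * (‖f y‖₊ : ℝ≥0∞)) := by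
        refine mul_le_mul_right (lintegral_mono fun y => ?_) _
        have : ‖b y * f y‖₊ ≤ ‖b x - b y‖₊ * ‖f y‖₊ + ‖b x‖₊ * ‖f y‖₊ := by
          rw [nnnorm_mul, ← add_mul]
          gcongr
          calc ‖b y‖₊ = ‖b x - (b x - b y)‖₊ := by congr 1; ring
            _ ≤ ‖b x‖₊ + ‖b x - b y‖₊ := nnnorm_sub_le _ _
            _ = _ := add_comm _ _
        have h' := ENNReal.coe_le_coe.2 this
        push_cast at h'
        exact h'
    _ = volume Q.set ^ (α / (n : ℝ) - 1) * (∫⁻ y in Q.set, (‖b x - b y‖₊ : ℝ≥0∞) * (‖f y‖₊ : ℝ≥0∞))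
          + ‖b x‖₊ * (volume Q.set ^ (α / (n : ℝ) - 1) * ∫⁻ y in Q.set, (‖f y‖₊ : ℝ≥0∞)) := by
        rw [lintegral_add_right' _ hm, lintegral_const_mul'' _
          (hf.restrict.nnnorm.coe_nnreal_ennreal)]
        ring
    _ ≤ _ := by
        refine add_le_add (le_iSup₂_of_le Q hx le_rfl) (mul_le_mul_right ?_ _)
        exact le_iSup₂_of_le Q hx le_rfl

theorem comm_lower {n : ℕ} (α : ℝ) (b f : RSp n → ℝ) (hb : AEMeasurable b) (hf : AEMeasurable f)
    (x : RSp n) :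
    ‖b x‖₊ * fracMaximal α f x ≤
      fracMaximalComm α b f x + fracMaximal α (fun y => b y * f y) x := by
  rw [fracMaximal, ENNReal.mul_iSup]
  refine iSup_le fun Q => ?_
  rw [ENNReal.mul_iSup]
  refine iSup_le fun hx => ?_
  have hfm : AEMeasurable (fun y => (‖f y‖₊ : ℝ≥0∞)) (volume.restrict Q.set) :=
    hf.restrict.nnnorm.coe_nnreal_ennreal
  have hm : AEMeasurable (fun y => (‖b y * f y‖₊ : ℝ≥0∞)) (volume.restrict Q.set) :=
    ((hb.mul hf).restrict.nnnorm.coe_nnreal_ennreal)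
  calc ‖b x‖₊ * (volume Q.set ^ (α / (n : ℝ) - 1) * ∫⁻ y in Q.set, (‖f y‖₊ : ℝ≥0∞))
      = volume Q.set ^ (α / (n : ℝ) - 1) * ∫⁻ y in Q.set, ((‖b x‖₊ : ℝ≥0∞) * (‖f y‖₊ : ℝ≥0∞)) := by
        rw [lintegral_const_mul'' _ hfm]; ring
    _ ≤ volume Q.set ^ (α / (n : ℝ) - 1) * ∫⁻ y in Q.set, ((‖b x - b y‖₊ : ℝ≥0∞) * (‖f y‖₊ : ℝ≥0∞)
          + (‖b y * f y‖₊ : ℝ≥0∞)) := by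
        refine mul_le_mul_right (lintegral_mono fun y => ?_) _
        have : ‖b x‖₊ * ‖f y‖₊ ≤ ‖b x - b y‖₊ * ‖f y‖₊ + ‖b y * f y‖₊ := by
          rw [nnnorm_mul, ← add_mul]
          gcongr
          calc ‖b x‖₊ = ‖(b x - b y) + b y‖₊ := by congr 1; ring
            _ ≤ ‖b x - b y‖₊ + ‖b y‖₊ := nnnorm_add_le _ _
        have h' := ENNReal.coe_le_coe.2 this
        push_cast at h'
        exact h'
    _ = volume Q.set ^ (α / (n : ℝ) - 1) * (∫⁻ y in Q.set, (‖b x - b y‖₊ : ℝ≥0∞) * (‖f y‖₊ : ℝ≥0∞))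
          + volume Q.set ^ (α / (n : ℝ) - 1) * ∫⁻ y in Q.set, (‖b y * f y‖₊ : ℝ≥0∞) := by
        rw [lintegral_add_right' _ hm, mul_add]
    _ ≤ _ := add_le_add (le_iSup₂_of_le Q hx le_rfl) (le_iSup₂_of_le Q hx le_rfl)

theorem comm_pointwise {n : ℕ} (α : ℝ) (b f : RSp n → ℝ) (hb : AEMeasurable b)
    (hbpos : ∀ x, 0 ≤ b x) (hf : AEMeasurable f) (x : RSp n) :
    ENNReal.ofReal |fracMaximalCommutator α b f x| ≤ fracMaximalComm α b f x := by
  have h1 := comm_upper α b f hf x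
  have h2 := comm_lower α b f hb hf x
  unfold fracMaximalCommutator
  set X := fracMaximal α (fun y => b y * f y) x
  set Y := fracMaximal α f x
  set Z := fracMaximalComm α b f x
  have hβ : b x = (‖b x‖₊ : ℝ) := by
    rw [coe_nnnorm, Real.norm_of_nonneg (hbpos x)]
  set β := ‖b x‖₊
  rw [hβ]
  by_cases hZ : Z = ∞
  · rw [hZ]; exact le_top
  have hm : (β : ℝ) * Y.toReal = ((β : ℝ≥0∞) * Y).toReal := by simp
  rw [hm]
  by_cases hX : X = ∞
  · have : (β : ℝ≥0∞) * Y = ∞ := by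
      by_contra hc
      rw [hX] at h1
      exact (ENNReal.add_ne_top.2 ⟨hZ, hc⟩) (top_le_iff.1 h1)
    rw [hX, this]; simp
  · have hY : (β : ℝ≥0∞) * Y ≠ ∞ := fun hc => by
      rw [hc] at h2
      exact (ENNReal.add_ne_top.2 ⟨hZ, hX⟩) (top_le_iff.1 h2)
    rw [ENNReal.ofReal_le_iff_le_toReal hZ]
    have h1' := ENNReal.toReal_mono (ENNReal.add_ne_top.2 ⟨hZ, hY⟩) h1
    have h2' := ENNReal.toReal_mono (ENNReal.add_ne_top.2 ⟨hZ, hX⟩) h2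
    rw [ENNReal.toReal_add hZ hY] at h1'
    rw [ENNReal.toReal_add hZ hX] at h2'
    rw [abs_le]; constructor <;> linarith


/-! ### Generalized inverses -/

/-- Real-valued generalized inverse. -/
noncomputable def Fi {n : ℕ} (φ : RSp n → ℝ≥0 → ℝ≥0∞) (x : RSp n) (t : ℝ) : ℝ :=
  (phiInv φ x (ENNReal.ofReal t)).toReal

section
variable {n : ℕ} {φ : RSp n → ℝ≥0 → ℝ≥0∞}

theorem phiInv_ne_top (hφ : IsWeakPhi Set.univ φ) (x : RSp n) {t : ℝ≥0∞} (ht : t ≠ ∞) :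
    phiInv φ x t ≠ ∞ := by
  have h := hφ.lim_top x (mem_univ x)
  have h2 := (h.eventually (lt_mem_nhds (lt_top_iff_ne_top.2 ht))).exists
  obtain ⟨u, hu⟩ := h2
  refine ne_top_of_le_ne_top (ENNReal.coe_ne_top (r := u)) (sInf_le ⟨u, ?_, rfl⟩)
  exact hu.le

theorem phiInv_lt (x : RSp n) {t : ℝ≥0∞} {u : ℝ≥0} (h : (u : ℝ≥0∞) < phiInv φ x t) :
    φ x u < t := by
  by_contra hc
  have h1 : phiInv φ x t ≤ u := sInf_le ⟨u, not_lt.1 hc, rfl⟩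
  exact absurd h1 (not_le.2 h)

theorem le_phiInv (hφ : IsWeakPhi Set.univ φ) (x : RSp n) {t : ℝ≥0∞} {u : ℝ≥0} (h : φ x u < t) :
    (u : ℝ≥0∞) ≤ phiInv φ x t := by
  refine le_sInf ?_
  rintro _ ⟨v, hv, rfl⟩
  by_contra hc
  have h1 : v < u := ENNReal.coe_lt_coe.1 (not_le.1 hc)
  exact absurd (hv.trans (hφ.mono x (mem_univ x) h1.le)) (not_le.2 h)

theorem phiInv_pos (hφ : IsWeakPhi Set.univ φ) (x : RSp n) {t : ℝ≥0∞} (ht : 0 < t) :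
    0 < phiInv φ x t := by
  have h := hφ.lim_zero x (mem_univ x)
  have h2 := h.eventually (gt_mem_nhds ht)
  have h3 := (h2.and self_mem_nhdsWithin).exists
  obtain ⟨u, hu, hu0⟩ := h3
  refine lt_of_lt_of_le ?_ (le_phiInv hφ x hu)
  have : 0 < u := hu0
  exact_mod_cast this

theorem phiInv_mono (x : RSp n) {t s : ℝ≥0∞} (h : t ≤ s) : phiInv φ x t ≤ phiInv φ x s := by
  refine sInf_le_sInf (image_mono ?_)
  intro u hu
  exact h.trans hu

theorem Fi_coe (hφ : IsWeakPhi Set.univ φ) (x : RSp n) (t : ℝ) :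
    ENNReal.ofReal (Fi φ x t) = phiInv φ x (ENNReal.ofReal t) :=
  ENNReal.ofReal_toReal (phiInv_ne_top hφ x ENNReal.ofReal_ne_top)

theorem Fi_pos (hφ : IsWeakPhi Set.univ φ) (x : RSp n) {t : ℝ} (ht : 0 < t) : 0 < Fi φ x t :=
  ENNReal.toReal_pos (phiInv_pos hφ x (ENNReal.ofReal_pos.2 ht)).ne'
    (phiInv_ne_top hφ x ENNReal.ofReal_ne_top)

theorem Fi_mono (hφ : IsWeakPhi Set.univ φ) (x : RSp n) {t s : ℝ} (h : t ≤ s) :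
    Fi φ x t ≤ Fi φ x s :=
  ENNReal.toReal_mono (phiInv_ne_top hφ x ENNReal.ofReal_ne_top)
    (phiInv_mono x (ENNReal.ofReal_le_ofReal h))

theorem Fi_lt (hφ : IsWeakPhi Set.univ φ) (x : RSp n) {t : ℝ} {u : ℝ≥0} (h : (u : ℝ) < Fi φ x t) :
    φ x u < ENNReal.ofReal t := by
  refine phiInv_lt x ?_
  rw [← Fi_coe hφ, ← ENNReal.ofReal_coe_nnreal]
  exact (ENNReal.ofReal_lt_ofReal_iff_of_nonneg u.2).2 h

theorem le_Fi (hφ : IsWeakPhi Set.univ φ) (x : RSp n) {t : ℝ} {u : ℝ≥0}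
    (h : φ x u < ENNReal.ofReal t) : (u : ℝ) ≤ Fi φ x t := by
  have := ENNReal.toReal_mono (phiInv_ne_top hφ x ENNReal.ofReal_ne_top) (le_phiInv hφ x h)
  rwa [ENNReal.coe_toReal] at this

theorem le_of_Fi_lt (hφ : IsWeakPhi Set.univ φ) (x : RSp n) {t : ℝ} {u : ℝ≥0}
    (h : Fi φ x t < u) : ENNReal.ofReal t ≤ φ x u := by
  by_contra hc
  exact absurd (le_Fi hφ x (not_le.1 hc)) (not_le.2 h)

theorem Fi_le (hφ : IsWeakPhi Set.univ φ) (x : RSp n) {t : ℝ} {u : ℝ≥0}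
    (h : ENNReal.ofReal t ≤ φ x u) : Fi φ x t ≤ u := by
  by_contra hc
  exact absurd (Fi_lt hφ x (not_le.1 hc)) (not_lt.2 h)

theorem inc_scale {x : RSp n} {p : ℝ} (hp : 0 < p) {L : ℝ≥0} (hL : 1 ≤ L)
    (h : ∀ s t : ℝ≥0, 0 < s → s < t →
      φ x s / (s : ℝ≥0∞) ^ p ≤ (L : ℝ≥0∞) * (φ x t / (t : ℝ≥0∞) ^ p))
    {u ρ : ℝ≥0} (hu : 0 < u) (hρ : 1 ≤ ρ) : (ρ : ℝ≥0∞) ^ p * φ x u ≤ L * φ x (ρ * u) := by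
  rcases hρ.eq_or_lt with rfl | hρ1
  · simp only [ENNReal.coe_one, ENNReal.one_rpow, one_mul]
    exact le_mul_of_one_le_left zero_le (by exact_mod_cast hL)
  have h1 := h u (ρ * u) hu (lt_mul_of_one_lt_left hu hρ1)
  have hu0 : (u : ℝ≥0∞) ^ p ≠ 0 := by
    simp [ENNReal.rpow_eq_zero_iff, hu.ne']
  have hut : (u : ℝ≥0∞) ^ p ≠ ∞ := ENNReal.rpow_ne_top_of_nonneg hp.le ENNReal.coe_ne_top
  have hρ0 : (ρ : ℝ≥0∞) ^ p ≠ 0 := by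
    simp [ENNReal.rpow_eq_zero_iff, (zero_lt_one.trans hρ1).ne']
  have hρt : (ρ : ℝ≥0∞) ^ p ≠ ∞ := ENNReal.rpow_ne_top_of_nonneg hp.le ENNReal.coe_ne_top
  rw [ENNReal.coe_mul, ENNReal.mul_rpow_of_nonneg _ _ hp.le] at h1
  have h2 := mul_le_mul_right h1 ((ρ : ℝ≥0∞) ^ p * (u : ℝ≥0∞) ^ p)
  have e1 : (ρ : ℝ≥0∞) ^ p * (u : ℝ≥0∞) ^ p * (φ x u / (u : ℝ≥0∞) ^ p) =
      (ρ : ℝ≥0∞) ^ p * φ x u := by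
    rw [mul_assoc, ENNReal.mul_div_cancel hu0 hut]
  have e2 : (ρ : ℝ≥0∞) ^ p * (u : ℝ≥0∞) ^ p * (L * (φ x (ρ * u) /
      ((ρ : ℝ≥0∞) ^ p * (u : ℝ≥0∞) ^ p))) = L * φ x (ρ * u) := by
    rw [mul_left_comm, ENNReal.mul_div_cancel (mul_ne_zero hρ0 hu0) (ENNReal.mul_ne_top hρt hut)]
  rwa [e1, e2] at h2

theorem dec_scale {x : RSp n} {p : ℝ} (hp : 0 < p) {L : ℝ≥0} (hL : 1 ≤ L)
    (h : ∀ s t : ℝ≥0, 0 < s → s < t →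
      φ x t / (t : ℝ≥0∞) ^ p ≤ (L : ℝ≥0∞) * (φ x s / (s : ℝ≥0∞) ^ p))
    {u ρ : ℝ≥0} (hu : 0 < u) (hρ : 1 ≤ ρ) : φ x (ρ * u) ≤ L * (ρ : ℝ≥0∞) ^ p * φ x u := by
  rcases hρ.eq_or_lt with rfl | hρ1
  · simp only [ENNReal.coe_one, ENNReal.one_rpow, one_mul, mul_one]
    exact le_mul_of_one_le_left zero_le (by exact_mod_cast hL)
  have h1 := h u (ρ * u) hu (lt_mul_of_one_lt_left hu hρ1)
  have hu0 : (u : ℝ≥0∞) ^ p ≠ 0 := by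
    simp [ENNReal.rpow_eq_zero_iff, hu.ne']
  have hut : (u : ℝ≥0∞) ^ p ≠ ∞ := ENNReal.rpow_ne_top_of_nonneg hp.le ENNReal.coe_ne_top
  have hρ0 : (ρ : ℝ≥0∞) ^ p ≠ 0 := by
    simp [ENNReal.rpow_eq_zero_iff, (zero_lt_one.trans hρ1).ne']
  have hρt : (ρ : ℝ≥0∞) ^ p ≠ ∞ := ENNReal.rpow_ne_top_of_nonneg hp.le ENNReal.coe_ne_top
  rw [ENNReal.coe_mul, ENNReal.mul_rpow_of_nonneg _ _ hp.le] at h1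
  have h2 := mul_le_mul_right h1 ((ρ : ℝ≥0∞) ^ p * (u : ℝ≥0∞) ^ p)
  have e1 : (ρ : ℝ≥0∞) ^ p * (u : ℝ≥0∞) ^ p * (L * (φ x u / (u : ℝ≥0∞) ^ p)) =
      L * (ρ : ℝ≥0∞) ^ p * φ x u := by
    rw [mul_left_comm, mul_assoc ((ρ : ℝ≥0∞) ^ p), ENNReal.mul_div_cancel hu0 hut, mul_assoc]
  have e2 : (ρ : ℝ≥0∞) ^ p * (u : ℝ≥0∞) ^ p * (φ x (ρ * u) /
      ((ρ : ℝ≥0∞) ^ p * (u : ℝ≥0∞) ^ p)) = φ x (ρ * u) := by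
    rw [ENNReal.mul_div_cancel (mul_ne_zero hρ0 hu0) (ENNReal.mul_ne_top hρt hut)]
  rwa [e1, e2] at h2

theorem Fi_inc (hφ : IsWeakPhi Set.univ φ) {p : ℝ} (hp : 1 ≤ p) {L : ℝ≥0} (hL : 1 ≤ L) (x : RSp n)
    (h : ∀ s t : ℝ≥0, 0 < s → s < t →
      φ x s / (s : ℝ≥0∞) ^ p ≤ (L : ℝ≥0∞) * (φ x t / (t : ℝ≥0∞) ^ p))
    {t σ : ℝ} (ht : 0 < t) (hts : t ≤ σ) : Fi φ x σ ≤ L * (σ / t) ^ (1 / p) * Fi φ x t := by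
  have hp0 : 0 < p := by linarith
  have hσ : 0 < σ := by linarith
  have hL' : (1 : ℝ) ≤ L := by exact_mod_cast hL
  have h1st : 1 ≤ σ / t := (one_le_div ht).2 hts
  set ρ : ℝ := (L * (σ / t)) ^ (1 / p) with hρ
  have hρ1 : 1 ≤ ρ := Real.one_le_rpow (by nlinarith) (by positivity)
  have hρC : ρ ≤ L * (σ / t) ^ (1 / p) := by
    rw [hρ, Real.mul_rpow (by linarith) (by linarith)]
    gcongr
    calc (L : ℝ) ^ (1 / p) ≤ (L : ℝ) ^ (1 : ℝ) :=
          Real.rpow_le_rpow_of_exponent_le hL' (by rw [div_le_one hp0]; exact hp)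
      _ = L := Real.rpow_one _
  refine le_trans ?_ (mul_le_mul_of_nonneg_right hρC (Fi_pos hφ x ht).le)
  refine le_of_forall_pos_le_add fun e he => ?_
  have hF := Fi_pos hφ x ht
  set u : ℝ≥0 := (Fi φ x t + e / ρ).toNNReal with hu
  have hup : 0 < Fi φ x t + e / ρ := by positivity
  have hu' : (u : ℝ) = Fi φ x t + e / ρ := Real.coe_toNNReal _ hup.le
  have hρ' : ((ρ.toNNReal : ℝ≥0) : ℝ) = ρ := Real.coe_toNNReal _ (by linarith)
  have h2 : ENNReal.ofReal t ≤ φ x u := le_of_Fi_lt hφ x (by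
    rw [hu']; have : 0 < e / ρ := by positivity
    linarith)
  have h3 := inc_scale hp0 hL h (u := u) (ρ := ρ.toNNReal) (Real.toNNReal_pos.2 hup)
    (by rw [← Real.toNNReal_one]; exact Real.toNNReal_le_toNNReal hρ1)
  have h4 : ENNReal.ofReal σ ≤ φ x (ρ.toNNReal * u) := by
    have e1 : ((ρ.toNNReal : ℝ≥0) : ℝ≥0∞) ^ p = ENNReal.ofReal (L * (σ / t)) := by
      change ENNReal.ofReal ρ ^ p = _
      rw [ENNReal.ofReal_rpow_of_nonneg (by linarith) hp0.le, hρ, ← Real.rpow_mul (by positivity)]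
      simp [hp0.ne']
    have e2 : (L : ℝ≥0∞) * ENNReal.ofReal σ ≤ L * φ x (ρ.toNNReal * u) := by
      refine le_trans ?_ h3
      rw [e1]
      refine le_trans (le_of_eq ?_) (mul_le_mul_right h2 _)
      rw [← ENNReal.ofReal_mul (by positivity), ← ENNReal.ofReal_coe_nnreal,
        ← ENNReal.ofReal_mul (by positivity)]
      congr 1; field_simp
    exact (ENNReal.mul_le_mul_iff_right (by
      have : (L : ℝ≥0) ≠ 0 := (zero_lt_one.trans_le hL).ne'
      exact_mod_cast this) ENNReal.coe_ne_top).1 e2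
  have h5 := Fi_le hφ x h4
  rw [NNReal.coe_mul, hρ', hu'] at h5
  calc Fi φ x σ ≤ _ := h5
    _ = _ := by rw [mul_add, mul_div_cancel₀ _ (by linarith)]

theorem Fi_dec (hφ : IsWeakPhi Set.univ φ) {r : ℝ} (hr : 0 < r) (hr1 : r ≤ 1) {L : ℝ≥0}
    (hL : 1 ≤ L) (x : RSp n)
    (h : ∀ s t : ℝ≥0, 0 < s → s < t →
      φ x t / (t : ℝ≥0∞) ^ (1 / r) ≤ (L : ℝ≥0∞) * (φ x s / (s : ℝ≥0∞) ^ (1 / r)))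
    {t σ : ℝ} (ht : 0 < t) (hts : t ≤ σ) : (σ / t) ^ r * Fi φ x t ≤ L * Fi φ x σ := by
  have hσ : 0 < σ := by linarith
  have hL' : (1 : ℝ) ≤ L := by exact_mod_cast hL
  have hL0 : (0 : ℝ) < L := by linarith
  have hLr : (L : ℝ) ^ r ≤ L := by
    calc (L : ℝ) ^ r ≤ (L : ℝ) ^ (1 : ℝ) := Real.rpow_le_rpow_of_exponent_le hL' hr1
      _ = L := Real.rpow_one _
  have hF := Fi_pos hφ x hσ
  have hFt := Fi_pos hφ x ht
  by_cases hc : σ / t < L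
  · calc (σ / t) ^ r * Fi φ x t ≤ (L : ℝ) ^ r * Fi φ x σ := by
          gcongr
          exact Fi_mono hφ x hts
      _ ≤ _ := by gcongr
  push Not at hc
  set ρ : ℝ := (σ / t / L) ^ r with hρ
  have hb1 : 1 ≤ σ / t / L := (one_le_div hL0).2 hc
  have hρ1 : 1 ≤ ρ := Real.one_le_rpow hb1 hr.le
  have hρ0 : 0 < ρ := by linarith
  have key : ρ * Fi φ x t ≤ Fi φ x σ := by
    refine le_of_forall_pos_le_add fun e he => ?_
    set u : ℝ≥0 := ((Fi φ x σ + e) / ρ).toNNReal with hu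
    have hup : 0 < (Fi φ x σ + e) / ρ := by positivity
    have hu' : (u : ℝ) = (Fi φ x σ + e) / ρ := Real.coe_toNNReal _ hup.le
    have hρ' : ((ρ.toNNReal : ℝ≥0) : ℝ) = ρ := Real.coe_toNNReal _ hρ0.le
    have h2 : ENNReal.ofReal σ ≤ φ x (ρ.toNNReal * u) := le_of_Fi_lt hφ x (by
      rw [NNReal.coe_mul, hρ', hu', mul_div_cancel₀ _ hρ0.ne']; linarith)
    have h3 := dec_scale (by positivity) hL h (u := u) (ρ := ρ.toNNReal) (Real.toNNReal_pos.2 hup)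
      (by rw [← Real.toNNReal_one]; exact Real.toNNReal_le_toNNReal hρ1)
    have e1 : ((ρ.toNNReal : ℝ≥0) : ℝ≥0∞) ^ (1 / r) = ENNReal.ofReal (σ / t / L) := by
      change ENNReal.ofReal ρ ^ (1 / r) = _
      rw [ENNReal.ofReal_rpow_of_nonneg hρ0.le (by positivity), hρ, ← Real.rpow_mul (by positivity)]
      simp [hr.ne']
    have e2 : (L : ℝ≥0∞) * ((ρ.toNNReal : ℝ≥0) : ℝ≥0∞) ^ (1 / r) = ENNReal.ofReal (σ / t) := by
      rw [e1, ← ENNReal.ofReal_coe_nnreal, ← ENNReal.ofReal_mul hL0.le]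
      congr 1; field_simp
    rw [e2] at h3
    have h4 : ENNReal.ofReal t ≤ φ x u := by
      have h5 : ENNReal.ofReal (σ / t) * ENNReal.ofReal t ≤ ENNReal.ofReal (σ / t) * φ x u := by
        refine le_trans (le_of_eq ?_) (h2.trans h3)
        rw [← ENNReal.ofReal_mul (by positivity)]
        congr 1; field_simp
      exact (ENNReal.mul_le_mul_iff_right (ENNReal.ofReal_pos.2 (by positivity)).ne'
        ENNReal.ofReal_ne_top).1 h5
    have h5 := Fi_le hφ x h4
    rw [hu', le_div_iff₀ hρ0] at h5
    linarith
  calc (σ / t) ^ r * Fi φ x t = (L : ℝ) ^ r * (ρ * Fi φ x t) := by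
        rw [hρ, Real.div_rpow (by positivity) hL0.le]
        field_simp
    _ ≤ (L : ℝ) ^ r * Fi φ x σ := by gcongr
    _ ≤ _ := by gcongr

theorem almost_inc_scale (hφ : IsWeakPhi Set.univ φ) : ∃ L : ℝ≥0, 1 ≤ L ∧ ∀ x, ∀ u ρ : ℝ≥0, 1 ≤ ρ →
    (ρ : ℝ≥0∞) * φ x u ≤ L * φ x (ρ * u) := by
  obtain ⟨L, hL, h⟩ := hφ.almost_inc
  refine ⟨L, hL, fun x u ρ hρ => ?_⟩
  rcases eq_or_lt_of_le (zero_le (a := u)) with h0 | h0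
  · rw [← h0, mul_zero, hφ.zero x (mem_univ x)]; simp
  · have := inc_scale (φ := φ) (x := x) (p := 1) one_pos hL (fun s t hs hst => by
      simpa only [ENNReal.rpow_one] using h x (mem_univ x) s t hs hst) h0 hρ
    simpa only [ENNReal.rpow_one] using this

end


/-! ### One-point growth conditions -/

/-- Growth conditions for the inverses at one point. -/
structure Pt (Φ Ψ : ℝ → ℝ) (p q r a C : ℝ) : Prop where
  posΦ : ∀ t, 0 < t → 0 < Φ t
  posΨ : ∀ t, 0 < t → 0 < Ψ t
  monoΨ : ∀ t s, t ≤ s → Ψ t ≤ Ψ s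
  B2 : ∀ t s, 0 < t → t ≤ s → Φ s ≤ C * (s / t) ^ (1 / p) * Φ t
  B3 : ∀ t s, 0 < t → t ≤ s → (s / t) ^ r * Φ t ≤ C * Φ s
  R1 : ∀ t, 0 < t → t ^ a * Ψ t ≤ C * Φ t
  R2 : ∀ t, 0 < t → Φ t ≤ C * (t ^ a * Ψ t)

theorem Pt.B2' {Φ Ψ : ℝ → ℝ} {p q r a C : ℝ} (h : Pt Φ Ψ p q r a C) (hC : 1 ≤ C)
    (ha : a = 1 / p - 1 / q) {t s : ℝ} (ht : 0 < t) (hts : t ≤ s) :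
    Ψ s ≤ C ^ 3 * (s / t) ^ (1 / q) * Ψ t := by
  have hs : 0 < s := by linarith
  have hC0 : 0 < C := by linarith
  have hsa : 0 < s ^ a := by positivity
  refine le_of_mul_le_mul_left ?_ hsa
  calc s ^ a * Ψ s ≤ C * Φ s := h.R1 s hs
    _ ≤ C * (C * (s / t) ^ (1 / p) * Φ t) := by gcongr; exact h.B2 t s ht hts
    _ ≤ C * (C * (s / t) ^ (1 / p) * (C * (t ^ a * Ψ t))) := by gcongr; exact h.R2 t ht
    _ = s ^ a * (C ^ 3 * (s / t) ^ (1 / q) * Ψ t) := by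
        have : (s / t) ^ (1 / p) * t ^ a = s ^ a * (s / t) ^ (1 / q) := by
          rw [show 1 / p = a + 1 / q by rw [ha]; ring, Real.rpow_add (by positivity),
            Real.div_rpow hs.le ht.le a]
          field_simp
        calc C * (C * (s / t) ^ (1 / p) * (C * (t ^ a * Ψ t)))
            = C ^ 3 * ((s / t) ^ (1 / p) * t ^ a) * Ψ t := by ring
          _ = _ := by rw [this]; ring

theorem Pt.B3' {Φ Ψ : ℝ → ℝ} {p q r a C : ℝ} (h : Pt Φ Ψ p q r a C) (hC : 1 ≤ C)
    {t s : ℝ} (ht : 0 < t) (hts : t ≤ s) :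
    (s / t) ^ (r - a) * Ψ t ≤ C ^ 3 * Ψ s := by
  have hs : 0 < s := by linarith
  have hC0 : 0 < C := by linarith
  have hsa : 0 < s ^ a := by positivity
  refine le_of_mul_le_mul_left ?_ hsa
  calc s ^ a * ((s / t) ^ (r - a) * Ψ t) = (s / t) ^ r * (t ^ a * Ψ t) := by
        rw [Real.rpow_sub (by positivity), Real.div_rpow hs.le ht.le a]
        field_simp
    _ ≤ (s / t) ^ r * (C * Φ t) := mul_le_mul_of_nonneg_left (h.R1 t ht) (by positivity)
    _ = C * ((s / t) ^ r * Φ t) := by ring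
    _ ≤ C * (C * Φ s) := mul_le_mul_of_nonneg_left (h.B3 t s ht hts) hC0.le
    _ ≤ C * (C * (C * (s ^ a * Ψ s))) := by gcongr; exact h.R2 s hs
    _ = _ := by ring

theorem Pt.scale {Φ Ψ : ℝ → ℝ} {p q r a C : ℝ} (h : Pt Φ Ψ p q r a C) (hC : 1 ≤ C)
    (har : a < r) {t l : ℝ} (ht : 0 < t) (hl : 1 ≤ l) :
    l * Ψ t ≤ C ^ 3 * Ψ (l ^ (1 / (r - a)) * t) := by
  have hra : 0 < r - a := by linarith
  have hl1 : 1 ≤ l ^ (1 / (r - a)) := Real.one_le_rpow hl (by positivity)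
  have := h.B3' hC ht (s := l ^ (1 / (r - a)) * t) (by nlinarith)
  rwa [mul_div_cancel_right₀ _ ht.ne', ← Real.rpow_mul (by linarith), 
    one_div_mul_cancel hra.ne', Real.rpow_one] at this

theorem lemma_P {Φx Ψx Φy Ψy : ℝ → ℝ} {p q r a C : ℝ} (hx : Pt Φx Ψx p q r a C)
    (hy : Pt Φy Ψy p q r a C) (hC : 1 ≤ C) (ha : a = 1 / p - 1 / q) (har : a < r)
    {t s l e : ℝ} (ht : 0 < t) (hts : t ≤ s) (hl : 1 ≤ l) (he : 0 < e)
    (h1 : 1 ≤ t → Φy t ≤ C * Φx t) (h0x : 1 ≤ C * Φx 1) (h0y : Φy 1 ≤ C)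
    (h2 : s < 1 → Φy (max s e) ≤ C * Φx (max s e)) :
    l * Φy s ≤ C ^ 13 * (t ^ a * (s / t) ^ (1 / p) * Ψx (max (l ^ (1 / (r - a)) * t) e)) := by
  have hs : 0 < s := by linarith
  have hC0 : 0 < C := by linarith
  have hra : 0 < r - a := by linarith
  have hl0 : 0 < l := by linarith
  set k := 1 / (r - a) with hk
  have hk0 : 0 < k := by positivity
  have hlk : 1 ≤ l ^ k := Real.one_le_rpow hl hk0.le
  have hsm : l * Ψx t ≤ C ^ 3 * Ψx (max (l ^ k * t) e) :=
    (hx.scale hC har ht hl).trans (by gcongr; exact hx.monoΨ _ _ (le_max_left _ _))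
  have hpos : 0 ≤ t ^ a * (s / t) ^ (1 / p) * Ψx (max (l ^ k * t) e) := by
    have := hx.posΨ (max (l ^ k * t) e) (lt_max_of_lt_right he)
    positivity
  rcases le_or_gt 1 t with ht1 | ht1
  · calc l * Φy s ≤ l * (C * (s / t) ^ (1 / p) * (C * (C * (t ^ a * Ψx t)))) := by
          gcongr
          refine (hy.B2 t s ht hts).trans ?_
          gcongr
          refine (h1 ht1).trans ?_
          gcongr
          exact hx.R2 t ht
      _ = C ^ 3 * (t ^ a * (s / t) ^ (1 / p)) * (l * Ψx t) := by ring
      _ ≤ C ^ 3 * (t ^ a * (s / t) ^ (1 / p)) * (C ^ 3 * Ψx (max (l ^ k * t) e)) := by gcongr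
      _ = C ^ 6 * (t ^ a * (s / t) ^ (1 / p) * Ψx (max (l ^ k * t) e)) := by ring
      _ ≤ _ := by
          refine mul_le_mul_of_nonneg_right ?_ hpos
          exact pow_le_pow_right₀ hC (by norm_num)
  rcases le_or_gt 1 s with hs1 | hs1
  · have e1 : Φy s ≤ C * s ^ (1 / p) * C := by
      have := hy.B2 1 s one_pos hs1
      rw [div_one] at this
      exact this.trans (by gcongr)
    have e2 : 1 ≤ C * (C * Ψx 1) := by
      refine h0x.trans ?_
      gcongr
      have := hx.R2 1 one_pos
      rwa [Real.one_rpow, one_mul] at this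
    have e3 : Ψx 1 ≤ C ^ 3 * (1 / t) ^ (1 / q) * Ψx t := hx.B2' hC ha ht ht1.le
    have e4 : t ^ a * (s / t) ^ (1 / p) = s ^ (1 / p) * (1 / t) ^ (1 / q) := by
      rw [ha, Real.rpow_sub ht, Real.div_rpow hs.le ht.le, Real.div_rpow one_pos.le ht.le,
        Real.one_rpow]
      field_simp
    calc l * Φy s ≤ l * (C * s ^ (1 / p) * C) := by gcongr
      _ = C ^ 2 * l * s ^ (1 / p) * 1 := by ring
      _ ≤ C ^ 2 * l * s ^ (1 / p) * (C * (C * (C ^ 3 * (1 / t) ^ (1 / q) * Ψx t))) := by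
          gcongr
          exact e2.trans (by gcongr)
      _ = C ^ 7 * (t ^ a * (s / t) ^ (1 / p)) * (l * Ψx t) := by rw [e4]; ring
      _ ≤ C ^ 7 * (t ^ a * (s / t) ^ (1 / p)) * (C ^ 3 * Ψx (max (l ^ k * t) e)) := by gcongr
      _ = C ^ 10 * (t ^ a * (s / t) ^ (1 / p) * Ψx (max (l ^ k * t) e)) := by ring
      _ ≤ _ := by
          refine mul_le_mul_of_nonneg_right ?_ hpos
          exact pow_le_pow_right₀ hC (by norm_num)
  · set τ := max s e with hτ
    have hτs : s ≤ τ := le_max_left _ _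
    have hτ0 : 0 < τ := by linarith
    have f1 : Ψy τ ≤ C ^ 3 * Ψx τ := by
      have hta : 0 < τ ^ a := by positivity
      refine le_of_mul_le_mul_left ?_ hta
      calc τ ^ a * Ψy τ ≤ C * Φy τ := hy.R1 τ hτ0
        _ ≤ C * (C * (C * (τ ^ a * Ψx τ))) := by
            gcongr
            refine (h2 hs1).trans ?_
            gcongr
            exact hx.R2 τ hτ0
        _ = _ := by ring
    have f2 : Ψy s ≤ (s / τ) ^ (r - a) * (C ^ 3 * (C ^ 3 * Ψx τ)) := by
      have := hy.B3' hC hs hτs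
      have hinv : (s / τ) ^ (r - a) * (τ / s) ^ (r - a) = 1 := by
        rw [← Real.mul_rpow (by positivity) (by positivity)]
        rw [show s / τ * (τ / s) = 1 by field_simp, Real.one_rpow]
      calc Ψy s = (s / τ) ^ (r - a) * ((τ / s) ^ (r - a) * Ψy s) := by
            rw [← mul_assoc, hinv, one_mul]
        _ ≤ _ := mul_le_mul_of_nonneg_left
            (this.trans (mul_le_mul_of_nonneg_left f1 (by positivity))) (by positivity)
    have f3 : l * (s / τ) ^ (r - a) * Ψx τ ≤ C ^ 3 * Ψx (max (l ^ k * s) e) := by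
      have hbig : τ ≤ max (l ^ k * s) e := max_le_max (by nlinarith) le_rfl
      have hC3 : 1 ≤ C ^ 3 := one_le_pow₀ hC
      rcases le_or_gt 1 (l * (s / τ) ^ (r - a)) with hm | hm
      · refine (hx.scale hC har hτ0 hm).trans ?_
        gcongr
        refine hx.monoΨ _ _ (le_trans (le_of_eq ?_) (le_max_left _ _))
        rw [← hk, Real.mul_rpow hl0.le (by positivity), ← Real.rpow_mul (by positivity), hk,
          mul_one_div_cancel hra.ne', Real.rpow_one]
        field_simp
      · have hp1 := hx.posΨ τ hτ0
        calc l * (s / τ) ^ (r - a) * Ψx τ ≤ 1 * Ψx τ := by gcongr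
          _ ≤ C ^ 3 * Ψx (max (l ^ k * s) e) := by
              gcongr
              exact hx.monoΨ _ _ hbig
    have f4 : Ψx (max (l ^ k * s) e) ≤
        C ^ 3 * (s / t) ^ (1 / q) * Ψx (max (l ^ k * t) e) := by
      have hst : 1 ≤ s / t := (one_le_div ht).2 hts
      have hm0 : 0 < max (l ^ k * t) e := lt_max_of_lt_right he
      have hle : max (l ^ k * s) e ≤ s / t * max (l ^ k * t) e := by
        refine max_le ?_ ?_
        · calc l ^ k * s = s / t * (l ^ k * t) := by field_simp
            _ ≤ _ := by gcongr; exact le_max_left _ _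
        · calc e ≤ max (l ^ k * t) e := le_max_right _ _
            _ ≤ _ := le_mul_of_one_le_left hm0.le hst
      refine (hx.monoΨ _ _ hle).trans ?_
      have := hx.B2' hC ha hm0 (s := s / t * max (l ^ k * t) e)
        (le_mul_of_one_le_left hm0.le hst)
      rwa [mul_div_cancel_right₀ _ hm0.ne'] at this
    have f5 : s ^ a * (s / t) ^ (1 / q) = t ^ a * (s / t) ^ (1 / p) := by
      rw [show 1 / p = a + 1 / q by rw [ha]; ring, Real.rpow_add (by positivity),
        Real.div_rpow hs.le ht.le a]
      field_simp
    calc l * Φy s ≤ l * (C * (s ^ a * Ψy s)) := by gcongr; exact hy.R2 s hs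
      _ ≤ l * (C * (s ^ a * ((s / τ) ^ (r - a) * (C ^ 3 * (C ^ 3 * Ψx τ))))) := by gcongr
      _ = C ^ 7 * s ^ a * (l * (s / τ) ^ (r - a) * Ψx τ) := by ring
      _ ≤ C ^ 7 * s ^ a * (C ^ 3 * (C ^ 3 * (s / t) ^ (1 / q) * Ψx (max (l ^ k * t) e))) :=
          mul_le_mul_of_nonneg_left (f3.trans (mul_le_mul_of_nonneg_left f4 (by positivity)))
            (by positivity)
      _ = C ^ 13 * (s ^ a * (s / t) ^ (1 / q) * Ψx (max (l ^ k * t) e)) := by ring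
      _ = _ := by rw [f5]


/-! ### Good points -/

theorem Pt.mono {Φ Ψ : ℝ → ℝ} {p q r a C C' : ℝ} (h : Pt Φ Ψ p q r a C) (hCC : C ≤ C') :
    Pt Φ Ψ p q r a C' where
  posΦ := h.posΦ
  posΨ := h.posΨ
  monoΨ := h.monoΨ
  B2 t s ht hts := (h.B2 t s ht hts).trans (by
    have := (h.posΦ t ht).le
    have hs : 0 < s := by linarith
    gcongr)
  B3 t s ht hts := (h.B3 t s ht hts).trans
    (mul_le_mul_of_nonneg_right hCC (h.posΦ s (by linarith)).le)
  R1 t ht := (h.R1 t ht).trans (mul_le_mul_of_nonneg_right hCC (h.posΦ t ht).le)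
  R2 t ht := (h.R2 t ht).trans (mul_le_mul_of_nonneg_right hCC
    (mul_nonneg (by positivity) (h.posΨ t ht).le))

theorem pt_all {n : ℕ} {α p q r : ℝ} {φ ψ : RSp n → ℝ≥0 → ℝ≥0∞} (hp : 1 < p)
    (hφ : IsWeakPhi Set.univ φ) (hψ : IsWeakPhi Set.univ ψ) (hrel : FracInvRel α φ ψ)
    (hr0 : 0 < r) (hr1 : r ≤ 1 / p) (hinc : AInc p Set.univ φ) (hdec : ADec (1 / r) Set.univ φ) :
    ∃ C : ℝ, 1 ≤ C ∧ ∀ x, Pt (Fi φ x) (Fi ψ x) p q r (α / n) C := by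
  obtain ⟨L1, hL1, h1⟩ := hinc
  obtain ⟨L2, hL2, h2⟩ := hdec
  obtain ⟨c1, c2, hc1, h3⟩ := hrel
  have hp0 : 0 < p := by linarith
  have hrle : r ≤ 1 := hr1.trans (by rw [div_le_one hp0]; exact hp.le)
  have hc1' : (0 : ℝ) < c1 := hc1
  have hpow : ∀ t : ℝ, 0 < t → (ENNReal.ofReal t) ^ (α / (n : ℝ)) = ENNReal.ofReal (t ^ (α / (n : ℝ))) :=
    fun t ht => ENNReal.ofReal_rpow_of_pos ht
  have key : ∀ x : RSp n, ∀ t : ℝ, 0 < t → (c1 : ℝ) * (t ^ (α / (n : ℝ)) * Fi ψ x t) ≤ Fi φ x t ∧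
      Fi φ x t ≤ c2 * (t ^ (α / (n : ℝ)) * Fi ψ x t) := by
    intro x t ht
    have hψp := (Fi_pos hψ x ht).le
    have hφp := (Fi_pos hφ x ht).le
    have := h3 x t.toNNReal (by simpa using ht)
    change (c1 : ℝ≥0∞) * ((ENNReal.ofReal t) ^ (α / (n : ℝ)) * phiInv ψ x (ENNReal.ofReal t)) ≤
      phiInv φ x (ENNReal.ofReal t) ∧ phiInv φ x (ENNReal.ofReal t) ≤
      (c2 : ℝ≥0∞) * ((ENNReal.ofReal t) ^ (α / (n : ℝ)) * phiInv ψ x (ENNReal.ofReal t)) at this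
    rw [hpow t ht, ← Fi_coe hφ, ← Fi_coe hψ, ← ENNReal.ofReal_mul (by positivity),
      ← ENNReal.ofReal_coe_nnreal, ← ENNReal.ofReal_coe_nnreal (p := c2),
      ← ENNReal.ofReal_mul (by positivity), ← ENNReal.ofReal_mul (by positivity),
      ENNReal.ofReal_le_ofReal_iff hφp, ENNReal.ofReal_le_ofReal_iff (by positivity)] at this
    exact this
  have hL1' : (1 : ℝ) ≤ L1 := by exact_mod_cast hL1
  have hL2' : (1 : ℝ) ≤ L2 := by exact_mod_cast hL2
  have hi : 0 ≤ (c1 : ℝ)⁻¹ := by positivity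
  refine ⟨L1 + L2 + (c1 : ℝ)⁻¹ + c2, by linarith [c2.2], fun x => ?_⟩
  refine ⟨fun t ht => Fi_pos hφ x ht, fun t ht => Fi_pos hψ x ht, fun t s hts => Fi_mono hψ x hts,
    ?_, ?_, ?_, ?_⟩
  · intro t s ht hts
    have hs : 0 < s := by linarith
    refine (Fi_inc hφ hp.le hL1 x (h1 x (mem_univ x)) ht hts).trans ?_
    have := (Fi_pos hφ x ht).le
    refine mul_le_mul_of_nonneg_right (mul_le_mul_of_nonneg_right ?_ (by positivity)) this
    linarith [c2.2]
  · intro t s ht hts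
    have hs : 0 < s := by linarith
    refine (Fi_dec hφ hr0 hrle hL2 x (h2 x (mem_univ x)) ht hts).trans ?_
    refine mul_le_mul_of_nonneg_right ?_ (Fi_pos hφ x hs).le
    linarith [c2.2]
  · intro t ht
    have h := (key x t ht).1
    have hf := (Fi_pos hφ x ht).le
    calc t ^ (α / (n : ℝ)) * Fi ψ x t = (c1 : ℝ)⁻¹ * (c1 * (t ^ (α / (n : ℝ)) * Fi ψ x t)) := by
          field_simp
      _ ≤ (c1 : ℝ)⁻¹ * Fi φ x t := mul_le_mul_of_nonneg_left h hi
      _ ≤ _ := mul_le_mul_of_nonneg_right (by linarith [c2.2]) hf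
  · intro t ht
    have h := (key x t ht).2
    have hf := (Fi_pos hψ x ht).le
    exact h.trans (mul_le_mul_of_nonneg_right (by linarith) (by positivity))

theorem a0_good {n : ℕ} {φ : RSp n → ℝ≥0 → ℝ≥0∞} (hφ : IsWeakPhi Set.univ φ)
    (h : A0 Set.univ φ) :
    ∃ C : ℝ, 1 ≤ C ∧ ∀ᵐ x ∂(volume : Measure (RSp n)), 1 ≤ C * Fi φ x 1 ∧ Fi φ x 1 ≤ C := by
  obtain ⟨β, hβ, hβ1, h⟩ := h
  have hβ' : (0 : ℝ) < β := hβ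
  have hβ1' : (β : ℝ) ≤ 1 := hβ1
  rw [Measure.restrict_univ] at h
  refine ⟨(β : ℝ)⁻¹, (one_le_inv₀ hβ').2 hβ1', ?_⟩
  filter_upwards [h] with x hx
  have e : phiInv φ x 1 = ENNReal.ofReal (Fi φ x 1) := by rw [Fi_coe hφ, ENNReal.ofReal_one]
  have hpos := (Fi_pos hφ x one_pos).le
  rw [e, ← ENNReal.coe_inv hβ.ne', ← ENNReal.ofReal_coe_nnreal, ← ENNReal.ofReal_coe_nnreal,
    ENNReal.ofReal_le_ofReal_iff hpos, ENNReal.ofReal_le_ofReal_iff (by positivity)] at hx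
  refine ⟨?_, by simpa using hx.2⟩
  rw [inv_mul_eq_div, one_le_div hβ']
  exact hx.1

theorem a1_good {n : ℕ} {φ : RSp n → ℝ≥0 → ℝ≥0∞} (hφ : IsWeakPhi Set.univ φ)
    (h : A1 φ) {D : ℝ} (hD1 : 1 ≤ D)
    (hD : ∀ x t s, 0 < t → t ≤ s → s ≤ 2 * t → Fi φ x s ≤ D * Fi φ x t) :
    ∃ C : ℝ, 1 ≤ C ∧ ∃ G : Set (RSp n), (∀ᵐ x ∂(volume : Measure (RSp n)), x ∈ G) ∧
      ∀ x ∈ G, ∀ y ∈ G, ∀ i : RIdx n, x ∈ (ratCube i).set → y ∈ (ratCube i).set →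
        ∀ t : ℝ, 1 ≤ t → ENNReal.ofReal t ≤ (volume (ratCube i).set)⁻¹ →
          Fi φ y t ≤ C * Fi φ x t := by
  obtain ⟨β, hβ, hβ1, h⟩ := h
  have hβ' : (0 : ℝ) < β := hβ
  have hβ1' : (β : ℝ) ≤ 1 := hβ1.le
  let m : RIdx n → ℕ → ℝ≥0∞ := fun i k =>
    essInf (fun y => phiInv φ y (2 ^ k)) (volume.restrict (ratCube i).set)
  refine ⟨D * (β : ℝ)⁻¹, one_le_mul_of_one_le_of_one_le hD1 ((one_le_inv₀ hβ').2 hβ1'),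
    {x | ∀ (i : RIdx n) (k : ℕ), x ∈ (ratCube i).set → (m i k ≤ phiInv φ x (2 ^ k) ∧
      ((2 : ℝ≥0∞) ^ k ≤ (volume (ratCube i).set)⁻¹ → (β : ℝ≥0∞) * phiInv φ x (2 ^ k) ≤ m i k))}, ?_, ?_⟩
  · simp only [mem_ofPred_eq]
    rw [ae_all_iff]; intro i
    rw [ae_all_iff]; intro k
    rw [← ae_restrict_iff' (ratCube i).meas]
    have e1 : ∀ᵐ y ∂(volume.restrict (ratCube i).set), m i k ≤ phiInv φ y (2 ^ k) := ae_essInf_le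
    by_cases hk : (2 : ℝ≥0∞) ^ k ≤ (volume (ratCube i).set)⁻¹
    · have h1k : (1 : ℝ≥0∞) ≤ 2 ^ k := one_le_pow₀ (by norm_num)
      have hv : volume (ratCube i).set ≤ 1 := ENNReal.one_le_inv.1 (h1k.trans hk)
      filter_upwards [e1, h (ratCube i) hv] with x hx1 hx2
      refine ⟨hx1, fun _ => le_essInf_of_ae_le _ ?_⟩
      filter_upwards [hx2] with y hy
      exact hy _ h1k hk
    · filter_upwards [e1] with x hx
      exact ⟨hx, fun h => absurd h hk⟩
  · intro x hx y hy i hxi hyi t ht htv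
    simp only [mem_ofPred_eq] at hx hy
    obtain ⟨k, hk1, hk2⟩ := exists_nat_pow_near (y := (2 : ℝ)) ht (by norm_num)
    have hk0 : (0 : ℝ) < 2 ^ k := by positivity
    have e : ENNReal.ofReal ((2 : ℝ) ^ k) = 2 ^ k := by
      rw [ENNReal.ofReal_pow (by norm_num)]; norm_num
    have hkv : (2 : ℝ≥0∞) ^ k ≤ (volume (ratCube i).set)⁻¹ := by
      rw [← e]; exact (ENNReal.ofReal_le_ofReal hk1).trans htv
    have hxy := ((hy i k hyi).2 hkv).trans (hx i k hxi).1
    rw [← e, ← Fi_coe hφ, ← Fi_coe hφ, ← ENNReal.ofReal_coe_nnreal,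
      ← ENNReal.ofReal_mul hβ'.le, ENNReal.ofReal_le_ofReal_iff (Fi_pos hφ x hk0).le] at hxy
    calc Fi φ y t ≤ D * Fi φ y (2 ^ k) := hD y _ _ hk0 hk1 (by rw [pow_succ] at hk2; linarith)
      _ ≤ D * ((β : ℝ)⁻¹ * Fi φ x t) := by
          refine mul_le_mul_of_nonneg_left ?_ (by linarith)
          rw [inv_mul_eq_div, le_div_iff₀ hβ', mul_comm]
          exact hxy.trans (Fi_mono hφ x hk1)
      _ = _ := by ring

theorem ennreal_div_step {K A B S : ℝ≥0∞} (hK : K ≠ 0) (hK' : K ≠ ∞) (h1 : K * A ≤ B)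
    (h2 : B ≤ K * S) : A ≤ S :=
  (ENNReal.mul_le_mul_iff_right hK hK').1 (h1.trans h2)

theorem a2_core {n : ℕ} {φ : RSp n → ℝ≥0 → ℝ≥0∞} (hφ : IsWeakPhi Set.univ φ) {φi : ℝ≥0 → ℝ≥0∞}
    (hi : IsWeakPhi Set.univ (fun _ : RSp n => φi)) {L β s M : ℝ≥0} {m : ℕ}
    (hL : ∀ x, ∀ u ρ : ℝ≥0, 1 ≤ ρ → (ρ : ℝ≥0∞) * φ x u ≤ L * φ x (ρ * u))
    (hLi : ∀ u ρ : ℝ≥0, 1 ≤ ρ → (ρ : ℝ≥0∞) * φi u ≤ L * φi (ρ * u))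
    (hm1 : 1 ≤ β * 2 ^ m) (hm2 : 2 * L * M ≤ 2 ^ m * s) (hm3 : 2 * L < 2 ^ m)
    {x y : RSp n} {τ : ℝ} (hτ : 0 < τ) (hτM : τ ≤ M) {hx hy : ℝ≥0∞}
    (hx1 : hx ≤ ENNReal.ofReal τ) (hy1 : hy ≤ ENNReal.ofReal τ)
    (hxx : ∀ k : ℤ, φi (2 ^ k) ≤ s → φ x (β * 2 ^ k) ≤ φi (2 ^ k) + hx)
    (hyy : ∀ k : ℤ, φ y (2 ^ k) ≤ s → φi (β * 2 ^ k) ≤ φ y (2 ^ k) + hy) :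
    Fi φ y τ ≤ 2 ^ (5 * m + 1) * Fi φ x τ := by
  set T := ENNReal.ofReal τ with hT
  have hT0 : T ≠ 0 := (ENNReal.ofReal_pos.2 hτ).ne'
  have hTt : T ≠ ∞ := ENNReal.ofReal_ne_top
  have hTM : T ≤ M := by
    rw [hT, ← ENNReal.ofReal_coe_nnreal]; exact ENNReal.ofReal_le_ofReal hτM
  have hu := Fi_pos hφ y hτ
  obtain ⟨k, hk1, hk2⟩ := exists_mem_Ioc_zpow (y := (2 : ℝ)) hu (by norm_num)
  have hK0 : (2 : ℝ≥0∞) ^ m ≠ 0 := by positivity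
  have hKt : (2 : ℝ≥0∞) ^ m ≠ ∞ := by finiteness
  have h2m : (1 : ℝ≥0) ≤ 2 ^ m := one_le_pow₀ (by norm_num)
  have e2 : ∀ j : ℤ, (2 : ℝ≥0) ^ m * 2 ^ (j - m) = 2 ^ j := by
    intro j
    rw [← zpow_natCast, ← zpow_add₀ (by norm_num)]
    congr 1; ring
  have b2 : ∀ j : ℤ, (2 : ℝ≥0) ^ (j - m) ≤ β * 2 ^ j := by
    intro j
    calc (2 : ℝ≥0) ^ (j - m) = 1 * 2 ^ (j - m) := (one_mul _).symm
      _ ≤ (β * 2 ^ m) * 2 ^ (j - m) := by gcongr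
      _ = _ := by rw [mul_assoc, e2]
  have m2 : ∀ j : ℤ, (2 : ℝ≥0) ^ (j - m) ≤ 2 ^ j := by
    intro j
    rw [← e2 j]; exact le_mul_of_one_le_left (zero_le) h2m
  have hmφ := fun z => hφ.mono z (mem_univ z)
  have hmi := hi.mono x (mem_univ x)
  have sφ : ∀ z, ∀ j : ℤ, (2 : ℝ≥0∞) ^ m * φ z (2 ^ (j - m)) ≤ L * φ z (2 ^ j) := by
    intro z j
    have := hL z (2 ^ (j - m)) (2 ^ m) h2m
    rw [e2] at this; exact_mod_cast this
  have si : ∀ j : ℤ, (2 : ℝ≥0∞) ^ m * φi (2 ^ (j - m)) ≤ L * φi (2 ^ j) := by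
    intro j
    have := hLi (2 ^ (j - m)) (2 ^ m) h2m
    rw [e2] at this; exact_mod_cast this
  have c1 : (L : ℝ≥0∞) * (2 * T) ≤ 2 ^ m * s := by
    calc (L : ℝ≥0∞) * (2 * T) ≤ L * (2 * M) := by gcongr
      _ = ((2 * L * M : ℝ≥0) : ℝ≥0∞) := by push_cast; ring
      _ ≤ ((2 ^ m * s : ℝ≥0) : ℝ≥0∞) := by exact_mod_cast hm2
      _ = _ := by push_cast; ring
  have c2 : (L : ℝ≥0∞) * (2 * T) < 2 ^ m * T := by
    have : ((2 * L : ℝ≥0) : ℝ≥0∞) < ((2 ^ m : ℝ≥0) : ℝ≥0∞) := by exact_mod_cast hm3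
    calc (L : ℝ≥0∞) * (2 * T) = ((2 * L : ℝ≥0) : ℝ≥0∞) * T := by push_cast; ring
      _ < ((2 ^ m : ℝ≥0) : ℝ≥0∞) * T := ENNReal.mul_lt_mul_left hT0 hTt this
      _ = _ := by push_cast; ring
  have T2 : T + T = 2 * T := (two_mul T).symm
  have t0 : φ y (2 ^ k) < T := Fi_lt hφ y (by exact_mod_cast hk1)
  have t1 : φ y (2 ^ (k - m)) ≤ s := ennreal_div_step hK0 hKt (sφ y k)
    ((mul_le_mul_right (t0.le.trans (by rw [two_mul]; exact le_self_add)) _).trans c1)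
  have t2 : φi (2 ^ (k - m - m)) ≤ 2 * T := by
    refine (hmi (b2 _)).trans ((hyy _ t1).trans ?_)
    rw [← T2]
    exact add_le_add ((hmφ y (m2 k)).trans t0.le) hy1
  have t3 : φi (2 ^ (k - m - m - m)) ≤ s := ennreal_div_step hK0 hKt (si _)
    ((mul_le_mul_right t2 _).trans c1)
  have t3' : φi (2 ^ (k - m - m - m)) ≤ T := ennreal_div_step hK0 hKt (si _)
    ((mul_le_mul_right t2 _).trans c2.le)
  have t4 : φ x (2 ^ (k - m - m - m - m)) ≤ 2 * T := by
    refine (hmφ x (b2 _)).trans ((hxx _ t3).trans ?_)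
    rw [← T2]
    exact add_le_add t3' hx1
  have t5 : φ x (2 ^ (k - m - m - m - m - m)) < T := by
    have : (2 : ℝ≥0∞) ^ m * φ x (2 ^ (k - m - m - m - m - m)) < 2 ^ m * T :=
      ((sφ x _).trans (mul_le_mul_right t4 _)).trans_lt c2
    by_contra hc
    exact absurd (mul_le_mul_right (not_lt.1 hc) _) (not_le.2 this)
  have t6 := le_Fi hφ x t5
  have : Fi φ y τ ≤ 2 ^ (5 * m + 1) * (2 : ℝ) ^ (k - m - m - m - m - m) := by
    refine hk2.trans (le_of_eq ?_)
    rw [← zpow_natCast, ← zpow_add₀ (by norm_num)]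
    congr 1; push_cast; ring
  refine this.trans ?_
  refine mul_le_mul_of_nonneg_left ?_ (by positivity)
  exact_mod_cast t6

theorem a2_good {n : ℕ} {φ : RSp n → ℝ≥0 → ℝ≥0∞} (hφ : IsWeakPhi Set.univ φ) (h : A2 φ) :
    ∃ C M : ℝ, 1 ≤ C ∧ 1 ≤ M ∧ ∃ h1 : RSp n → ℝ, Measurable h1 ∧ (∀ x, 0 < h1 x) ∧
      (∀ x, h1 x ≤ M) ∧ ∫⁻ x, ENNReal.ofReal (h1 x) ≠ ∞ ∧
      ∃ G : Set (RSp n), (∀ᵐ x ∂(volume : Measure (RSp n)), x ∈ G) ∧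
      ∀ x ∈ G, ∀ y ∈ G, ∀ τ : ℝ, τ ≤ M → h1 x ≤ τ → h1 y ≤ τ → Fi φ y τ ≤ C * Fi φ x τ := by
  obtain ⟨φi, hi, h, h_intg, ⟨M0, hM0⟩, β, hβ, hβ1, s, hs, hA⟩ := h
  obtain ⟨L1, hL1, hL1'⟩ := almost_inc_scale hφ
  obtain ⟨L2, hL2, hL2'⟩ := almost_inc_scale hi
  set L := max L1 L2 with hLdef
  set M : ℝ≥0 := 2 * M0 + 1 with hM
  let ht : RSp n → ℝ≥0∞ := fun x => (⨆ k : ℤ, if φi (2 ^ k) ≤ s then φ x (β * 2 ^ k) - φi (2 ^ k) else 0) +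
    ⨆ k : ℤ, if φ x (2 ^ k) ≤ s then φi (β * 2 ^ k) - φ x (2 ^ k) else 0
  have hmc : ∀ c : ℝ≥0, AEMeasurable (fun x => φ x c) := by
    intro c
    have := hφ.meas (fun _ => c) measurable_const
    rwa [Measure.restrict_univ] at this
  have htm : AEMeasurable ht := by
    refine AEMeasurable.add (AEMeasurable.iSup fun k => ?_) (AEMeasurable.iSup fun k => ?_)
    · by_cases hk : φi (2 ^ k) ≤ s
      · simp only [hk, if_true]; exact (hmc _).sub_const _
      · simp only [hk, if_false]; exact aemeasurable_const
    · have hF : Measurable fun v : ℝ≥0∞ => if v ≤ s then φi (β * 2 ^ k) - v else 0 :=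
        Measurable.ite measurableSet_Iic (measurable_const.sub measurable_id) measurable_const
      exact hF.comp_aemeasurable (hmc _)
  have hth : ∀ᵐ x ∂(volume : Measure (RSp n)), ht x ≤ 2 * h x := by
    filter_upwards [hA] with x hx
    rw [two_mul]
    refine add_le_add (iSup_le fun k => ?_) (iSup_le fun k => ?_)
    · split_ifs with hk
      · exact tsub_le_iff_left.2 ((hx _).1 hk)
      · exact zero_le
    · split_ifs with hk
      · exact tsub_le_iff_left.2 ((hx _).2 hk)
      · exact zero_le
  obtain ⟨g, hg0, hgm, hgi⟩ := exists_pos_lintegral_lt_of_sigmaFinite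
    (volume : Measure (RSp n)) (ε := 1) one_ne_zero
  set w := htm.mk ht with hw
  have hwm : Measurable w := htm.measurable_mk
  have hwe : ht =ᵐ[volume] w := htm.ae_eq_mk
  let h1 : RSp n → ℝ := fun x => (min (M : ℝ≥0∞) (w x + g x)).toReal
  have hfin : ∀ x, min (M : ℝ≥0∞) (w x + g x) ≠ ∞ := fun x =>
    ne_top_of_le_ne_top ENNReal.coe_ne_top (min_le_left _ _)
  have hof : ∀ x, ENNReal.ofReal (h1 x) = min (M : ℝ≥0∞) (w x + g x) := fun x =>
    ENNReal.ofReal_toReal (hfin x)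
  have hM1 : 1 ≤ M := by rw [hM]; exact le_add_self
  obtain ⟨m, hm⟩ : ∃ m : ℕ, β⁻¹ + 2 * L * M * s⁻¹ + 2 * L < 2 ^ m :=
    pow_unbounded_of_one_lt _ (by norm_num)
  have hm1 : 1 ≤ β * 2 ^ m := by
    have : β⁻¹ ≤ 2 ^ m := le_trans (le_self_add.trans le_self_add) hm.le
    calc 1 = β * β⁻¹ := (mul_inv_cancel₀ hβ.ne').symm
      _ ≤ _ := by gcongr
  refine ⟨2 ^ (5 * m + 1), M, one_le_pow₀ (by norm_num), by exact_mod_cast hM1, h1,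
    (measurable_const.min (hwm.add hgm.coe_nnreal_ennreal)).ennreal_toReal, ?_, ?_, ?_,
    {x | ht x = w x ∧ ht x ≤ M}, ?_, ?_⟩
  · intro x
    refine ENNReal.toReal_pos (lt_min ?_ ?_).ne' (hfin x)
    · exact_mod_cast lt_of_lt_of_le one_pos hM1
    · exact lt_of_lt_of_le (by exact_mod_cast hg0 x) le_add_self
  · intro x
    exact ENNReal.toReal_mono ENNReal.coe_ne_top (min_le_left _ _)
  · simp only [hof]
    have : ∫⁻ x, min (M : ℝ≥0∞) (w x + g x) ≤ 2 * (∫⁻ x, h x) + 1 := by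
      calc ∫⁻ x, min (M : ℝ≥0∞) (w x + g x) ≤ ∫⁻ x, (w x + g x) :=
            lintegral_mono fun x => min_le_right _ _
        _ = (∫⁻ x, w x) + ∫⁻ x, (g x : ℝ≥0∞) := lintegral_add_left hwm _
        _ = (∫⁻ x, ht x) + ∫⁻ x, (g x : ℝ≥0∞) := by rw [lintegral_congr_ae hwe]
        _ ≤ 2 * (∫⁻ x, h x) + 1 := by
            refine add_le_add ?_ hgi.le
            rw [← lintegral_const_mul' _ _ (by norm_num)]
            exact lintegral_mono_ae hth
    refine ne_top_of_le_ne_top ?_ this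
    exact ENNReal.add_ne_top.2 ⟨ENNReal.mul_ne_top (by norm_num) h_intg.ne, by norm_num⟩
  · filter_upwards [hwe, hth, hM0] with x e1 e2 e3
    refine ⟨e1, e2.trans ?_⟩
    calc 2 * h x ≤ 2 * (M0 : ℝ≥0∞) := by gcongr
      _ ≤ (M : ℝ≥0∞) := by rw [hM]; push_cast; exact le_self_add
  · rintro x ⟨x1, x2⟩ y ⟨y1, y2⟩ τ hτM hxτ hyτ
    have hpos : 0 < h1 x := ENNReal.toReal_pos (lt_min (by exact_mod_cast lt_of_lt_of_le one_pos hM1)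
      (lt_of_lt_of_le (by exact_mod_cast hg0 x) le_add_self)).ne' (hfin x)
    have hle : ∀ z, ht z = w z → ht z ≤ M → ht z ≤ ENNReal.ofReal (h1 z) := by
      intro z z1 z2
      rw [hof]
      exact le_min z2 (z1.le.trans le_self_add)
    refine a2_core hφ hi (L := L) (β := β) (s := s) (M := M) (m := m) ?_ ?_ hm1 ?_ ?_
      (lt_of_lt_of_le hpos hxτ) hτM ((hle x x1 x2).trans (ENNReal.ofReal_le_ofReal hxτ))
      ((hle y y1 y2).trans (ENNReal.ofReal_le_ofReal hyτ)) ?_ ?_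
    · intro x u ρ hρ
      refine (hL1' x u ρ hρ).trans (mul_le_mul_left ?_ _)
      exact_mod_cast le_max_left _ _
    · intro u ρ hρ
      refine (hL2' x u ρ hρ).trans (mul_le_mul_left ?_ _)
      exact_mod_cast le_max_right _ _
    · have : 2 * L * M * s⁻¹ ≤ 2 ^ m := le_trans (le_add_self.trans le_self_add) hm.le
      calc 2 * L * M = 2 * L * M * s⁻¹ * s := by field_simp
        _ ≤ _ := by gcongr
    · exact lt_of_le_of_lt le_add_self hm
    · intro k hk
      refine tsub_le_iff_left.1 ?_
      refine le_trans ?_ (le_self_add (b := ⨆ k : ℤ, if φ x (2 ^ k) ≤ s then φi (β * 2 ^ k) - φ x (2 ^ k) else 0))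
      refine le_iSup_of_le k ?_
      rw [if_pos hk]
    · intro k hk
      refine tsub_le_iff_left.1 ?_
      refine le_trans ?_ (le_add_self (a := ⨆ k : ℤ, if φ y (2 ^ k) ≤ s then φi (β * 2 ^ k) - φ y (2 ^ k) else 0))
      refine le_iSup_of_le k ?_
      rw [if_pos hk]


/-! ### The estimate on one cube -/

theorem good_package {n : ℕ} {α p q r : ℝ} {φ ψ : RSp n → ℝ≥0 → ℝ≥0∞} (hp : 1 < p)
    (ha : α / (n : ℝ) = 1 / p - 1 / q)
    (hφ : IsWeakPhi Set.univ φ) (hψ : IsWeakPhi Set.univ ψ) (hrel : FracInvRel α φ ψ)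
    (hr0 : 0 < r) (har : α / (n : ℝ) < r) (hr1 : r ≤ 1 / p)
    (h0 : A0 Set.univ φ) (h1 : A1 φ) (h2 : A2 φ)
    (hinc : AInc p Set.univ φ) (hdec : ADec (1 / r) Set.univ φ) :
    ∃ K : ℝ, 1 ≤ K ∧ ∃ h : RSp n → ℝ, Measurable h ∧ (∀ x, 0 < h x) ∧
      ∫⁻ x, ENNReal.ofReal (h x) ≠ ∞ ∧
      ∃ G : Set (RSp n), (∀ᵐ x ∂(volume : Measure (RSp n)), x ∈ G) ∧
      ∀ x ∈ G, ∀ y ∈ G, ∀ i : RIdx n, x ∈ (ratCube i).set → y ∈ (ratCube i).set →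
      ∀ t s l : ℝ, 0 < t → t ≤ s → ENNReal.ofReal t ≤ (volume (ratCube i).set)⁻¹ → 1 ≤ l →
        h y ≤ s → l * Fi φ y s ≤ K * (t ^ (α / (n : ℝ)) * (s / t) ^ (1 / p) *
          Fi ψ x (max (l ^ (1 / (r - α / (n : ℝ))) * t) (h x))) := by
  obtain ⟨C1, hC1, hpt⟩ := pt_all (q := q) hp hφ hψ hrel hr0 hr1 hinc hdec
  obtain ⟨C2, hC2, hg2⟩ := a0_good hφ h0
  have hD : ∀ x t s, 0 < t → t ≤ s → s ≤ 2 * t → Fi φ x s ≤ (C1 * 2) * Fi φ x t := by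
    intro x t s ht hts hs2
    refine ((hpt x).B2 t s ht hts).trans ?_
    refine mul_le_mul_of_nonneg_right ?_ (Fi_pos hφ x ht).le
    refine mul_le_mul_of_nonneg_left ?_ (by linarith)
    have hst : 1 ≤ s / t := (one_le_div ht).2 hts
    calc (s / t) ^ (1 / p) ≤ (s / t) ^ (1 : ℝ) := by
          refine Real.rpow_le_rpow_of_exponent_le hst ?_
          rw [div_le_one (by linarith)]; exact hp.le
      _ = s / t := Real.rpow_one _
      _ ≤ 2 := by rw [div_le_iff₀ ht]; exact hs2
  obtain ⟨C3, hC3, G3, hG3, hg3⟩ := a1_good hφ h1 (D := C1 * 2) (by linarith) hD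
  obtain ⟨C4, M, hC4, hM, h, hm, hpos, hhM, h_intg, G4, hG4, hg4⟩ := a2_good hφ h2
  set C := C1 + C2 + C3 + C4 with hC
  have hC0 : 1 ≤ C := by linarith
  refine ⟨C ^ 13, one_le_pow₀ hC0, h, hm, hpos, h_intg,
    {x | (1 ≤ C2 * Fi φ x 1 ∧ Fi φ x 1 ≤ C2) ∧ x ∈ G3 ∧ x ∈ G4}, ?_, ?_⟩
  · filter_upwards [hg2, hG3, hG4] with x a b c using ⟨a, b, c⟩
  · rintro x ⟨x1, x2, x3⟩ y ⟨y1, y2, y3⟩ i hx hy t s l ht hts htv hl hys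
    refine lemma_P ((hpt x).mono (by linarith)) ((hpt y).mono (by linarith)) hC0 ha har ht hts hl
      (hpos x) ?_ ?_ ?_ ?_
    · intro ht1
      refine (hg3 x x2 y y2 i hx hy t ht1 htv).trans ?_
      exact mul_le_mul_of_nonneg_right (by linarith) (Fi_pos hφ x ht).le
    · exact x1.1.trans (mul_le_mul_of_nonneg_right (by linarith) (Fi_pos hφ x one_pos).le)
    · exact y1.2.trans (by linarith)
    · intro hs1
      have hmx : 0 < max s (h x) := lt_max_of_lt_right (hpos x)
      refine (hg4 x x3 y y3 _ (max_le (by linarith) (hhM x)) (le_max_right _ _)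
        (hys.trans (le_max_left _ _))).trans ?_
      exact mul_le_mul_of_nonneg_right (by linarith) (Fi_pos hφ x hmx).le

theorem avg_rpow_le {n : ℕ} (Q : Cube n) {g : RSp n → ℝ≥0∞} (hg : Measurable g) {P : ℝ}
    (hP : 1 < P) :
    ((∫⁻ y in Q.set, g y ^ (1 / P)) / volume Q.set) ^ P ≤ (∫⁻ y in Q.set, g y) / volume Q.set := by
  have hP0 : 0 < P := by linarith
  set V := volume Q.set with hV
  have hV0 : V ≠ 0 := Q.vol_ne_zero
  have hVt : V ≠ ∞ := Q.vol_ne_top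
  have hc := Real.HolderConjugate.conjExponent hP
  set P' := P.conjExponent with hP'
  have h1 := ENNReal.lintegral_mul_le_Lp_mul_Lq (volume.restrict Q.set) hc
    (f := fun y => g y ^ (1 / P)) (g := fun _ => 1) (hg.pow_const _).aemeasurable aemeasurable_const
  simp only [Pi.mul_apply, mul_one, ENNReal.one_rpow, lintegral_const, one_mul,
    Measure.restrict_apply MeasurableSet.univ, univ_inter, ← ENNReal.rpow_mul,
    one_div_mul_cancel hP0.ne', ENNReal.rpow_one, ← hV] at h1
  have h2 : (∫⁻ y in Q.set, g y ^ (1 / P)) ^ P ≤ (∫⁻ y in Q.set, g y) * V ^ (P - 1) := by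
    refine (ENNReal.rpow_le_rpow h1 hP0.le).trans (le_of_eq ?_)
    rw [ENNReal.mul_rpow_of_nonneg _ _ hP0.le, ← ENNReal.rpow_mul, ← ENNReal.rpow_mul,
      one_div_mul_cancel hP0.ne', ENNReal.rpow_one]
    congr 2
    have hi := hc.inv_add_inv_eq_one
    rw [one_div, show P'⁻¹ = 1 - P⁻¹ by linarith]
    field_simp
  rw [ENNReal.div_rpow_of_nonneg _ _ hP0.le]
  refine (ENNReal.div_le_div_right h2 _).trans (le_of_eq ?_)
  rw [ENNReal.rpow_sub _ _ hV0 hVt, ENNReal.rpow_one, div_eq_mul_inv, div_eq_mul_inv,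
    div_eq_mul_inv]
  have e : V ^ P * (V ^ P)⁻¹ = 1 := ENNReal.mul_inv_cancel
    (by simp [ENNReal.rpow_eq_zero_iff, hV0, hVt]) (ENNReal.rpow_ne_top_of_nonneg hP0.le hVt)
  calc (∫⁻ y in Q.set, g y) * (V ^ P * V⁻¹) * (V ^ P)⁻¹
      = (∫⁻ y in Q.set, g y) * V⁻¹ * (V ^ P * (V ^ P)⁻¹) := by ring
    _ = _ := by rw [e, mul_one]

theorem max_rpow_le (T u : ℝ≥0∞) (e : ℝ) : (max T u) ^ e ≤ T ^ e + u ^ e := by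
  rcases le_total T u with h | h
  · rw [max_eq_right h]; exact le_add_self
  · rw [max_eq_left h]; exact le_self_add

theorem holder_cube {n : ℕ} (Q : Cube n) {B : RSp n → ℝ} (hB : Measurable B) (hB0 : ∀ y, 0 ≤ B y)
    {ε ε0 s s' p P : ℝ} (hss : s'.HolderConjugate s) (hεε : ε * s' ≤ ε0)
    (hE : ∫⁻ y in Q.set, ee (ε0 * B y) ≤ 4 * volume Q.set) (hp : 0 < p) (hP : P = p / s)
    {g : RSp n → ℝ≥0∞} (hg : Measurable g) {c T : ℝ≥0∞} (hc0 : c ≠ 0) (hct : c ≠ ∞)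
    (hT : T = c * ((∫⁻ y in Q.set, g y ^ (1 / P)) / volume Q.set) ^ P) :
    ∫⁻ y in Q.set, ee (ε * B y) * (max T (g y)) ^ (1 / p) ≤
      4 ^ (1 / s') * (1 + c ^ (-(1 / P))) ^ (1 / s) * (volume Q.set * T ^ (1 / p)) := by
  have hs0 : 0 < s := hss.symm.pos
  have hs'0 : 0 < s' := hss.pos
  have hP0 : 0 < P := by rw [hP]; positivity
  have hPs : 1 / P = 1 / p * s := by rw [hP]; field_simp
  set V := volume Q.set with hV
  have hV0 : V ≠ 0 := Q.vol_ne_zero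
  have hVt : V ≠ ∞ := Q.vol_ne_top
  have hm1 : Measurable fun y => ee (ε * B y) := ee_meas.comp (measurable_const.mul hB)
  have hm2 : Measurable fun y => (max T (g y)) ^ (1 / p) := (measurable_const.max hg).pow_const _
  have h1 := ENNReal.lintegral_mul_le_Lp_mul_Lq (volume.restrict Q.set) hss
    hm1.aemeasurable hm2.aemeasurable
  simp only [Pi.mul_apply] at h1
  refine h1.trans ?_
  have h2 : ∫⁻ y in Q.set, ee (ε * B y) ^ s' ≤ 4 * V := by
    refine le_trans (lintegral_mono fun y => ?_) hE
    rw [ee_rpow]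
    refine ee_mono ?_
    nlinarith [hB0 y]
  have h3 : ∫⁻ y in Q.set, g y ^ (1 / P) = V * (c ^ (-(1 / P)) * T ^ (1 / P)) := by
    rw [hT, ENNReal.mul_rpow_of_nonneg _ _ (by positivity), ← ENNReal.rpow_mul,
      mul_one_div_cancel hP0.ne', ENNReal.rpow_one, ← mul_assoc (c ^ (-(1 / P))),
      ← ENNReal.rpow_add _ _ hc0 hct, neg_add_cancel, ENNReal.rpow_zero, one_mul,
      ENNReal.mul_div_cancel hV0 hVt]
  have h4 : ∫⁻ y in Q.set, ((max T (g y)) ^ (1 / p)) ^ s ≤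
      (1 + c ^ (-(1 / P))) * V * T ^ (1 / P) := by
    calc ∫⁻ y in Q.set, ((max T (g y)) ^ (1 / p)) ^ s
        ≤ ∫⁻ y in Q.set, (T ^ (1 / P) + g y ^ (1 / P)) := by
          refine lintegral_mono fun y => ?_
          rw [← ENNReal.rpow_mul, ← hPs]
          exact max_rpow_le _ _ _
      _ = T ^ (1 / P) * V + V * (c ^ (-(1 / P)) * T ^ (1 / P)) := by
          rw [lintegral_add_left measurable_const, h3, lintegral_const,
            Measure.restrict_apply MeasurableSet.univ, univ_inter]
      _ = _ := by ring
  refine (mul_le_mul' (ENNReal.rpow_le_rpow h2 (by positivity))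
    (ENNReal.rpow_le_rpow h4 (by positivity))).trans (le_of_eq ?_)
  rw [ENNReal.mul_rpow_of_nonneg _ _ (by positivity), ENNReal.mul_rpow_of_nonneg _ _ (by positivity),
    ENNReal.mul_rpow_of_nonneg _ _ (by positivity), ← ENNReal.rpow_mul T, hPs]
  have e1 : 1 / p * s * (1 / s) = 1 / p := by field_simp
  have e2 : V ^ (1 / s') * V ^ (1 / s) = V := by
    rw [← ENNReal.rpow_add _ _ hV0 hVt, one_div, one_div, hss.inv_add_inv_eq_one, ENNReal.rpow_one]
  rw [e1]
  calc 4 ^ (1 / s') * V ^ (1 / s') * ((1 + c ^ (-(1 / p * s))) ^ (1 / s) * V ^ (1 / s) * T ^ (1 / p))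
      = 4 ^ (1 / s') * (1 + c ^ (-(1 / p * s))) ^ (1 / s) *
        ((V ^ (1 / s') * V ^ (1 / s)) * T ^ (1 / p)) := by ring
    _ = _ := by rw [e2]

theorem f_le_Fi {n : ℕ} {φ : RSp n → ℝ≥0 → ℝ≥0∞} (hφ : IsWeakPhi Set.univ φ) {L : ℝ≥0}
    (hL1 : 1 ≤ L) (hL : ∀ x, ∀ u ρ : ℝ≥0, 1 ≤ ρ → (ρ : ℝ≥0∞) * φ x u ≤ L * φ x (ρ * u))
    {y : RSp n} {u : ℝ≥0} {σ : ℝ} (hσ : 0 < σ) (h : φ y u ≤ ENNReal.ofReal σ) :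
    (u : ℝ) ≤ 2 * L * Fi φ y σ := by
  have hL0 : 0 < L := lt_of_lt_of_le one_pos hL1
  have h2 := hL y (u / (2 * L)) (2 * L) (by nlinarith)
  rw [mul_div_cancel₀ _ (by positivity)] at h2
  have h3 : φ y (u / (2 * L)) < ENNReal.ofReal σ := by
    by_contra hc
    have h4 : ((2 * L : ℝ≥0) : ℝ≥0∞) * ENNReal.ofReal σ ≤ L * ENNReal.ofReal σ :=
      ((mul_le_mul_right (not_lt.1 hc) _).trans h2).trans (mul_le_mul_right h _)
    have h5 : (L : ℝ≥0∞) * ENNReal.ofReal σ < ((2 * L : ℝ≥0) : ℝ≥0∞) * ENNReal.ofReal σ := by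
      refine ENNReal.mul_lt_mul_left (ENNReal.ofReal_pos.2 hσ).ne' ENNReal.ofReal_ne_top ?_
      exact_mod_cast (by nlinarith : L < 2 * L)
    exact absurd h4 (not_le.2 h5)
  have h6 := le_Fi hφ y h3
  push_cast at h6
  have : (0 : ℝ) < 2 * L := by positivity
  rwa [div_le_iff₀ this, mul_comm] at h6

theorem cube_pointwise {A B ε bx byy m K t σ a p L F Ψ u : ℝ} (hε : 0 < ε)
    (hA : A = |bx - m|) (hB : B = |byy - m|) (ht : 0 < t) (hσ : 0 < σ) (hL : 0 ≤ L)
    (hF0 : 0 ≤ F) (hu : 0 ≤ u)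
    (hF : Real.exp (ε * A) * F ≤ K * (t ^ a * (σ / t) ^ (1 / p) * Ψ)) (huF : u ≤ 2 * L * F) :
    |bx - byy| * u ≤ (ε⁻¹ * (2 * L) * K * Ψ) * t ^ (a - 1 / p) * (Real.exp (ε * B) * σ ^ (1 / p)) := by
  have h1 : |bx - byy| ≤ ε⁻¹ * (Real.exp (ε * A) * Real.exp (ε * B)) := by
    have e1 : |bx - byy| ≤ A + B := by
      rw [hA, hB, abs_sub_comm byy m]
      exact abs_sub_le _ _ _
    have e2 := Real.add_one_le_exp (ε * (A + B))
    rw [← Real.exp_add, ← mul_add, inv_mul_eq_div, le_div_iff₀ hε]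
    nlinarith
  calc |bx - byy| * u ≤ (ε⁻¹ * (Real.exp (ε * A) * Real.exp (ε * B))) * (2 * L * F) := by
        exact mul_le_mul h1 huF hu (by positivity)
    _ = (ε⁻¹ * (2 * L) * Real.exp (ε * B)) * (Real.exp (ε * A) * F) := by ring
    _ ≤ (ε⁻¹ * (2 * L) * Real.exp (ε * B)) * (K * (t ^ a * (σ / t) ^ (1 / p) * Ψ)) :=
        mul_le_mul_of_nonneg_left hF (by positivity)
    _ = _ := by
        rw [Real.div_rpow hσ.le ht.le, Real.rpow_sub ht]
        field_simp

theorem cube_estimate {n : ℕ} {a p ε ε0 s s' P K k : ℝ} {φ ψ : RSp n → ℝ≥0 → ℝ≥0∞}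
    (ha : 0 < a) (hp : 0 < p) (hε : 0 < ε) (hK : 0 ≤ K)
    (hφ : IsWeakPhi Set.univ φ) (hψ : IsWeakPhi Set.univ ψ) {L : ℝ≥0}
    (hL1 : 1 ≤ L) (hL : ∀ x, ∀ u ρ : ℝ≥0, 1 ≤ ρ → (ρ : ℝ≥0∞) * φ x u ≤ L * φ x (ρ * u))
    (Q : Cube n) {b b0 f : RSp n → ℝ} (hb0 : Measurable b0) (m : ℝ) {x : RSp n} (hbx : b x = b0 x)
    {h : RSp n → ℝ} (hpos : ∀ x, 0 < h x)
    (hss : s'.HolderConjugate s) (hεε : ε * s' ≤ ε0)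
    (hE : ∫⁻ y in Q.set, ee (ε0 * |b0 y - m|) ≤ 4 * volume Q.set) (hP : P = p / s)
    {g : RSp n → ℝ≥0∞} (hg : Measurable g) {c T : ℝ≥0∞} (hc0 : c ≠ 0) (hct : c ≠ ∞)
    (hT : T = c * ((∫⁻ y in Q.set, g y ^ (1 / P)) / volume Q.set) ^ P)
    (hT0 : T ≠ 0) (hTV : T ≤ (volume Q.set)⁻¹)
    (hy : ∀ᵐ y ∂(volume : Measure (RSp n)), y ∈ Q.set → b y = b0 y ∧ g y ≠ ∞ ∧
      φ y ‖f y‖₊ + ENNReal.ofReal (h y) ≤ g y ∧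
      ∀ t s l : ℝ, 0 < t → t ≤ s → ENNReal.ofReal t ≤ (volume Q.set)⁻¹ → 1 ≤ l →
        h y ≤ s → l * Fi φ y s ≤ K * (t ^ a * (s / t) ^ (1 / p) *
          Fi ψ x (max (l ^ k * t) (h x)))) :
    volume Q.set ^ (a - 1) * ∫⁻ y in Q.set, (‖b x - b y‖₊ : ℝ≥0∞) * (‖f y‖₊ : ℝ≥0∞) ≤
      ENNReal.ofReal (ε⁻¹ * (2 * L) * K) * (4 ^ (1 / s') * (1 + c ^ (-(1 / P))) ^ (1 / s)) *
        ENNReal.ofReal (Fi ψ x (max (Real.exp (ε * |b0 x - m|) ^ k * T.toReal) (h x))) := by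
  set V := volume Q.set with hV
  have hV0 : V ≠ 0 := Q.vol_ne_zero
  have hVt : V ≠ ∞ := Q.vol_ne_top
  have hTt : T ≠ ∞ := ne_top_of_le_ne_top (ENNReal.inv_ne_top.2 hV0) hTV
  set t := T.toReal with ht
  have ht0 : 0 < t := ENNReal.toReal_pos hT0 hTt
  have hTof : ENNReal.ofReal t = T := ENNReal.ofReal_toReal hTt
  set Ψ := Fi ψ x (max (Real.exp (ε * |b0 x - m|) ^ k * t) (h x)) with hΨ
  have hΨ0 : 0 < Ψ := Fi_pos hψ x (lt_max_of_lt_right (hpos x))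
  have hBm : Measurable fun y => |b0 y - m| := (hb0.sub_const m).abs
  set W : ℝ≥0∞ := 4 ^ (1 / s') * (1 + c ^ (-(1 / P))) ^ (1 / s) with hW
  have hH := holder_cube Q hBm (fun y => abs_nonneg _) hss hεε hE hp hP hg hc0 hct hT
  rw [← hW, ← hV] at hH
  have hconst : ENNReal.ofReal ((ε⁻¹ * (2 * L) * K * Ψ) * t ^ (a - 1 / p)) =
      ENNReal.ofReal (ε⁻¹ * (2 * L) * K) * ENNReal.ofReal Ψ * T ^ (a - 1 / p) := by
    rw [ENNReal.ofReal_mul (by positivity), ENNReal.ofReal_mul (by positivity),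
      ← ENNReal.ofReal_rpow_of_pos ht0, hTof]
  have hmm : Measurable fun y => ee (ε * |b0 y - m|) * (max T (g y)) ^ (1 / p) :=
    (ee_meas.comp (measurable_const.mul hBm)).mul ((measurable_const.max hg).pow_const _)
  have hI : ∫⁻ y in Q.set, (‖b x - b y‖₊ : ℝ≥0∞) * (‖f y‖₊ : ℝ≥0∞) ≤
      ENNReal.ofReal (ε⁻¹ * (2 * L) * K) * ENNReal.ofReal Ψ * T ^ (a - 1 / p) *
        (W * (V * T ^ (1 / p))) := by
    calc ∫⁻ y in Q.set, (‖b x - b y‖₊ : ℝ≥0∞) * (‖f y‖₊ : ℝ≥0∞)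
        ≤ ∫⁻ y in Q.set, ENNReal.ofReal ((ε⁻¹ * (2 * L) * K * Ψ) * t ^ (a - 1 / p)) *
            (ee (ε * |b0 y - m|) * (max T (g y)) ^ (1 / p)) := by
          refine lintegral_mono_ae ?_
          rw [ae_restrict_iff' Q.meas]
          filter_upwards [hy] with y hyy hyQ
          obtain ⟨e1, e2, e3, e4⟩ := hyy hyQ
          set σ := max t (g y).toReal with hσ
          have hσ0 : 0 < σ := lt_max_of_lt_left ht0
          have hgσ : g y ≤ ENNReal.ofReal σ := by
            rw [← ENNReal.ofReal_toReal e2]; exact ENNReal.ofReal_le_ofReal (le_max_right _ _)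
          have hσm : ENNReal.ofReal σ = max T (g y) := by
            rw [hσ, ENNReal.ofReal_max, hTof, ENNReal.ofReal_toReal e2]
          have hhσ : h y ≤ σ := (ENNReal.ofReal_le_ofReal_iff hσ0.le).1
            ((le_add_self.trans e3).trans hgσ)
          have hfF := f_le_Fi hφ hL1 hL hσ0 ((le_self_add.trans e3).trans hgσ)
          have hl := e4 t σ (Real.exp (ε * |b0 x - m|)) ht0 (le_max_left _ _)
            (by rw [hTof]; exact hTV) (Real.one_le_exp (by positivity)) hhσ
          have hpt := cube_pointwise (bx := b0 x) (byy := b0 y) (m := m) hε rfl rfl ht0 hσ0 (NNReal.coe_nonneg L)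
            (Fi_pos hφ y hσ0).le (NNReal.coe_nonneg _) hl hfF
          have e5 : (‖b x - b y‖₊ : ℝ≥0∞) * (‖f y‖₊ : ℝ≥0∞) =
              ENNReal.ofReal (|b0 x - b0 y| * (‖f y‖₊ : ℝ)) := by
            rw [ENNReal.ofReal_mul (abs_nonneg _), hbx, e1, ENNReal.ofReal_coe_nnreal,
              ← Real.norm_eq_abs, ← coe_nnnorm, ENNReal.ofReal_coe_nnreal]
          rw [e5]
          refine (ENNReal.ofReal_le_ofReal hpt).trans (le_of_eq ?_)
          rw [ENNReal.ofReal_mul (by positivity), ENNReal.ofReal_mul (Real.exp_pos _).le,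
            ← ENNReal.ofReal_rpow_of_pos hσ0, hσm]
          rfl
      _ = _ * ∫⁻ y in Q.set, (ee (ε * |b0 y - m|) * (max T (g y)) ^ (1 / p)) :=
          lintegral_const_mul _ hmm
      _ ≤ _ := by
          rw [hconst]
          exact mul_le_mul_right hH _
  refine (mul_le_mul_right hI _).trans ?_
  have e6 : V ^ (a - 1) * V = V ^ a := by
    nth_rw 2 [← ENNReal.rpow_one V]
    rw [← ENNReal.rpow_add _ _ hV0 hVt]; congr 1; ring
  have e7 : T ^ (a - 1 / p) * T ^ (1 / p) = T ^ a := by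
    rw [← ENNReal.rpow_add _ _ hT0 hTt]; congr 1; ring
  have e8 : V ^ a * T ^ a ≤ 1 := by
    rw [← ENNReal.mul_rpow_of_nonneg _ _ ha.le]
    refine ENNReal.rpow_le_one ?_ ha.le
    calc V * T ≤ V * V⁻¹ := mul_le_mul_right hTV _
      _ ≤ 1 := ENNReal.mul_inv_le_one _
  calc V ^ (a - 1) * (ENNReal.ofReal (ε⁻¹ * (2 * L) * K) * ENNReal.ofReal Ψ * T ^ (a - 1 / p) *
        (W * (V * T ^ (1 / p))))
      = ENNReal.ofReal (ε⁻¹ * (2 * L) * K) * W * ENNReal.ofReal Ψ *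
        ((V ^ (a - 1) * V) * (T ^ (a - 1 / p) * T ^ (1 / p))) := by ring
    _ ≤ ENNReal.ofReal (ε⁻¹ * (2 * L) * K) * W * ENNReal.ofReal Ψ * 1 := by
        rw [e6, e7]; exact mul_le_mul_right e8 _
    _ = _ := mul_one _


/-! ### The modular estimate -/

theorem modular_est {n : ℕ} {α p q r : ℝ} {φ ψ : RSp n → ℝ≥0 → ℝ≥0∞} {b : RSp n → ℝ} (hp : 1 < p)
    (ha0 : 0 < α / (n : ℝ)) (ha1 : α / (n : ℝ) ≤ 1)
    (ha : α / (n : ℝ) = 1 / p - 1 / q)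
    (hφ : IsWeakPhi Set.univ φ) (hψ : IsWeakPhi Set.univ ψ) (hrel : FracInvRel α φ ψ)
    (har : α / (n : ℝ) < r) (hr1 : r ≤ 1 / p)
    (h0 : A0 Set.univ φ) (h1 : A1 φ) (h2 : A2 φ)
    (hinc : AInc p Set.univ φ) (hdec : ADec (1 / r) Set.univ φ) (hb : IsBMO b) :
    ∃ κ : ℝ≥0, 0 < κ ∧ ∃ R : ℝ≥0∞, R ≠ ∞ ∧ ∀ f : RSp n → ℝ, AEMeasurable f →
      ∫⁻ y, φ y ‖f y‖₊ ≤ 1 → ∃ S : RSp n → ℝ≥0∞, ∫⁻ x, S x ≤ R ∧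
        ∀ᵐ x ∂(volume : Measure (RSp n)), 0 < S x ∧ S x ≠ ∞ ∧
          fracMaximalComm α b f x ≤ κ * ENNReal.ofReal (Fi ψ x (S x).toReal) := by
  obtain ⟨K, hK, h, hhm, hpos, hH, G, hG, hgood⟩ := good_package hp ha hφ hψ hrel
    (ha0.trans har) har hr1 h0 h1 h2 hinc hdec
  obtain ⟨b0, hb0, hbb, ε0, hε0, hE, hpack⟩ := bmo_package hb
  obtain ⟨L, hL1, hL⟩ := almost_inc_scale hφ
  set a := α / (n : ℝ) with haa
  set k := 1 / (r - a) with hk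
  have hk0 : 0 < k := by have : 0 < r - a := by linarith
                         positivity
  have hp0 : 0 < p := by linarith
  set s := (1 + p) / 2 with hs
  have hs1 : 1 < s := by rw [hs]; linarith
  have hss := (Real.HolderConjugate.conjExponent hs1).symm
  set s' := s.conjExponent with hs'
  have hs'0 : 0 < s' := hss.pos
  obtain ⟨P, hP⟩ : ∃ P, P = p / s := ⟨_, rfl⟩
  have hP1 : 1 < P := by rw [hP, one_lt_div (by linarith), hs]; linarith
  have hP0 : 0 < P := by linarith
  set ε := ε0 / (k + s') with hε
  have hε' : 0 < ε := by positivity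
  have hεs : ε * s' ≤ ε0 := by
    rw [hε, div_mul_eq_mul_div, div_le_iff₀ (by positivity)]
    nlinarith
  have hεk : ε * k ≤ ε0 := by
    rw [hε, div_mul_eq_mul_div, div_le_iff₀ (by positivity)]
    nlinarith
  set δ := ε * k / P with hδ
  have hδP : δ * P = ε * k := by rw [hδ]; field_simp
  obtain ⟨CB, hCB, hpk⟩ := hpack P hP1 δ (by rw [hδP, abs_of_pos (by positivity)]; exact hεk)
  set H := ∫⁻ x, ENNReal.ofReal (h x) with hHdef
  set c := (1 + H)⁻¹ with hc
  have h1H : (1 + H) ≠ ∞ := ENNReal.add_ne_top.2 ⟨by norm_num, hH⟩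
  have h1H0 : (1 + H) ≠ 0 := by simp
  have hc0 : c ≠ 0 := ENNReal.inv_ne_zero.2 h1H
  have hct : c ≠ ∞ := ENNReal.inv_ne_top.2 h1H0
  set W : ℝ≥0∞ := 4 ^ (1 / s') * (1 + c ^ (-(1 / P))) ^ (1 / s) with hW
  have hWt : W ≠ ∞ := by
    refine ENNReal.mul_ne_top (ENNReal.rpow_ne_top_of_nonneg (by positivity) (by norm_num))
      (ENNReal.rpow_ne_top_of_nonneg (by positivity) (ENNReal.add_ne_top.2 ⟨by norm_num, ?_⟩))
    simp [ENNReal.rpow_eq_top_iff, hc0, hct]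
  set Cst : ℝ≥0∞ := (2 ^ n) ^ (1 - a) * (ENNReal.ofReal (ε⁻¹ * (2 * L) * K) * W) with hCst
  have hCt : Cst ≠ ∞ := by
    refine ENNReal.mul_ne_top (ENNReal.rpow_ne_top_of_nonneg (by linarith) (by finiteness))
      (ENNReal.mul_ne_top ENNReal.ofReal_ne_top hWt)
  refine ⟨Cst.toNNReal + 1, by positivity, CB + H, ENNReal.add_ne_top.2 ⟨hCB, hH⟩, ?_⟩
  intro f hf hf1
  have hΦm : AEMeasurable fun y => φ y ‖f y‖₊ := by
    have := hφ.meas (fun y => ‖hf.mk f y‖₊) hf.measurable_mk.nnnorm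
    rw [Measure.restrict_univ] at this
    refine this.congr ?_
    filter_upwards [hf.ae_eq_mk] with y hy
    rw [hy]
  set g0 := hΦm.mk _ with hg0
  have hg0m : Measurable g0 := hΦm.measurable_mk
  have hg0e : (fun y => φ y ‖f y‖₊) =ᵐ[volume] g0 := hΦm.ae_eq_mk
  set g : RSp n → ℝ≥0∞ := fun y => g0 y + ENNReal.ofReal (h y) with hgdef
  have hgm : Measurable g := hg0m.add hhm.ennreal_ofReal
  have hgi : ∫⁻ y, g y ≤ 1 + H := by
    rw [hgdef, lintegral_add_left hg0m, ← lintegral_congr_ae hg0e]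
    exact add_le_add hf1 le_rfl
  have hgt : ∀ᵐ y ∂(volume : Measure (RSp n)), g y < ∞ :=
    ae_lt_top hgm (ne_top_of_le_ne_top h1H hgi)
  have hcg : c * ∫⁻ y, g y ≤ 1 := by
    calc c * ∫⁻ y, g y ≤ (1 + H)⁻¹ * (1 + H) := mul_le_mul_right hgi _
      _ = 1 := ENNReal.inv_mul_cancel h1H0 h1H
  have hgpos : ∀ y, g y ≠ 0 := by
    intro y
    have := ENNReal.ofReal_pos.2 (hpos y)
    exact (lt_of_lt_of_le this le_add_self).ne'
  have hGm : Measurable fun y => g y ^ (1 / P) := hgm.pow_const _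
  let av : RIdx n → ℝ≥0∞ := fun i =>
    (∫⁻ y in (ratCube i).set, g y ^ (1 / P)) / volume (ratCube i).set
  let T : RIdx n → ℝ≥0∞ := fun i => c * av i ^ P
  have hTV : ∀ i, T i ≤ (volume (ratCube i).set)⁻¹ := by
    intro i
    calc c * av i ^ P ≤ c * ((∫⁻ y in (ratCube i).set, g y) / volume (ratCube i).set) :=
          mul_le_mul_right (avg_rpow_le _ hgm hP1) _
      _ ≤ c * ((∫⁻ y, g y) / volume (ratCube i).set) :=
          mul_le_mul_right (ENNReal.div_le_div_right (setLIntegral_le_lintegral _ _) _) _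
      _ = (c * ∫⁻ y, g y) * (volume (ratCube i).set)⁻¹ := by rw [div_eq_mul_inv, mul_assoc]
      _ ≤ 1 * (volume (ratCube i).set)⁻¹ := mul_le_mul_left hcg _
      _ = _ := one_mul _
  have hT0 : ∀ i, T i ≠ 0 := by
    intro i
    have hav : av i ≠ 0 := by
      refine ENNReal.div_ne_zero.2 ⟨?_, (ratCube i).vol_ne_top⟩
      refine ((lintegral_pos_iff_support hGm).2 ?_).ne'
      have : Function.support (fun y => g y ^ (1 / P)) = univ := by
        refine eq_univ_of_forall fun y => ?_
        rw [Function.mem_support]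
        intro hc
        rcases ENNReal.rpow_eq_zero_iff.1 hc with ⟨h, _⟩ | ⟨_, h⟩
        · exact hgpos y h
        · exact absurd h (not_lt.2 (by positivity))
      rw [this, Measure.restrict_apply MeasurableSet.univ, univ_inter]
      exact pos_iff_ne_zero.2 (ratCube i).vol_ne_zero
    refine mul_ne_zero hc0 ?_
    intro hc
    rcases ENNReal.rpow_eq_zero_iff.1 hc with ⟨h, _⟩ | ⟨_, h⟩
    · exact hav h
    · linarith
  set U : RSp n → ℝ≥0∞ := fun x => ⨆ i : RIdx n, (ratCube i).set.indicator (fun x =>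
    (ee (δ * |b0 x - cubeAvg (ratCube i) b|) * av i) ^ P) x with hU
  have hUi : ∫⁻ x, U x ≤ CB * ∫⁻ x, g x := by
    have := hpk (RIdx n) (by unfold RIdx; infer_instance) ratCube (fun y => g y ^ (1 / P)) hGm
    simp only [← ENNReal.rpow_mul, one_div_mul_cancel hP0.ne', ENNReal.rpow_one] at this
    exact this
  have hcount : Countable (RIdx n) := by unfold RIdx; infer_instance
  have hUm : Measurable U := by
    refine Measurable.iSup fun i => Measurable.indicator ?_ (ratCube i).meas
    have : Measurable fun x => ee (δ * |b0 x - cubeAvg (ratCube i) b|) :=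
      ee_meas.comp (measurable_const.mul (hb0.sub_const _).abs)
    exact (this.mul_const _).pow_const _
  have hUt : ∀ᵐ x ∂(volume : Measure (RSp n)), U x < ∞ := by
    refine ae_lt_top hUm (ne_top_of_le_ne_top ?_ hUi)
    exact ENNReal.mul_ne_top hCB (ne_top_of_le_ne_top h1H hgi)
  refine ⟨fun x => c * U x + ENNReal.ofReal (h x), ?_, ?_⟩
  · rw [lintegral_add_right _ hhm.ennreal_ofReal, lintegral_const_mul _ hUm]
    refine add_le_add ?_ le_rfl
    calc c * ∫⁻ x, U x ≤ c * (CB * ∫⁻ x, g x) := mul_le_mul_right hUi _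
      _ = CB * (c * ∫⁻ x, g x) := by ring
      _ ≤ CB * 1 := mul_le_mul_right hcg _
      _ = CB := mul_one _
  · filter_upwards [hUt, hG, hbb] with x hx1 hx2 hx3
    have hSt : c * U x + ENNReal.ofReal (h x) ≠ ∞ :=
      ENNReal.add_ne_top.2 ⟨ENNReal.mul_ne_top hct hx1.ne, ENNReal.ofReal_ne_top⟩
    refine ⟨lt_of_lt_of_le (ENNReal.ofReal_pos.2 (hpos x)) le_add_self, hSt, ?_⟩
    refine (fracMaximalComm_le_rat ha1 b f x).trans ?_
    set S := c * U x + ENNReal.ofReal (h x) with hS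
    have hmain : (⨆ i : RIdx n, (ratCube i).set.indicator
      (fun x => volume (ratCube i).set ^ (a - 1) *
        ∫⁻ y in (ratCube i).set, (‖b x - b y‖₊ : ℝ≥0∞) * (‖f y‖₊ : ℝ≥0∞)) x) ≤
        (ENNReal.ofReal (ε⁻¹ * (2 * L) * K) * W) * ENNReal.ofReal (Fi ψ x S.toReal) := by
      refine iSup_le fun i => ?_
      by_cases hxi : x ∈ (ratCube i).set
      swap
      · rw [indicator_of_notMem hxi]; exact zero_le
      rw [indicator_of_mem hxi]
      have hest := cube_estimate (a := a) (k := k) (K := K) (T := T i) (f := f) ha0 hp0 hε'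
        (by linarith) hφ hψ hL1 hL
        (ratCube i) hb0 (cubeAvg (ratCube i) b) hx3 hpos hss hεs (hE _) hP hgm hc0 hct rfl
        (hT0 i) (hTV i) (by
          filter_upwards [hgt, hG, hbb, hg0e] with y y1 y2 y3 y4 hyi
          refine ⟨y3, y1.ne, ?_, ?_⟩
          · exact add_le_add (le_of_eq y4) le_rfl
          · intro t s l ht hts htv hl hys
            exact hgood x hx2 y y2 i hxi hyi t s l ht hts htv hl hys)
      refine hest.trans (mul_le_mul_right (ENNReal.ofReal_le_ofReal (Fi_mono hψ x ?_)) _)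
      have hTt : T i ≠ ∞ := ne_top_of_le_ne_top
        (ENNReal.inv_ne_top.2 (ratCube i).vol_ne_zero) (hTV i)
      refine max_le ?_ ?_
      · refine (ENNReal.ofReal_le_iff_le_toReal hSt).1 ?_
        rw [ENNReal.ofReal_mul (by positivity), ENNReal.ofReal_toReal hTt]
        have e1 : ENNReal.ofReal (Real.exp (ε * |b0 x - cubeAvg (ratCube i) b|) ^ k) =
            ee (δ * |b0 x - cubeAvg (ratCube i) b|) ^ P := by
          rw [ee_rpow, mul_right_comm, hδP, ← ENNReal.ofReal_rpow_of_pos (Real.exp_pos _)]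
          change ee _ ^ k = _
          rw [ee_rpow]; congr 1; ring
        rw [e1]
        calc ee (δ * |b0 x - cubeAvg (ratCube i) b|) ^ P * (c * av i ^ P)
            = c * (ee (δ * |b0 x - cubeAvg (ratCube i) b|) * av i) ^ P := by
              rw [ENNReal.mul_rpow_of_nonneg _ _ hP0.le]; ring
          _ ≤ c * U x := by
              refine mul_le_mul_right ?_ _
              refine le_iSup_of_le i ?_
              rw [indicator_of_mem hxi]
          _ ≤ S := le_self_add
      · refine (ENNReal.ofReal_le_iff_le_toReal hSt).1 le_add_self
    calc (2 ^ n) ^ (1 - a) * _ ≤ (2 ^ n) ^ (1 - a) *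
          ((ENNReal.ofReal (ε⁻¹ * (2 * L) * K) * W) * ENNReal.ofReal (Fi ψ x S.toReal)) :=
          mul_le_mul_right hmain _
      _ = Cst * ENNReal.ofReal (Fi ψ x S.toReal) := by rw [hCst]; ring
      _ ≤ _ := by
          refine mul_le_mul_left ?_ _
          push_cast
          rw [ENNReal.coe_toNNReal hCt]
          exact le_self_add

theorem modular_to_norm {n : ℕ} {α : ℝ} {φ ψ : RSp n → ℝ≥0 → ℝ≥0∞} {b : RSp n → ℝ}
    (hψ : IsWeakPhi Set.univ ψ) {κ : ℝ≥0} (hκ : 0 < κ) {R : ℝ≥0∞} (hR : R ≠ ∞)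
    (hmod : ∀ f : RSp n → ℝ, AEMeasurable f →
      ∫⁻ y, φ y ‖f y‖₊ ≤ 1 → ∃ S : RSp n → ℝ≥0∞, ∫⁻ x, S x ≤ R ∧
        ∀ᵐ x ∂(volume : Measure (RSp n)), 0 < S x ∧ S x ≠ ∞ ∧
          fracMaximalComm α b f x ≤ κ * ENNReal.ofReal (Fi ψ x (S x).toReal)) :
    ∃ C : ℝ≥0, 0 < C ∧ ∀ f : RSp n → ℝ, AEMeasurable f →
      ∫⁻ y, φ y ‖f y‖₊ ≤ 1 → ∀ F : RSp n → ℝ,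
        (∀ x, (‖F x‖₊ : ℝ≥0∞) ≤ fracMaximalComm α b f x) → ∫⁻ x, ψ x (‖F x‖₊ / C) ≤ 1 := by
  obtain ⟨L, hL1, hL⟩ := almost_inc_scale hψ
  set ρ : ℝ≥0 := max 1 (L * R.toNNReal) with hρ
  have hρ1 : 1 ≤ ρ := le_max_left _ _
  have hρ0 : 0 < ρ := lt_of_lt_of_le one_pos hρ1
  refine ⟨2 * κ * ρ, by positivity, ?_⟩
  intro f hf hf1 F hF
  obtain ⟨S, hSR, hS⟩ := hmod f hf hf1
  have hpt : ∀ᵐ x ∂(volume : Measure (RSp n)),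
      (ρ : ℝ≥0∞) * ψ x (‖F x‖₊ / (2 * κ * ρ)) ≤ L * S x := by
    filter_upwards [hS] with x ⟨x1, x2, x3⟩
    have h1 := hL x (‖F x‖₊ / (2 * κ * ρ)) ρ hρ1
    have e : ρ * (‖F x‖₊ / (2 * κ * ρ)) = ‖F x‖₊ / (2 * κ) := by field_simp
    rw [e] at h1
    refine h1.trans (mul_le_mul_right ?_ _)
    have hSp : 0 < (S x).toReal := ENNReal.toReal_pos x1.ne' x2
    have hFp := Fi_pos hψ x hSp
    have h2 := (hF x).trans x3
    rw [← ENNReal.ofReal_coe_nnreal, ← ENNReal.ofReal_coe_nnreal (p := κ),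
      ← ENNReal.ofReal_mul (NNReal.coe_nonneg _), ENNReal.ofReal_le_ofReal_iff (by positivity)] at h2
    have hκ' : (0 : ℝ) < κ := hκ
    have h3 : ((‖F x‖₊ / (2 * κ) : ℝ≥0) : ℝ) < Fi ψ x (S x).toReal := by
      rw [NNReal.coe_div, NNReal.coe_mul, div_lt_iff₀ (by simpa using hκ)]
      push_cast at h2 ⊢
      nlinarith
    have h4 := Fi_lt hψ x h3
    rw [ENNReal.ofReal_toReal x2] at h4
    exact h4.le
  have hI := lintegral_mono_ae hpt
  rw [lintegral_const_mul' _ _ ENNReal.coe_ne_top, lintegral_const_mul' _ _ ENNReal.coe_ne_top] at hI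
  have h5 : (L : ℝ≥0∞) * ∫⁻ x, S x ≤ ρ * 1 := by
    calc (L : ℝ≥0∞) * ∫⁻ x, S x ≤ L * R := mul_le_mul_right hSR _
      _ = ((L * R.toNNReal : ℝ≥0) : ℝ≥0∞) := by rw [ENNReal.coe_mul, ENNReal.coe_toNNReal hR]
      _ ≤ (ρ : ℝ≥0∞) := ENNReal.coe_le_coe.2 (le_max_right _ _)
      _ = _ := (mul_one _).symm
  exact ennreal_div_step (by simpa using hρ0.ne') ENNReal.coe_ne_top hI h5

theorem fracMaximalComm_div {n : ℕ} (α : ℝ) (b f : RSp n → ℝ) {lam : ℝ≥0} (hl : 0 < lam)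
    (x : RSp n) : (lam : ℝ≥0∞)⁻¹ * fracMaximalComm α b f x ≤
      fracMaximalComm α b (fun y => f y / lam) x := by
  unfold fracMaximalComm
  simp only [ENNReal.mul_iSup]
  refine iSup_mono fun Q => iSup_mono fun _ => le_of_eq ?_
  have : ∀ y, (‖b x - b y‖₊ : ℝ≥0∞) * (‖f y / lam‖₊ : ℝ≥0∞) =
      (lam : ℝ≥0∞)⁻¹ * ((‖b x - b y‖₊ : ℝ≥0∞) * (‖f y‖₊ : ℝ≥0∞)) := by
    intro y
    have e : ‖f y / lam‖₊ = ‖f y‖₊ / lam := by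
      rw [nnnorm_div]; congr 1; ext; simp
    rw [e, ENNReal.coe_div hl.ne', div_eq_mul_inv]; ring
  simp only [this]
  rw [lintegral_const_mul' _ _ (by simpa using hl.ne')]
  ring

theorem norm_bound {n : ℕ} {α : ℝ} {φ ψ : RSp n → ℝ≥0 → ℝ≥0∞} {b : RSp n → ℝ} {C : ℝ≥0}
    (hC : 0 < C)
    (h : ∀ f : RSp n → ℝ, AEMeasurable f →
      ∫⁻ y, φ y ‖f y‖₊ ≤ 1 → ∀ F : RSp n → ℝ,
        (∀ x, (‖F x‖₊ : ℝ≥0∞) ≤ fracMaximalComm α b f x) → ∫⁻ x, ψ x (‖F x‖₊ / C) ≤ 1)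
    {f : RSp n → ℝ} (hf : AEMeasurable f) {F : RSp n → ℝ}
    (hF : ∀ x, (‖F x‖₊ : ℝ≥0∞) ≤ fracMaximalComm α b f x) :
    orliczNorm ψ Set.univ F ≤ C * orliczNorm φ Set.univ f := by
  have hC0 : (C : ℝ≥0∞) ≠ 0 := by simpa using hC.ne'
  rw [← ENNReal.div_le_iff' hC0 ENNReal.coe_ne_top]
  refine le_sInf ?_
  rintro _ ⟨lam, ⟨hl, hl1⟩, rfl⟩
  rw [ENNReal.div_le_iff' hC0 ENNReal.coe_ne_top]
  refine sInf_le ⟨C * lam, ⟨by positivity, ?_⟩, by simp⟩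
  rw [Measure.restrict_univ] at hl1 ⊢
  have e : ∀ z : ℝ, ‖z / lam‖₊ = ‖z‖₊ / lam := by
    intro z
    rw [nnnorm_div]; congr 1; ext; simp
  have := h (fun y => f y / lam) (hf.div_const _) (by simpa only [e] using hl1)
    (fun x => F x / lam) (fun x => by
      refine le_trans (le_of_eq ?_) ((mul_le_mul_right (hF x) _).trans
        (fracMaximalComm_div α b f hl x))
      rw [e, ENNReal.coe_div hl.ne', div_eq_mul_inv, mul_comm])
  simp only [e, div_div] at this
  simpa only [mul_comm C lam] using this

/-- for non-negative `b`, the pointwise bound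
`|[M_α,b]f(x)| ≤ M_{b,α}f(x)`, and consequently boundedness of `[M_α,b]` from
`L^φ(ℝⁿ)` to `L^ψ(ℝⁿ)` under the fractional assumptions when `0 ≤ b ∈ BMO(ℝⁿ)`. -/
theorem statement14 {n : ℕ} (hn : 0 < n) (α : ℝ) (hα0 : 0 < α) (hαn : α < n)
    (b : RSp n → ℝ) (hb : LocallyIntegrable b volume) (hbpos : ∀ x, 0 ≤ b x) :
    (∀ f : RSp n → ℝ, Measurable f → ∀ x : RSp n,
      ENNReal.ofReal |fracMaximalCommutator α b f x| ≤ fracMaximalComm α b f x) ∧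
    (∀ p q r : ℝ, ∀ φ ψ : RSp n → ℝ≥0 → ℝ≥0∞,
      1 < p → p ≤ q → α / (n : ℝ) = 1 / p - 1 / q →
      IsWeakPhi Set.univ φ → IsWeakPhi Set.univ ψ → FracInvRel α φ ψ →
      α / (n : ℝ) < r → r ≤ 1 / p →
      A0 Set.univ φ → A1 φ → A2 φ →
      AInc p Set.univ φ → ADec (1 / r) Set.univ φ →
      IsBMO b →
      ∃ C : ℝ≥0, ∀ f : RSp n → ℝ, MemOrlicz φ Set.univ f →
        orliczNorm ψ Set.univ (fracMaximalCommutator α b f) ≤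
          (C : ℝ≥0∞) * orliczNorm φ Set.univ f) := by
  refine ⟨fun f hf x => comm_pointwise α b f hb.aestronglyMeasurable.aemeasurable hbpos
    hf.aemeasurable x, ?_⟩
  intro p q r φ ψ hp hpq ha hφ hψ hrel har hr1 h0 h1 h2 hinc hdec hbmo
  have hn' : (0 : ℝ) < n := by exact_mod_cast hn
  have ha0 : 0 < α / (n : ℝ) := div_pos hα0 hn'
  have ha1 : α / (n : ℝ) ≤ 1 := (div_le_one hn').2 hαn.le
  obtain ⟨κ, hκ, R, hR, hmod⟩ :=
    modular_est hp ha0 ha1 ha hφ hψ hrel har hr1 h0 h1 h2 hinc hdec hbmo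
  obtain ⟨C, hC, h⟩ := modular_to_norm hψ hκ hR hmod
  refine ⟨C, fun f hf => ?_⟩
  have hf' : AEMeasurable f := by simpa using hf.1
  refine norm_bound hC h hf' (fun x => ?_)
  have := comm_pointwise α b f hb.aestronglyMeasurable.aemeasurable hbpos hf' x
  rwa [← Real.norm_eq_abs, ← coe_nnnorm, ENNReal.ofReal_coe_nnreal] at this
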